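/- Fix a positive integer k. If c_1 < c_2 < c_3 < ... is the increasing enumeration of the cyclic numbers, then c_1^k + c_2^k + ... + c_n^k is asymptotically equivalent to n^(k+1) · e^(kγ) · (log log log n)^k / (k+1) as n → ∞, where γ is the Euler–Mascheroni constant. -/

import Mathlib

open Filter Asymptotics Real

/-- A positive integer `n` is *cyclic* if `gcd(n, φ(n)) = 1`. -/
def IsCyclicNum (n : ℕ) : Prop := 0 < n ∧ Nat.gcd n (Nat.totient n) = 1

instance : DecidablePred IsCyclicNum := fun n =>
  decidable_of_iff (0 < n ∧ Nat.gcd n (Nat.totient n) = 1) Iff.rfl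

/-- The `n`-th cyclic number, indexed from 1: `cyclicNum 1 = 1`, `cyclicNum 2 = 2`, .... -/
noncomputable def cyclicNum (n : ℕ) : ℕ := Nat.nth IsCyclicNum (n - 1)

/-- The number of cyclic numbers less than or equal to the real number `x`. -/
noncomputable def cyclicCount (x : ℝ) : ℕ :=
  ((Finset.range (⌊x⌋₊ + 1)).filter IsCyclicNum).card


open Filter Asymptotics Real
namespace CycAux

lemma log_factorial_eq (N : ℕ) : Real.log (N.factorial : ℝ)
    = ∑ p ∈ (Finset.range (N+1)).filter Nat.Prime, (N.factorial.factorization p : ℝ) * Real.log p := by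
  have h0 : N.factorial ≠ 0 := Nat.factorial_ne_zero N
  have h := Nat.prod_factorization_pow_eq_self h0
  have hs : N.factorial.factorization.support = (Finset.range (N+1)).filter Nat.Prime := by
    ext p
    simp only [Nat.support_factorization, Nat.mem_primeFactors, Finset.mem_filter, Finset.mem_range]
    constructor
    · rintro ⟨hp, hd, _⟩
      exact ⟨Nat.lt_succ_of_le ((hp.dvd_factorial).1 hd), hp⟩
    · rintro ⟨hl, hp⟩
      exact ⟨hp, (hp.dvd_factorial).2 (Nat.le_of_lt_succ hl), h0⟩
  conv_lhs => rw [← h]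
  rw [Finsupp.prod, hs]
  push_cast
  rw [Real.log_prod]
  · refine Finset.sum_congr rfl fun p hp => ?_
    rw [Real.log_pow]
  · intro p hp
    have : p.Prime := (Finset.mem_filter.1 hp).2
    have := this.pos
    positivity

lemma factorization_factorial_le (N p : ℕ) (hp : p.Prime) :
    (N.factorial.factorization p : ℝ) ≤ N / ((p:ℝ) - 1) := by
  have := Fact.mk hp
  have h := sub_one_mul_padicValNat_factorial (p := p) N
  rw [← Nat.factorization_def _ hp] at h
  have h2 : (p - 1) * N.factorial.factorization p ≤ N := by rw [h]; exact Nat.sub_le _ _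
  have h3 : (1:ℝ) < p := by exact_mod_cast hp.one_lt
  rw [le_div_iff₀ (by linarith)]
  have h4 : (((p - 1) * N.factorial.factorization p : ℕ) : ℝ) ≤ N := by exact_mod_cast h2
  rw [Nat.cast_mul, Nat.cast_sub hp.one_lt.le] at h4
  push_cast at h4
  linarith

lemma factorization_factorial_ge (N p : ℕ) (hp : p.Prime) :
    (N : ℝ) / p - 1 ≤ (N.factorial.factorization p : ℝ) := by
  have h : N / p ≤ N.factorial.factorization p := by
    rw [Nat.factorization_factorial hp (b := Nat.log p N + 2) (by omega)]
    calc N / p = N / p ^ 1 := by simp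
      _ ≤ _ := Finset.single_le_sum (f := fun i => N / p ^ i) (fun _ _ => Nat.zero_le _) (by simp)
  have h2 : (N : ℝ) / p < (N / p : ℕ) + 1 := by
    rw [← Nat.floor_div_eq_div (K := ℝ)]; exact Nat.lt_floor_add_one _
  have h3 : ((N / p : ℕ) : ℝ) ≤ (N.factorial.factorization p : ℝ) := by exact_mod_cast h
  linarith


/-- primes up to `N` -/
def PL (N : ℕ) : Finset ℕ := (Finset.range (N+1)).filter Nat.Prime

lemma mem_PL {N p : ℕ} : p ∈ PL N ↔ p ≤ N ∧ p.Prime := by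
  simp [PL, Nat.lt_succ_iff]

lemma mertens_upper (N : ℕ) (hN : 1 ≤ N) :
    ∑ p ∈ PL N, Real.log p / p ≤ Real.log N + Real.log 4 := by
  have hN' : (0:ℝ) < N := by exact_mod_cast hN
  have h1 : Real.log (N.factorial : ℝ) ≤ N * Real.log N := by
    rw [← Real.log_pow]
    apply Real.log_le_log (by exact_mod_cast N.factorial_pos)
    exact_mod_cast Nat.factorial_le_pow N
  have hth : ∑ p ∈ PL N, Real.log p ≤ Real.log 4 * N := by
    have := Chebyshev.theta_le_log4_mul_x (x := N) hN'.le
    rw [Chebyshev.theta_eq_sum_Icc] at this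
    refine le_trans (le_of_eq ?_) this
    simp only [Nat.floor_natCast]
    apply Finset.sum_congr _ fun _ _ => rfl
    ext p; simp [PL, Nat.lt_succ_iff]
  have h2 : ∑ p ∈ PL N, ((N:ℝ) / p - 1) * Real.log p ≤ Real.log (N.factorial : ℝ) := by
    rw [log_factorial_eq]
    apply Finset.sum_le_sum
    intro p hp
    have hp := (mem_PL.1 hp).2
    exact mul_le_mul_of_nonneg_right (factorization_factorial_ge N p hp) (Real.log_natCast_nonneg p)
  have h3 : ∑ p ∈ PL N, ((N:ℝ) / p - 1) * Real.log p
      = N * ∑ p ∈ PL N, Real.log p / p - ∑ p ∈ PL N, Real.log p := by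
    rw [Finset.mul_sum, ← Finset.sum_sub_distrib]
    refine Finset.sum_congr rfl fun p _ => ?_
    ring
  have h4 : N * ∑ p ∈ PL N, Real.log p / p ≤ N * (Real.log N + Real.log 4) := by linarith
  exact le_of_mul_le_mul_left h4 hN'

lemma mertens_first : ∃ C : ℝ, 0 ≤ C ∧ ∀ N : ℕ, 1 ≤ N →
    |∑ p ∈ PL N, Real.log p / p - Real.log N| ≤ C := by
  have hs : Summable (fun n : ℕ => 4 * ((n:ℝ) ^ (3/2 : ℝ))⁻¹) :=
    (Real.summable_nat_rpow_inv.2 (by norm_num)).mul_left 4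
  set C := ∑' n : ℕ, 4 * ((n:ℝ) ^ (3/2 : ℝ))⁻¹ with hC
  have hC0 : 0 ≤ C := tsum_nonneg fun n => by positivity
  refine ⟨C + 1 + Real.log 4, by positivity, fun N hN => ?_⟩
  have hN' : (0:ℝ) < N := by exact_mod_cast hN
  have hl4 : 0 ≤ Real.log 4 := Real.log_nonneg (by norm_num)
  rw [abs_le]
  constructor
  swap
  · have := mertens_upper N hN; linarith
  have h1 : N * Real.log N - N ≤ Real.log (N.factorial : ℝ) := by
    have := Stirling.le_log_factorial_stirling (n := N) (by omega)
    have h5 : 0 ≤ Real.log N := Real.log_natCast_nonneg N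
    have h6 : 0 ≤ Real.log (2 * Real.pi) := Real.log_nonneg (by linarith [Real.pi_gt_three])
    linarith
  have h2 : Real.log (N.factorial : ℝ) ≤ ∑ p ∈ PL N, (N / ((p:ℝ) - 1)) * Real.log p := by
    rw [log_factorial_eq]
    apply Finset.sum_le_sum
    intro p hp
    have hp := (mem_PL.1 hp).2
    exact mul_le_mul_of_nonneg_right (factorization_factorial_le N p hp) (Real.log_natCast_nonneg p)
  have h3 : ∑ p ∈ PL N, (N / ((p:ℝ) - 1)) * Real.log p ≤
      ∑ p ∈ PL N, (N * (Real.log p / p) + N * (4 * ((p:ℝ) ^ (3/2 : ℝ))⁻¹)) := by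
    apply Finset.sum_le_sum
    intro p hp
    have hp := (mem_PL.1 hp).2
    have h2p : (2:ℝ) ≤ p := by exact_mod_cast hp.two_le
    have hlog : Real.log p ≤ (p:ℝ)^(1/2:ℝ) / (1/2) := Real.log_le_rpow_div (by linarith) (by norm_num)
    have hmul : (p:ℝ)^(1/2:ℝ) * (p:ℝ)^(3/2:ℝ) = p^2 := by
      rw [← Real.rpow_add (by linarith)]; norm_num
    have hx : 0 < (p:ℝ)^(3/2:ℝ) := by positivity
    have key : Real.log p / (p - 1) ≤ Real.log p / p + 4 * ((p:ℝ) ^ (3/2 : ℝ))⁻¹ := by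
      have e : Real.log p / (p - 1) = Real.log p / p + Real.log p / (p * (p-1)) := by
        have : (p:ℝ) - 1 ≠ 0 := by linarith
        have : (p:ℝ) ≠ 0 := by linarith
        field_simp
        ring
      rw [e]
      gcongr
      rw [← div_eq_mul_inv, div_le_div_iff₀ (by nlinarith) hx]
      calc Real.log p * (p:ℝ)^(3/2:ℝ) ≤ ((p:ℝ)^(1/2:ℝ) / (1/2)) * (p:ℝ)^(3/2:ℝ) := by gcongr
        _ = 2 * p^2 := by linear_combination 2 * hmul
        _ ≤ 4 * (p * (p-1)) := by nlinarith
    calc (N / ((p:ℝ) - 1)) * Real.log p = N * (Real.log p / (p-1)) := by ring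
      _ ≤ N * (Real.log p / p + 4 * ((p:ℝ) ^ (3/2 : ℝ))⁻¹) := by gcongr
      _ = _ := by ring
  have h4 : ∑ p ∈ PL N, 4 * ((p:ℝ) ^ (3/2 : ℝ))⁻¹ ≤ C :=
    hs.sum_le_tsum _ fun n _ => by positivity
  rw [Finset.sum_add_distrib, ← Finset.mul_sum, ← Finset.mul_sum] at h3
  have h5 : N * (Real.log N - 1) ≤ N * (∑ p ∈ PL N, Real.log p / p + C) := by
    have : N * ∑ p ∈ PL N, 4 * ((p:ℝ) ^ (3/2 : ℝ))⁻¹ ≤ N * C := by gcongr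
    linarith
  have := le_of_mul_le_mul_left h5 hN'
  linarith

end CycAux

open Filter Asymptotics Real
namespace CycAux

noncomputable def wt (p : ℕ) : ℝ := -Real.log (1 - 1 / (p:ℝ))

lemma wt_ge (p : ℕ) (hp : 2 ≤ p) : 1 / (p:ℝ) ≤ wt p := by
  have h2 : (2:ℝ) ≤ p := by exact_mod_cast hp
  have h3 : 1 / (p:ℝ) ≤ 1/2 := by gcongr
  have := Real.log_le_sub_one_of_pos (show 0 < 1 - 1 / (p:ℝ) by linarith)
  unfold wt; linarith

lemma neg_log_le {t : ℝ} (h0 : 0 ≤ t) (h : t ≤ 1/2) : -Real.log (1 - t) ≤ t + 2 * t^2 := by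
  have := Real.log_le_sub_one_of_pos (show 0 < (1 - t)⁻¹ from inv_pos.2 (by linarith))
  rw [Real.log_inv] at this
  have h4 : (1-t)⁻¹ ≤ 1 + t + 2 * t^2 := by
    rw [inv_le_iff_one_le_mul₀ (by linarith)]
    nlinarith [mul_nonneg h0 h0, mul_nonneg (mul_nonneg h0 h0) (show 0 ≤ 1 - 2*t by linarith)]
  linarith

lemma wt_le (p : ℕ) (hp : 2 ≤ p) : wt p ≤ 1 / (p:ℝ) + 2 * (1 / (p:ℝ))^2 := by
  have h2 : (2:ℝ) ≤ p := by exact_mod_cast hp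
  have h3 : 1 / (p:ℝ) ≤ 1/2 := by gcongr
  exact neg_log_le (by positivity) h3

noncomputable def EK (K : ℕ) : ℕ := ⌊Real.exp K⌋₊

lemma EK_mono : Monotone EK := fun a b h => Nat.floor_mono (by gcongr)

lemma EK_zero : EK 0 = 1 := by simp [EK]

lemma EK_pos (K : ℕ) : 1 ≤ EK K := by
  have := EK_mono (Nat.zero_le K); rwa [EK_zero] at this

lemma PL_mono : Monotone PL := fun a b h p hp => by
  rw [mem_PL] at *; exact ⟨hp.1.trans h, hp.2⟩

noncomputable def Bl (K : ℕ) : Finset ℕ := PL (EK (K+1)) \ PL (EK K)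

lemma mem_Bl {K p : ℕ} (h : p ∈ Bl K) : p.Prime ∧ (K:ℝ) < Real.log p ∧ Real.log p ≤ K + 1 := by
  rw [Bl, Finset.mem_sdiff, mem_PL, mem_PL] at h
  obtain ⟨⟨h1, hp⟩, h2⟩ := h
  have h3 : EK K < p := by by_contra h; exact h2 ⟨not_lt.1 h, hp⟩
  have hp0 : (0:ℝ) < p := by exact_mod_cast hp.pos
  refine ⟨hp, ?_, ?_⟩
  · rw [Real.lt_log_iff_exp_lt hp0]
    exact (Nat.floor_lt (Real.exp_pos _).le).1 h3
  · rw [Real.log_le_iff_le_exp hp0]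
    have := (Nat.le_floor_iff (Real.exp_pos _).le).1 h1
    exact_mod_cast this

lemma sum_Bl (f : ℕ → ℝ) (K : ℕ) :
    ∑ p ∈ Bl K, f p = ∑ p ∈ PL (EK (K+1)), f p - ∑ p ∈ PL (EK K), f p := by
  rw [Bl, eq_sub_iff_add_eq]
  exact Finset.sum_sdiff (PL_mono (EK_mono (Nat.le_succ K)))

lemma PL_EK_zero : PL (EK 0) = ∅ := by
  rw [EK_zero]; rfl

lemma sum_sum_Bl (f : ℕ → ℝ) (K : ℕ) :
    ∑ k ∈ Finset.range K, ∑ p ∈ Bl k, f p = ∑ p ∈ PL (EK K), f p := by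
  simp_rw [sum_Bl]
  rw [Finset.sum_range_sub (fun k => ∑ p ∈ PL (EK k), f p), PL_EK_zero]
  simp

lemma mertens_EK : ∃ C : ℝ, 0 ≤ C ∧ ∀ K : ℕ, |∑ p ∈ PL (EK K), Real.log p / p - K| ≤ C := by
  obtain ⟨C, hC0, hC⟩ := mertens_first
  refine ⟨C + 1, by linarith, fun K => ?_⟩
  have h := hC (EK K) (EK_pos K)
  have he : (1:ℝ) ≤ EK K := by exact_mod_cast EK_pos K
  have h1 : Real.log (EK K) ≤ K := by
    rw [Real.log_le_iff_le_exp (by linarith)]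
    exact Nat.floor_le (Real.exp_pos _).le
  have h2 : K - 1 ≤ Real.log (EK K) := by
    rw [Real.le_log_iff_exp_le (by linarith)]
    have h3 : Real.exp K < EK K + 1 := Nat.lt_floor_add_one _
    have h4 : Real.exp (K - 1) * 2 ≤ Real.exp K := by
      calc Real.exp (K - 1) * 2 ≤ Real.exp (K-1) * Real.exp 1 := by
            gcongr; linarith [Real.add_one_le_exp (1:ℝ)]
        _ = Real.exp K := by rw [← Real.exp_add]; ring_nf
    linarith
  rw [abs_le] at *
  constructor <;> linarith [h.1, h.2]

lemma blocks_converge : ∃ β : ℝ, Tendsto (fun K : ℕ => ∑ k ∈ Finset.range K,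
    (∑ p ∈ Bl k, wt p - 1 / ((k:ℝ) + 1))) atTop (nhds β) := by
  obtain ⟨C, hC0, hC⟩ := mertens_EK
  set D : ℕ → ℝ := fun k => ∑ p ∈ Bl k, Real.log p / p with hD
  have hDle : ∀ k, D k ≤ 2 * C + 1 := by
    intro k
    have h1 := abs_le.1 (hC k)
    have h2 := abs_le.1 (hC (k+1))
    simp only [hD, sum_Bl]
    push_cast at *
    linarith [h1.1, h2.2]
  have hD0 : ∀ k, 0 ≤ D k := fun k => Finset.sum_nonneg fun p _ =>
    div_nonneg (Real.log_natCast_nonneg p) (by positivity)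
  have hDsum : ∀ K, ‖∑ k ∈ Finset.range K, (D k - 1)‖ ≤ C := by
    intro K
    rw [Finset.sum_sub_distrib, sum_sum_Bl]
    simpa using hC K
  -- first part
  have hdir : CauchySeq fun K => ∑ k ∈ Finset.range K, (1 / ((k:ℝ)+1)) • (D k - 1) := by
    apply Antitone.cauchySeq_series_mul_of_tendsto_zero_of_bounded _ _ hDsum
    · intro a b hab
      have : (a:ℝ) ≤ b := by exact_mod_cast hab
      dsimp only
      gcongr
    · exact tendsto_one_div_add_atTop_nhds_zero_nat
  obtain ⟨β1, hβ1⟩ := cauchySeq_tendsto_of_complete hdir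
  have hs2 : Summable (fun n : ℕ => 2 * (1 / (n:ℝ))^2) := by
    have := (Real.summable_one_div_nat_pow (p := 2)).2 (by norm_num)
    simpa [one_div_pow] using this.mul_left 2
  have hs3 : Summable (fun k : ℕ => (6 * C + 3) * (1 / ((k:ℝ) + 1)^2)) := by
    have := (summable_nat_add_iff 1).2 ((Real.summable_one_div_nat_pow (p := 2)).2 (by norm_num))
    simpa using this.mul_left (6 * C + 3)
  have hrp : ∀ k, ∀ p ∈ Bl k, 0 ≤ wt p - 1 / ((k:ℝ)+1) * (Real.log p / p) ∧
      wt p - 1 / ((k:ℝ)+1) * (Real.log p / p) ≤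
        2 * (1 / (p:ℝ))^2 + 3 * (1 / ((k:ℝ) + 1)^2) * (Real.log p / p) := by
    intro k p hp'
    obtain ⟨hp, h1, h2⟩ := mem_Bl hp'
    have hw1 := wt_ge p hp.two_le
    have hw2 := wt_le p hp.two_le
    have hp0 : (0:ℝ) < p := by exact_mod_cast hp.pos
    have hk : (0:ℝ) < (k:ℝ) + 1 := by positivity
    have hlog : ((k:ℝ)+1) / 3 ≤ Real.log p := by
      rcases Nat.eq_zero_or_pos k with rfl | hk1
      · have : Real.log 2 ≤ Real.log p := Real.log_le_log (by norm_num) (by exact_mod_cast hp.two_le)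
        have := Real.log_two_gt_d9
        norm_num; linarith
      · have : (1:ℝ) ≤ k := by exact_mod_cast hk1
        linarith
    have e1 : 1 / ((k:ℝ)+1) * (Real.log p / p) = (1/(p:ℝ)) * (Real.log p / (k+1)) := by field_simp
    have e2 : Real.log p / ((k:ℝ)+1) ≤ 1 := by rw [div_le_one hk]; exact h2
    have hp1 : 0 < 1/(p:ℝ) := by positivity
    constructor
    · rw [e1]; nlinarith
    · have e3 : 3 * (1 / ((k:ℝ) + 1)^2) * (Real.log p / p) = (1/(p:ℝ)) * (3 * Real.log p / (k+1)^2) := by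
        field_simp
      have e4 : 1 - Real.log p / ((k:ℝ)+1) ≤ 3 * Real.log p / (k+1)^2 := by
        have : 1 - Real.log p / ((k:ℝ)+1) ≤ 1 / (k+1) := by
          rw [one_sub_div hk.ne']; gcongr; linarith
        refine this.trans ?_
        rw [div_le_div_iff₀ hk (by positivity)]
        nlinarith
      rw [e1, e3]
      nlinarith
  set e : ℕ → ℝ := fun k => ∑ p ∈ Bl k, (wt p - 1 / ((k:ℝ)+1) * (Real.log p / p)) with he
  have hesum : Summable e := by
    apply summable_of_sum_range_le (c := ∑' n : ℕ, 2 * (1 / (n:ℝ))^2 + ∑' k : ℕ, (6 * C + 3) * (1 / ((k:ℝ) + 1)^2))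
    · intro k; exact Finset.sum_nonneg fun p hp => (hrp k p hp).1
    · intro K
      calc ∑ k ∈ Finset.range K, e k ≤ ∑ k ∈ Finset.range K, (∑ p ∈ Bl k, 2 * (1 / (p:ℝ))^2 + (6 * C + 3) * (1 / ((k:ℝ) + 1)^2)) := by
            apply Finset.sum_le_sum
            intro k _
            refine (Finset.sum_le_sum fun p hp => (hrp k p hp).2).trans ?_
            rw [Finset.sum_add_distrib, ← Finset.mul_sum (f := fun p : ℕ => Real.log p / p)]
            have := hDle k
            have h0 : 0 ≤ 3 * (1 / ((k:ℝ) + 1)^2) := by positivity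
            have := mul_le_mul_of_nonneg_left this h0
            simp only [hD] at this
            linarith
        _ ≤ _ := by
            rw [Finset.sum_add_distrib, sum_sum_Bl (fun p => 2 * (1 / (p:ℝ))^2)]
            exact add_le_add (hs2.sum_le_tsum _ fun n _ => by positivity)
              (hs3.sum_le_tsum _ fun n _ => by positivity)
  refine ⟨(∑' k, e k) + β1, ?_⟩
  refine (hesum.hasSum.tendsto_sum_nat.add hβ1).congr fun K => ?_
  rw [← Finset.sum_add_distrib]
  refine Finset.sum_congr rfl fun k _ => ?_
  simp only [he, hD, Finset.sum_sub_distrib, smul_eq_mul, ← Finset.mul_sum]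
  ring

end CycAux

open Filter Asymptotics Real
namespace CycAux

/-- extension by zero off the primes -/
noncomputable def ip (f : ℕ → ℝ) (n : ℕ) : ℝ := if n.Prime then f n else 0

lemma ip_bound {f : ℕ → ℝ} {g : ℕ → ℝ} (hg : ∀ n, 0 ≤ g n) (h : ∀ n, n.Prime → |f n| ≤ g n) (n : ℕ) :
    ‖ip f n‖ ≤ g n := by
  unfold ip; split_ifs with hp
  · exact h n hp
  · simpa using hg n

lemma summable_ip {f : ℕ → ℝ} {g : ℕ → ℝ} (hs : Summable g) (hg : ∀ n, 0 ≤ g n)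
    (h : ∀ n, n.Prime → |f n| ≤ g n) : Summable (ip f) :=
  Summable.of_norm_bounded hs (ip_bound hg h)

lemma sum_PL_eq (f : ℕ → ℝ) (N : ℕ) : ∑ p ∈ PL N, f p = ∑ n ∈ Finset.range (N+1), ip f n := by
  simp [PL, ip, Finset.sum_filter]

lemma prime_rpow_le {p : ℕ} (hp : p.Prime) {η : ℝ} (hη : 0 < η) :
    0 < (p:ℝ)^(-(1+η)) ∧ (p:ℝ)^(-(1+η)) ≤ 1/p ∧ (p:ℝ)^(-(1+η)) ≤ 1/2 ∧
    (p:ℝ)^(-(1+η)) = 1/p * (p:ℝ)^(-η) ∧ 0 < (p:ℝ)^(-η) ∧ (p:ℝ)^(-η) ≤ 1 := by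
  have h2 : (2:ℝ) ≤ p := by exact_mod_cast hp.two_le
  have h0 : (0:ℝ) < p := by linarith
  have e : (p:ℝ)^(-(1+η)) = 1/p * (p:ℝ)^(-η) := by
    rw [neg_add, Real.rpow_add h0, Real.rpow_neg_one, one_div]
  have hz : 0 < (p:ℝ)^(-η) := by positivity
  have hz1 : (p:ℝ)^(-η) ≤ 1 := Real.rpow_le_one_of_one_le_of_nonpos (by linarith) (by linarith)
  have h3 : (p:ℝ)^(-(1+η)) ≤ 1/p := by
    rw [e]; exact mul_le_of_le_one_right (by positivity) hz1
  refine ⟨by positivity, h3, h3.trans (by gcongr), e, hz, hz1⟩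

lemma summable_rpow' {η : ℝ} (hη : 0 < η) : Summable fun n : ℕ => (n:ℝ)^(-(1+η)) :=
  Real.summable_nat_rpow.2 (by linarith)

noncomputable def lz (η : ℝ) (p : ℕ) : ℝ := -Real.log (1 - (p:ℝ)^(-(1+η)))

lemma lz_bounds {p : ℕ} (hp : p.Prime) {η : ℝ} (hη : 0 < η) :
    (p:ℝ)^(-(1+η)) ≤ lz η p ∧ lz η p ≤ (p:ℝ)^(-(1+η)) + 2 * ((p:ℝ)^(-(1+η)))^2 := by
  obtain ⟨h0, _, h2, _⟩ := prime_rpow_le hp hη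
  refine ⟨?_, neg_log_le h0.le h2⟩
  have := Real.log_le_sub_one_of_pos (show 0 < 1 - (p:ℝ)^(-(1+η)) by linarith)
  unfold lz; linarith

lemma summable_lz {η : ℝ} (hη : 0 < η) : Summable (ip (lz η)) := by
  apply summable_ip ((summable_rpow' hη).mul_left 2) (fun n => by positivity)
  intro p hp
  obtain ⟨h0, _, h2, _⟩ := prime_rpow_le hp hη
  obtain ⟨h3, h4⟩ := lz_bounds hp hη
  rw [abs_of_nonneg (by linarith)]
  nlinarith

lemma tsum_ip (f : ℕ → ℝ) : ∑' n, ip f n = ∑' p : Nat.Primes, f p := by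
  have := tsum_subtype {p : ℕ | p.Prime} f
  rw [show (∑' p : Nat.Primes, f p) = ∑' p : {p : ℕ | p.Prime}, f p from rfl, this]
  refine tsum_congr fun n => ?_
  simp [ip, Set.indicator_apply]

lemma log_zeta_eq {η : ℝ} (hη : 0 < η) :
    Real.log (riemannZeta ((1 + η : ℝ) : ℂ)).re = ∑' n, ip (lz η) n := by
  have h := riemannZeta_eulerProduct_exp_log (s := ((1+η : ℝ) : ℂ)) (by simpa using hη)
  rw [tsum_ip]
  have e : ∀ p : Nat.Primes, -Complex.log (1 - ((p:ℕ) : ℂ) ^ (-((1+η : ℝ) : ℂ))) = ((lz η p : ℝ) : ℂ) := by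
    intro p
    obtain ⟨h0, _, h2, _⟩ := prime_rpow_le p.2 hη
    unfold lz
    rw [Complex.ofReal_neg, Complex.ofReal_log (by linarith)]
    congr 2
    push_cast
    rw [Complex.ofReal_cpow (by positivity)]
    push_cast; rfl
  rw [tsum_congr e, ← Complex.ofReal_tsum, ← Complex.ofReal_exp] at h
  rw [← h, Complex.ofReal_re, Real.log_exp]

noncomputable def zt (η : ℝ) (p : ℕ) : ℝ := wt p * Real.exp (-η) ^ ⌈Real.log p⌉₊

lemma zt_bounds {p : ℕ} (hp : p.Prime) {η : ℝ} (hη : 0 < η) :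
    0 ≤ zt η p ∧ zt η p ≤ wt p * (p:ℝ)^(-η) ∧ wt p * (p:ℝ)^(-η) ≤ 2 * (p:ℝ)^(-(1+η)) ∧
      wt p * (p:ℝ)^(-η) - zt η p ≤ η * (2 * (p:ℝ)^(-(1+η))) := by
  obtain ⟨h0, h1, h2, h3, h4, h5⟩ := prime_rpow_le hp hη
  have hw1 := wt_ge p hp.two_le
  have hw2 := wt_le p hp.two_le
  have h2p : (2:ℝ) ≤ p := by exact_mod_cast hp.two_le
  have hp1 : 1/(p:ℝ) ≤ 1/2 := by gcongr
  have hp2 : 0 < 1/(p:ℝ) := by positivity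
  have hw : wt p ≤ 2 * (1/p) := by nlinarith
  have hc : (p:ℝ)^(-η) = Real.exp (-η * Real.log p) := by
    rw [Real.rpow_def_of_pos (by linarith), mul_comm]
  have hcl : Real.exp (-η) ^ ⌈Real.log p⌉₊ = Real.exp (-η * ⌈Real.log p⌉₊) := by
    rw [← Real.exp_nat_mul]; ring_nf
  have hle : Real.exp (-η) ^ ⌈Real.log p⌉₊ ≤ (p:ℝ)^(-η) := by
    rw [hc, hcl]; apply Real.exp_le_exp.2
    have := Nat.le_ceil (Real.log p)
    nlinarith
  have hge : (p:ℝ)^(-η) * (1 - η) ≤ Real.exp (-η) ^ ⌈Real.log p⌉₊ := by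
    have e1 : 1 - η ≤ Real.exp (-η) := by linarith [Real.add_one_le_exp (-η)]
    calc (p:ℝ)^(-η) * (1 - η) ≤ (p:ℝ)^(-η) * Real.exp (-η) := by gcongr
      _ ≤ _ := by
        rw [hc, hcl, ← Real.exp_add]; apply Real.exp_le_exp.2
        have := Nat.ceil_lt_add_one (Real.log_natCast_nonneg p)
        nlinarith
  have hwz : wt p * (p:ℝ)^(-η) ≤ 2 * (p:ℝ)^(-(1+η)) := by rw [h3]; nlinarith
  have hw0 : 0 ≤ wt p := by linarith
  refine ⟨mul_nonneg hw0 (by positivity), mul_le_mul_of_nonneg_left hle hw0, hwz, ?_⟩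
  unfold zt
  nlinarith [mul_le_mul_of_nonneg_left hge hw0]

lemma summable_zt {η : ℝ} (hη : 0 < η) : Summable (ip (zt η)) := by
  apply summable_ip ((summable_rpow' hη).mul_left 2) (fun n => by positivity)
  intro p hp
  obtain ⟨h0, h1, h2, h3⟩ := zt_bounds hp hη
  rw [abs_of_nonneg (by linarith)]
  linarith

lemma EK_tendsto : Tendsto EK atTop atTop :=
  tendsto_nat_floor_atTop.comp (Real.tendsto_exp_atTop.comp tendsto_natCast_atTop_atTop)

lemma hasSum_blocks {η : ℝ} (hη : 0 < η) :
    HasSum (fun k : ℕ => (∑ p ∈ Bl k, wt p) * Real.exp (-η) ^ (k+1)) (∑' n, ip (zt η) n) := by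
  have hw0 : ∀ k, ∀ p ∈ Bl k, 0 ≤ wt p := fun k p hp =>
    le_trans (by positivity) (wt_ge p (mem_Bl hp).1.two_le)
  rw [hasSum_iff_tendsto_nat_of_nonneg]
  · have h := (summable_zt hη).hasSum.tendsto_sum_nat.comp ((tendsto_add_atTop_nat 1).comp EK_tendsto)
    refine h.congr fun K => ?_
    simp only [Function.comp]
    rw [← sum_PL_eq, ← sum_sum_Bl]
    refine Finset.sum_congr rfl fun k _ => ?_
    rw [Finset.sum_mul]
    refine Finset.sum_congr rfl fun p hp => ?_
    obtain ⟨_, h1, h2⟩ := mem_Bl hp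
    rw [zt, (Nat.ceil_eq_iff (Nat.succ_ne_zero k)).2 ⟨by simpa using h1, by exact_mod_cast h2⟩]
  · intro k; exact mul_nonneg (Finset.sum_nonneg (hw0 k)) (by positivity)

lemma diff_tendsto : Tendsto (fun η : ℝ => ∑' n, ip (zt η) n - ∑' n, ip (lz η) n)
    (nhdsWithin 0 (Set.Ioi 0)) (nhds 0) := by
  set d : ℝ → ℕ → ℝ := fun η p => wt p * (p:ℝ)^(-η) - lz η p with hd
  have hs2 : Summable (fun n : ℕ => 2 * (1 / (n:ℝ))^2) := by
    have := (Real.summable_one_div_nat_pow (p := 2)).2 (by norm_num)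
    simpa [one_div_pow] using this.mul_left 2
  have hdb : ∀ η, 0 < η → ∀ p : ℕ, p.Prime → |d η p| ≤ 2 * (1/(p:ℝ))^2 := by
    intro η hη p hp
    obtain ⟨h0, h1, h2, h3, h4, h5⟩ := prime_rpow_le hp hη
    have hw1 := wt_ge p hp.two_le
    have hw2 := wt_le p hp.two_le
    obtain ⟨h6, h7⟩ := lz_bounds hp hη
    have hp2 : 0 ≤ 1/(p:ℝ) := by positivity
    have hsq : ((p:ℝ)^(-(1+η)))^2 ≤ (1/(p:ℝ))^2 := by gcongr
    rw [abs_le]; simp only [hd]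
    constructor
    · nlinarith
    · have : (wt p - 1/(p:ℝ)) * (p:ℝ)^(-η) ≤ 2 * (1/(p:ℝ))^2 * 1 := by gcongr; linarith
      nlinarith
  have h1 : Tendsto (fun η : ℝ => ∑' n, ip (d η) n) (nhdsWithin 0 (Set.Ioi 0)) (nhds (∑' n : ℕ, (0:ℝ))) := by
    apply tendsto_tsum_of_dominated_convergence hs2
    · intro p
      by_cases hp : p.Prime
      · simp only [ip, hp, if_true, hd, lz]
        have h2p : (2:ℝ) ≤ p := by exact_mod_cast hp.two_le
        have hp1 : 1/(p:ℝ) ≤ 1/2 := by gcongr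
        have : ContinuousAt (fun η : ℝ => wt p * (p:ℝ)^(-η) - -Real.log (1 - (p:ℝ)^(-(1+η)))) 0 := by
          have hpp : (p:ℝ) ≠ 0 := by linarith
          have c1 : Continuous fun η : ℝ => (p:ℝ)^(-η) :=
            Continuous.rpow continuous_const continuous_neg (fun _ => Or.inl hpp)
          have c2 : Continuous fun η : ℝ => (p:ℝ)^(-(1+η)) :=
            Continuous.rpow continuous_const (by fun_prop) (fun _ => Or.inl hpp)
          refine (continuousAt_const.mul c1.continuousAt).sub (ContinuousAt.neg (ContinuousAt.log
            (continuousAt_const.sub c2.continuousAt) ?_))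
          simp only [add_zero, Real.rpow_neg_one]
          rw [one_div] at hp1
          linarith
        have h := this.tendsto.mono_left (nhdsWithin_le_nhds (s := Set.Ioi 0))
        simpa [wt, Real.rpow_neg_one] using h
      · simp [ip, hp]
    · filter_upwards [self_mem_nhdsWithin] with η hη
      exact ip_bound (fun n => by positivity) (hdb η hη)
  rw [tsum_zero] at h1
  set c : ℝ → ℕ → ℝ := fun η p => wt p * (p:ℝ)^(-η) - zt η p with hc
  have hcs : ∀ η, 0 < η → Summable (ip (c η)) ∧ 0 ≤ ∑' n, ip (c η) n ∧
      ∑' n, ip (c η) n ≤ 2 * (η * ∑' n, ip (lz η) n) := by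
    intro η hη
    have hb : ∀ n, ip (c η) n ≤ 2 * (η * ip (lz η) n) := by
      intro n
      by_cases hp : n.Prime
      · simp only [ip, hp, if_true, hc]
        obtain ⟨_, _, _, h3⟩ := zt_bounds hp hη
        obtain ⟨h6, _⟩ := lz_bounds hp hη
        nlinarith
      · simp [ip, hp]
    have hn : ∀ n, 0 ≤ ip (c η) n := by
      intro n
      by_cases hp : n.Prime
      · simp only [ip, hp, if_true, hc]
        obtain ⟨_, h3, _⟩ := zt_bounds hp hη
        linarith
      · simp [ip, hp]
    have hs : Summable fun n => 2 * (η * ip (lz η) n) := ((summable_lz hη).mul_left η).mul_left 2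
    have hsc := Summable.of_nonneg_of_le hn hb hs
    refine ⟨hsc, tsum_nonneg hn, ?_⟩
    rw [← tsum_mul_left, ← tsum_mul_left]
    exact hsc.tsum_le_tsum hb hs
  have hz0 : Tendsto (fun η : ℝ => 2 * (η * ∑' n, ip (lz η) n)) (nhdsWithin 0 (Set.Ioi 0)) (nhds 0) := by
    have hmap : Tendsto (fun η : ℝ => 1 + η) (nhdsWithin 0 (Set.Ioi 0)) (nhdsWithin 1 (Set.Ioi 1)) := by
      apply tendsto_nhdsWithin_of_tendsto_nhds_of_eventually_within
      · have : Tendsto (fun η : ℝ => 1 + η) (nhds 0) (nhds (1 + 0)) := by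
          exact (continuous_const.add continuous_id).tendsto 0
        rw [add_zero] at this
        exact this.mono_left nhdsWithin_le_nhds
      · filter_upwards [self_mem_nhdsWithin] with η hη
        simpa using hη
    have hl := (isLittleO_one_iff ℝ).1 (log_riemannZeta_add_log_sub_isLittleO_ofReal.comp_tendsto hmap)
    have hid : Tendsto (fun η : ℝ => η) (nhdsWithin 0 (Set.Ioi 0)) (nhds 0) := nhdsWithin_le_nhds
    have hxl : Tendsto (fun η : ℝ => Real.log η * η) (nhdsWithin 0 (Set.Ioi 0)) (nhds 0) := by
      simpa using tendsto_log_mul_rpow_nhdsGT_zero (r := 1) one_pos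
    have := ((hid.mul hl).sub hxl).const_mul 2
    simp only [mul_zero, sub_zero] at this
    refine this.congr' ?_
    filter_upwards [self_mem_nhdsWithin] with η hη
    rw [← log_zeta_eq hη]
    simp only [Function.comp, add_sub_cancel_left]
    ring
  have h2 : Tendsto (fun η : ℝ => ∑' n, ip (c η) n) (nhdsWithin 0 (Set.Ioi 0)) (nhds 0) := by
    apply tendsto_of_tendsto_of_tendsto_of_le_of_le' tendsto_const_nhds hz0
    · filter_upwards [self_mem_nhdsWithin] with η hη using (hcs η hη).2.1
    · filter_upwards [self_mem_nhdsWithin] with η hη using (hcs η hη).2.2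
  have h3 := h1.sub h2
  rw [sub_zero] at h3
  refine h3.congr' ?_
  filter_upwards [self_mem_nhdsWithin] with η hη
  have hsd : Summable (ip (d η)) := summable_ip hs2 (fun n => by positivity) (hdb η hη)
  rw [← (summable_zt hη).tsum_sub (summable_lz hη), ← hsd.tsum_sub (hcs η hη).1]
  refine tsum_congr fun n => ?_
  unfold ip
  split_ifs
  · simp only [hd, hc]; ring
  · simp

end CycAux

open Filter Asymptotics Real
namespace CycAux

lemma zeta_log_tendsto : Tendsto (fun η : ℝ => ∑' n, ip (lz η) n + Real.log η)
    (nhdsWithin 0 (Set.Ioi 0)) (nhds 0) := by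
  have hmap : Tendsto (fun η : ℝ => 1 + η) (nhdsWithin 0 (Set.Ioi 0)) (nhdsWithin 1 (Set.Ioi 1)) := by
    apply tendsto_nhdsWithin_of_tendsto_nhds_of_eventually_within
    · have : Tendsto (fun η : ℝ => 1 + η) (nhds 0) (nhds (1 + 0)) := by
        exact (continuous_const.add continuous_id).tendsto 0
      rw [add_zero] at this
      exact this.mono_left nhdsWithin_le_nhds
    · filter_upwards [self_mem_nhdsWithin] with η hη
      simpa using hη
  have hl := (isLittleO_one_iff ℝ).1 (log_riemannZeta_add_log_sub_isLittleO_ofReal.comp_tendsto hmap)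
  refine hl.congr' ?_
  filter_upwards [self_mem_nhdsWithin] with η hη
  rw [← log_zeta_eq hη]
  simp only [Function.comp, add_sub_cancel_left]

lemma log_one_sub_exp_tendsto : Tendsto (fun η : ℝ => Real.log (1 - Real.exp (-η)) - Real.log η)
    (nhdsWithin 0 (Set.Ioi 0)) (nhds 0) := by
  have hd : HasDerivAt (fun η : ℝ => -Real.exp (-η)) 1 0 := by
    have := ((hasDerivAt_neg (0:ℝ)).exp).fun_neg
    simpa using this
  have h1 := hd.tendsto_slope_zero_right
  have h2 := (Real.continuousAt_log one_ne_zero).tendsto.comp h1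
  rw [Real.log_one] at h2
  refine h2.congr' ?_
  filter_upwards [self_mem_nhdsWithin] with η hη
  have hη : 0 < η := hη
  have : Real.exp (-η) < 1 := by simpa using hη
  simp only [Function.comp, zero_add, neg_zero, Real.exp_zero, smul_eq_mul]
  rw [show -Real.exp (-η) - -1 = 1 - Real.exp (-η) by ring, Real.log_mul (by positivity) (by linarith),
    Real.log_inv]
  ring

lemma blocks_limit : Tendsto (fun K : ℕ => ∑ k ∈ Finset.range K,
    (∑ p ∈ Bl k, wt p - 1 / ((k:ℝ) + 1))) atTop (nhds 0) := by
  obtain ⟨β, hβ⟩ := blocks_converge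
  have hab := Real.tendsto_tsum_powerSeries_nhdsWithin_lt hβ
  have hz : Tendsto (fun η : ℝ => Real.exp (-η)) (nhdsWithin 0 (Set.Ioi 0)) (nhdsWithin 1 (Set.Iio 1)) := by
    apply tendsto_nhdsWithin_of_tendsto_nhds_of_eventually_within
    · have : Tendsto (fun η : ℝ => Real.exp (-η)) (nhds 0) (nhds (Real.exp (-0))) :=
        (Real.continuous_exp.comp continuous_neg).tendsto 0
      rw [neg_zero, Real.exp_zero] at this
      exact this.mono_left nhdsWithin_le_nhds
    · filter_upwards [self_mem_nhdsWithin] with η hη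
      simpa using hη
  have hz' := hz.mono_right (nhdsWithin_le_nhds)
  have h1 := hz'.mul (hab.comp hz)
  rw [one_mul] at h1
  have h2 := (diff_tendsto.add zeta_log_tendsto).add log_one_sub_exp_tendsto
  simp only [add_zero] at h2
  have : β = 0 := by
    refine tendsto_nhds_unique (h1.congr' ?_) h2
    filter_upwards [self_mem_nhdsWithin] with η hη
    have hη : 0 < η := hη
    have hlt : Real.exp (-η) < 1 := by simpa using hη
    have hpos := Real.exp_pos (-η)
    have s1 := hasSum_blocks hη
    have s2 := Real.hasSum_pow_div_log_of_abs_lt_one (x := Real.exp (-η)) (by rw [abs_of_pos hpos]; exact hlt)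
    have s3 := (s1.sub s2).tsum_eq
    simp only [Function.comp]
    rw [← tsum_mul_left]
    have e : ∀ k : ℕ, Real.exp (-η) * ((∑ p ∈ Bl k, wt p - 1 / ((k:ℝ) + 1)) * Real.exp (-η) ^ k)
      = (∑ p ∈ Bl k, wt p) * Real.exp (-η) ^ (k + 1) - Real.exp (-η) ^ (k + 1) / (↑k + 1) := by
      intro k; ring
    rw [tsum_congr e, s3]
    ring
  rwa [this] at hβ

lemma sum_wt_EK : Tendsto (fun K : ℕ => ∑ p ∈ PL (EK K), wt p - Real.log K) atTop
    (nhds Real.eulerMascheroniConstant) := by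
  have h := blocks_limit.add Real.tendsto_harmonic_sub_log
  rw [zero_add] at h
  refine h.congr fun K => ?_
  rw [Finset.sum_sub_distrib, sum_sum_Bl]
  simp [harmonic]

lemma sum_wt_mono {a b : ℕ} (h : a ≤ b) : ∑ p ∈ PL a, wt p ≤ ∑ p ∈ PL b, wt p :=
  Finset.sum_le_sum_of_subset_of_nonneg (PL_mono h) fun p hp _ =>
    le_trans (by positivity) (wt_ge p (mem_PL.1 hp).2.two_le)

lemma sum_wt_tendsto : Tendsto (fun y : ℝ => ∑ p ∈ PL ⌊y⌋₊, wt p - Real.log (Real.log y)) atTop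
    (nhds Real.eulerMascheroniConstant) := by
  have hK : Tendsto (fun y : ℝ => ⌊Real.log y⌋₊) atTop atTop :=
    tendsto_nat_floor_atTop.comp Real.tendsto_log_atTop
  have hlog : Tendsto (fun K : ℕ => Real.log ((K:ℝ)+1) - Real.log K) atTop (nhds 0) :=
    Real.tendsto_log_nat_add_one_sub_log
  have hlo := (sum_wt_EK.sub hlog).comp hK
  have hup := ((sum_wt_EK.comp (tendsto_add_atTop_nat 1)).add hlog).comp hK
  rw [sub_zero] at hlo
  rw [add_zero] at hup
  apply tendsto_of_tendsto_of_tendsto_of_le_of_le' hlo hup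
  all_goals
    filter_upwards [eventually_ge_atTop (Real.exp 1)] with y hy
    have hy0 : 0 < y := lt_of_lt_of_le (Real.exp_pos 1) hy
    have hl1 : 1 ≤ Real.log y := by rwa [Real.le_log_iff_exp_le hy0]
    have f1 : (⌊Real.log y⌋₊ : ℝ) ≤ Real.log y := Nat.floor_le (by linarith)
    have f2 : Real.log y < ⌊Real.log y⌋₊ + 1 := Nat.lt_floor_add_one _
    have f3 : (1:ℝ) ≤ ⌊Real.log y⌋₊ := by
      exact_mod_cast Nat.le_floor (by exact_mod_cast hl1)
    have g1 : Real.log (⌊Real.log y⌋₊ : ℝ) ≤ Real.log (Real.log y) := Real.log_le_log (by linarith) f1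
    have g2 : Real.log (Real.log y) ≤ Real.log (⌊Real.log y⌋₊ + 1) := Real.log_le_log (by linarith) f2.le
    simp only [Function.comp]
  · have : EK ⌊Real.log y⌋₊ ≤ ⌊y⌋₊ := Nat.floor_mono (by
      rw [← Real.le_log_iff_exp_le hy0]; exact f1)
    have := sum_wt_mono this
    linarith
  · have : ⌊y⌋₊ ≤ EK (⌊Real.log y⌋₊ + 1) := Nat.floor_mono (by
      rw [← Real.log_le_iff_le_exp hy0]; push_cast; exact f2.le)
    have := sum_wt_mono this
    push_cast
    linarith

lemma mertens_third : Tendsto (fun y : ℝ => (∏ p ∈ PL ⌊y⌋₊, (1 - 1 / (p:ℝ))) * Real.log y) atTop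
    (nhds (Real.exp (-Real.eulerMascheroniConstant))) := by
  have h := (Real.continuous_exp.tendsto _).comp sum_wt_tendsto.neg
  refine h.congr' ?_
  filter_upwards [eventually_gt_atTop 1] with y hy
  have hl : 0 < Real.log y := Real.log_pos hy
  simp only [Function.comp, neg_sub]
  rw [sub_eq_add_neg, Real.exp_add, Real.exp_log hl, ← Finset.sum_neg_distrib, Real.exp_sum, mul_comm]
  congr 1
  refine Finset.prod_congr rfl fun p hp => ?_
  have h2 : (2:ℝ) ≤ p := by exact_mod_cast (mem_PL.1 hp).2.two_le
  have h3 : 1 / (p:ℝ) ≤ 1/2 := by gcongr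
  rw [wt, neg_neg, Real.exp_log (by linarith)]

end CycAux

open Filter Asymptotics Real
namespace CycAux

lemma coprime_count_upper (a N : ℕ) (ha : 0 < a) :
    (((Finset.Ioc 0 N).filter (fun n => a.Coprime n)).card : ℝ) ≤ N * (a.totient / a : ℝ) + a := by
  have h := Nat.Ico_filter_coprime_le 1 N ha.ne'
  have e : Finset.Ioc 0 N = Finset.Ico 1 (1 + N) := by ext; simp; omega
  rw [e]
  have h1 : (((Finset.Ico 1 (1+N)).filter (fun n => a.Coprime n)).card : ℝ) ≤ a.totient * ((N / a : ℕ) + 1) := by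
    exact_mod_cast h
  refine h1.trans ?_
  have h2 : ((N / a : ℕ) : ℝ) ≤ N / a := Nat.cast_div_le
  have h3 : (a.totient : ℝ) ≤ a := by exact_mod_cast Nat.totient_le a
  calc (a.totient : ℝ) * ((N / a : ℕ) + 1) ≤ a.totient * (N / a + 1) := by gcongr
    _ = N * (a.totient / a : ℝ) + a.totient := by ring
    _ ≤ _ := by linarith

lemma coprime_count_ge_aux (a : ℕ) (k : ℕ) :
    a.totient * k ≤ ((Finset.Ico 1 (1 + a * k)).filter (fun n => a.Coprime n)).card := by
  induction k with
  | zero => simp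
  | succ k ih =>
    have := Nat.filter_coprime_Ico_eq_totient a (1 + a * k)
    have hd : (Finset.Ico 1 (1 + a * (k+1))).filter (fun n => a.Coprime n) =
      (Finset.Ico 1 (1 + a * k)).filter (fun n => a.Coprime n) ∪
      (Finset.Ico (1 + a * k) (1 + a * k + a)).filter (fun n => a.Coprime n) := by
      rw [← Finset.filter_union, Finset.Ico_union_Ico_eq_Ico (by omega) (by omega)]
      congr 2; ring
    rw [hd, Finset.card_union_of_disjoint, this]
    · rw [mul_add, mul_one]; omega
    · apply Finset.disjoint_filter_filter
      exact Finset.Ico_disjoint_Ico_consecutive _ _ _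

lemma coprime_count_lower (a N : ℕ) (ha : 0 < a) :
    N * (a.totient / a : ℝ) - a ≤ (((Finset.Ioc 0 N).filter (fun n => a.Coprime n)).card : ℝ) := by
  have e : Finset.Ioc 0 N = Finset.Ico 1 (1 + N) := by ext; simp; omega
  have h0 := coprime_count_ge_aux a (N / a)
  have hs : ((Finset.Ico 1 (1 + a * (N/a))).filter (fun n => a.Coprime n)).card ≤
     ((Finset.Ico 1 (1 + N)).filter (fun n => a.Coprime n)).card := by
    apply Finset.card_le_card
    apply Finset.filter_subset_filter
    apply Finset.Ico_subset_Ico le_rfl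
    have := Nat.mul_div_le N a
    omega
  rw [e]
  have h1 : (a.totient : ℝ) * (N / a : ℕ) ≤ (((Finset.Ico 1 (1+N)).filter (fun n => a.Coprime n)).card : ℝ) := by
    exact_mod_cast h0.trans hs
  refine le_trans ?_ h1
  have h2 : (N / a : ℝ) - 1 ≤ ((N / a : ℕ) : ℝ) := by
    rw [← Nat.floor_div_eq_div (K := ℝ)]
    linarith [Nat.lt_floor_add_one ((N:ℝ) / a)]
  have h3 : (a.totient : ℝ) ≤ a := by exact_mod_cast Nat.totient_le a
  calc N * (a.totient / a : ℝ) - a ≤ N * (a.totient / a : ℝ) - a.totient := by linarith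
    _ = a.totient * (N / a - 1) := by ring
    _ ≤ _ := by gcongr

lemma primorial_totient (y : ℕ) : ((primorial y).totient / primorial y : ℝ) = ∏ p ∈ PL y, (1 - 1 / (p:ℝ)) := by
  have h := Nat.totient_eq_mul_prod_factors (primorial y)
  have hp : (primorial y).primeFactors = PL y := by
    have : primorial y = ∏ p ∈ PL y, p := rfl
    rw [this]
    exact Nat.primeFactors_prod (fun p hp => (mem_PL.1 hp).2)
  rw [hp] at h
  have h' : ((primorial y).totient : ℝ) = primorial y * ∏ p ∈ PL y, (1 - (p:ℝ)⁻¹) := by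
    have h2 := congrArg (fun q : ℚ => (q : ℝ)) h
    push_cast at h2
    exact h2
  rw [h', mul_div_cancel_left₀]
  · simp
  · exact_mod_cast (primorial_pos y).ne'

/-- numbers up to `N` free of prime factors `≤ y` -/
noncomputable def Ph (N y : ℕ) : ℕ := ((Finset.Ioc 0 N).filter (fun n => (primorial y).Coprime n)).card

lemma coprime_primorial {y n : ℕ} : (primorial y).Coprime n ↔ ∀ p, p.Prime → p ≤ y → ¬ p ∣ n := by
  have : primorial y = ∏ p ∈ PL y, p := rfl
  rw [this, Nat.coprime_prod_left_iff]
  constructor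
  · intro h p hp hy
    exact (Nat.Prime.coprime_iff_not_dvd hp).1 (h p (mem_PL.2 ⟨hy, hp⟩))
  · intro h p hp
    have := mem_PL.1 hp
    exact (Nat.Prime.coprime_iff_not_dvd this.2).2 (h p this.2 this.1)

lemma Ph_upper (N y : ℕ) : (Ph N y : ℝ) ≤ N * (∏ p ∈ PL y, (1 - 1 / (p:ℝ))) + 4 ^ y := by
  have := coprime_count_upper (primorial y) N (primorial_pos y)
  rw [primorial_totient] at this
  have h2 : (primorial y : ℝ) ≤ 4 ^ y := by exact_mod_cast primorial_le_four_pow y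
  unfold Ph; linarith

lemma Ph_lower (N y : ℕ) : N * (∏ p ∈ PL y, (1 - 1 / (p:ℝ))) - 4 ^ y ≤ (Ph N y : ℝ) := by
  have := coprime_count_lower (primorial y) N (primorial_pos y)
  rw [primorial_totient] at this
  have h2 : (primorial y : ℝ) ≤ 4 ^ y := by exact_mod_cast primorial_le_four_pow y
  unfold Ph; linarith

end CycAux

open Filter Asymptotics Real
namespace CycAux

/-- primes `q ≤ N` with `q ≡ 1 mod p` -/
def Q1 (p N : ℕ) : Finset ℕ := (Finset.Ioc 0 N).filter (fun q => q.Prime ∧ q % p = 1)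

lemma mem_Q1 {p N q : ℕ} : q ∈ Q1 p N ↔ q ≤ N ∧ q.Prime ∧ q % p = 1 := by
  simp only [Q1, Finset.mem_filter, Finset.mem_Ioc]
  constructor
  · rintro ⟨h, h2⟩; exact ⟨h.2, h2⟩
  · rintro ⟨h, h2⟩; exact ⟨⟨h2.1.pos, h⟩, h2⟩

lemma ordCompl_dvd (p J : ℕ) (hp : p.Prime) :
    (J.factorial / p ^ J.factorial.factorization p) ∣ ∏ j ∈ Finset.range J, (p * (j+1) + 1) := by
  set M := J.factorial / p ^ J.factorial.factorization p with hM
  have hcop : Nat.Coprime p M := Nat.coprime_ordCompl hp (Nat.factorial_ne_zero J)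
  have hMpos : M ≠ 0 := (Nat.ordCompl_pos p (Nat.factorial_ne_zero J)).ne'
  obtain ⟨u, hu⟩ : ∃ u : ℕ, p * u ≡ 1 [MOD M] := by
    have := Nat.ModEq.pow_totient hcop
    have ht : 0 < M.totient := Nat.totient_pos.2 (Nat.pos_of_ne_zero hMpos)
    refine ⟨p ^ (M.totient - 1), ?_⟩
    rwa [← pow_succ', Nat.sub_add_cancel ht]
  have h1 : ∏ j ∈ Finset.range J, (p * (j+1) + 1) ≡ ∏ j ∈ Finset.range J, (p * (u + 1 + j)) [MOD M] := by
    apply Nat.ModEq.prod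
    intro j _
    have : p * (u + 1 + j) = p * (j + 1) + p * u := by ring
    rw [this]
    exact (hu.symm).add_left _
  have h2 : M ∣ ∏ j ∈ Finset.range J, (p * (u + 1 + j)) := by
    rw [Finset.prod_mul_distrib]
    apply Dvd.dvd.mul_left
    rw [← Nat.ascFactorial_eq_prod_range]
    exact (Nat.ordCompl_dvd _ _).trans (Nat.factorial_dvd_ascFactorial _ _)
  exact (h1.dvd_iff dvd_rfl).2 h2

lemma prod_Q1_le (p J : ℕ) (hp : p.Prime) :
    ∏ q ∈ (Q1 p (p * J + 1)).filter (J < ·), q ≤ p ^ (3 * J) := by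
  set M := J.factorial / p ^ J.factorial.factorization p with hM
  set S := (Q1 p (p * J + 1)).filter (J < ·) with hS
  have hMpos : 0 < M := Nat.ordCompl_pos p (Nat.factorial_ne_zero J)
  have hmem : ∀ q ∈ S, q ≤ p * J + 1 ∧ q.Prime ∧ q % p = 1 ∧ J < q := by
    intro q hq
    have := Finset.mem_filter.1 hq
    have h2 := mem_Q1.1 this.1
    exact ⟨h2.1, h2.2.1, h2.2.2, this.2⟩
  have hMJ : M ∣ J.factorial := Nat.ordCompl_dvd _ _
  have hc : Nat.Coprime M (∏ q ∈ S, q) := by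
    rw [Nat.coprime_prod_right_iff]
    intro q hq
    obtain ⟨_, hq2, _, hq4⟩ := hmem q hq
    refine ((Nat.Prime.coprime_iff_not_dvd hq2).2 fun hd => ?_).symm
    have := (Nat.Prime.dvd_factorial hq2).1 (hd.trans hMJ)
    omega
  have hd2 : ∏ q ∈ S, q ∣ ∏ j ∈ Finset.range J, (p * (j+1) + 1) := by
    have : ∏ j ∈ Finset.range J, (p * (j+1) + 1) = ∏ q ∈ (Finset.range J).image (fun j => p * (j+1) + 1), q := by
      rw [Finset.prod_image]
      intro a _ b _ h
      have := hp.pos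
      simpa [this.ne'] using h
    rw [this]
    apply Finset.prod_dvd_prod_of_subset
    intro q hq
    obtain ⟨hq1, hq2, hq3, hq4⟩ := hmem q hq
    have e := Nat.div_add_mod q p
    rw [hq3] at e
    have hpos : 0 < q / p := by
      rcases Nat.eq_zero_or_pos (q / p) with h | h
      · rw [h] at e; have := hq2.two_le; omega
      · exact h
    rw [Finset.mem_image]
    refine ⟨q / p - 1, ?_, ?_⟩
    · rw [Finset.mem_range]
      have : p * (q / p) ≤ p * J := by omega
      have := Nat.le_of_mul_le_mul_left this hp.pos
      omega
    · rw [Nat.sub_add_cancel hpos]; exact e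
  have hd := hc.mul_dvd_of_dvd_of_dvd (ordCompl_dvd p J hp) hd2
  have hle := Nat.le_of_dvd (Finset.prod_pos (by intros; positivity)) hd
  have hb : ∏ j ∈ Finset.range J, (p * (j+1) + 1) ≤ p ^ J * ((J+1) * J.factorial) := by
    calc ∏ j ∈ Finset.range J, (p * (j+1) + 1) ≤ ∏ j ∈ Finset.range J, (p * (j + 1 + 1)) := by
          apply Finset.prod_le_prod' 
          intro j _
          have := hp.pos
          rw [mul_add p (j+1) 1]; omega
      _ = p ^ J * ∏ j ∈ Finset.range J, (j + 1 + 1) := by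
          rw [Finset.prod_mul_distrib]; simp
      _ = _ := by
          congr 1
          rw [← Nat.factorial_succ, ← Finset.prod_range_add_one_eq_factorial, Finset.prod_range_succ']
          simp
  have hfac : J.factorial = p ^ J.factorial.factorization p * M := (Nat.ordProj_mul_ordCompl_eq_self _ _).symm
  have hv : J.factorial.factorization p ≤ J := by
    rcases Nat.eq_zero_or_pos J with h | h
    · subst h; simp
    · have := hp.two_le
      have := Fact.mk hp
      have h1 := sub_one_mul_padicValNat_factorial (p := p) J
      rw [← Nat.factorization_def _ hp] at h1
      have : J.factorial.factorization p ≤ (p-1) * J.factorial.factorization p :=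
        Nat.le_mul_of_pos_left _ (by omega)
      omega
  have hJ : J + 1 ≤ p ^ J := by
    have : J < 2 ^ J := Nat.lt_two_pow_self
    have h2 : 2 ^ J ≤ p ^ J := Nat.pow_le_pow_left hp.two_le J
    omega
  have hfin : M * ∏ q ∈ S, q ≤ M * p ^ (3 * J) := by
    calc M * ∏ q ∈ S, q ≤ p ^ J * ((J+1) * J.factorial) := hle.trans hb
      _ = M * (p ^ J * (J+1) * p ^ J.factorial.factorization p) := by
          conv_lhs => rw [hfac]
          ring
      _ ≤ M * (p ^ J * p ^ J * p ^ J) := by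
          gcongr
          exact hp.pos
      _ = _ := by ring
  exact Nat.le_of_mul_le_mul_left hfin hMpos

lemma sum_log_Q1_le (p J : ℕ) (hp : p.Prime) :
    ∑ q ∈ (Q1 p (p * J + 1)).filter (J < ·), Real.log q ≤ 3 * J * Real.log p := by
  have h := prod_Q1_le p J hp
  rw [← Real.log_prod]
  · have h1 : (∏ q ∈ (Q1 p (p * J + 1)).filter (J < ·), (q:ℝ)) ≤ (p:ℝ) ^ (3 * J) := by
      rw [← Nat.cast_prod]; exact_mod_cast h
    have := Real.log_le_log (Finset.prod_pos (fun q hq => by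
      have := (mem_Q1.1 (Finset.mem_filter.1 hq).1).2.1.pos
      exact_mod_cast this)) h1
    rw [Real.log_pow] at this
    push_cast at this
    exact this
  · intro q hq
    have := (mem_Q1.1 (Finset.mem_filter.1 hq).1).2.1.pos
    exact_mod_cast this.ne'

lemma block_le (p N i : ℕ) (hp : p.Prime) (h5 : 5 ≤ p) (hi : 1 ≤ i) :
    ∑ q ∈ (Q1 p N).filter (fun q => Nat.log 2 q = i), 1 / (q:ℝ) ≤ 18 * (Real.log p / p) * (1 / i) := by
  set B := (Q1 p N).filter (fun q => Nat.log 2 q = i) with hB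
  have hp0 : (0:ℝ) < p := by exact_mod_cast hp.pos
  have hlp : 0 ≤ Real.log p := Real.log_nonneg (by exact_mod_cast hp.one_le)
  have hi0 : (0:ℝ) < i := by exact_mod_cast hi
  have hmem : ∀ q ∈ B, q.Prime ∧ q % p = 1 ∧ 2 ^ i ≤ q ∧ q < 2 ^ (i+1) := by
    intro q hq
    have := Finset.mem_filter.1 hq
    have h2 := mem_Q1.1 this.1
    refine ⟨h2.2.1, h2.2.2, ?_, ?_⟩
    · rw [← this.2]; exact Nat.pow_log_le_self 2 h2.2.1.ne_zero
    · rw [← this.2]; exact Nat.lt_pow_succ_log_self (by norm_num) _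
  rcases B.eq_empty_or_nonempty with he | ⟨q0, hq0⟩
  · rw [he]; simp; positivity
  have hpi : p < 2 ^ (i+1) := by
    obtain ⟨a, b, _, d⟩ := hmem q0 hq0
    have : p < q0 := by
      by_contra hcon
      rcases Nat.lt_or_eq_of_le (not_lt.1 hcon) with h | h
      · rw [Nat.mod_eq_of_lt h] at b; have := a.two_le; omega
      · rw [h, Nat.mod_self] at b; omega
    omega
  set J := 2 ^ (i+1) / p + 1 with hJ
  have hdm := Nat.div_add_mod (2 ^ (i+1)) p
  have hml := Nat.mod_lt (2 ^ (i+1)) hp.pos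
  have h2i : 2 ≤ 2 ^ i := by
    calc 2 = 2 ^ 1 := by norm_num
      _ ≤ 2 ^ i := Nat.pow_le_pow_right (by norm_num) hi
  have hJi : J < 2 ^ i := by
    have : 5 * (2 ^ (i+1) / p) ≤ p * (2 ^ (i+1) / p) := Nat.mul_le_mul_right _ h5
    have e : 2 ^ (i+1) = 2 * 2 ^ i := by ring
    omega
  have hsub : B ⊆ (Q1 p (p * J + 1)).filter (J < ·) := by
    intro q hq
    obtain ⟨a, b, c, d⟩ := hmem q hq
    rw [Finset.mem_filter, mem_Q1]
    refine ⟨⟨?_, a, b⟩, by omega⟩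
    have : p * J = p * (2 ^ (i+1) / p) + p := by rw [hJ]; ring
    omega
  have hs := sum_log_Q1_le p J hp
  have hs2 : ∑ q ∈ B, Real.log q ≤ 3 * J * Real.log p := by
    refine le_trans (Finset.sum_le_sum_of_subset_of_nonneg hsub ?_) hs
    intro q hq _
    exact Real.log_nonneg (by exact_mod_cast (mem_Q1.1 (Finset.mem_filter.1 hq).1).2.1.one_le)
  have hJr : (J:ℝ) * p ≤ 4 * 2 ^ i := by
    have : J * p ≤ 4 * 2 ^ i := by
      have : J * p = p * (2 ^ (i+1) / p) + p := by rw [hJ]; ring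
      have e : 2 ^ (i+1) = 2 * 2 ^ i := by ring
      omega
    exact_mod_cast this
  have hl2 : 0.69 < Real.log 2 := by have := Real.log_two_gt_d9; linarith
  have h2p : (0:ℝ) < 2 ^ i := by positivity
  have hterm : ∀ q ∈ B, 1 / (q:ℝ) ≤ Real.log q / (i * Real.log 2 * 2 ^ i) := by
    intro q hq
    obtain ⟨a, b, c, d⟩ := hmem q hq
    have c' : (2:ℝ) ^ i ≤ q := by exact_mod_cast c
    have : i * Real.log 2 ≤ Real.log q := by
      rw [← Real.log_pow]; exact Real.log_le_log h2p c'
    rw [div_le_div_iff₀ (by linarith) (by positivity), one_mul]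
    exact mul_le_mul this c' (by positivity) (by linarith [mul_pos hi0 (by linarith : 0 < Real.log 2)])
  calc ∑ q ∈ B, 1 / (q:ℝ) ≤ ∑ q ∈ B, Real.log q / (i * Real.log 2 * 2 ^ i) := Finset.sum_le_sum hterm
    _ = (∑ q ∈ B, Real.log q) / (i * Real.log 2 * 2 ^ i) := by rw [Finset.sum_div]
    _ ≤ (3 * J * Real.log p) / (i * Real.log 2 * 2 ^ i) := by gcongr
    _ ≤ _ := by
      have hJ2 : (J:ℝ) ≤ 4 * 2 ^ i / p := by rw [le_div_iff₀ hp0]; exact hJr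
      rw [div_le_iff₀ (by positivity)]
      calc 3 * (J:ℝ) * Real.log p ≤ 3 * (4 * 2 ^ i / p) * Real.log p := by gcongr
        _ = 12 * (Real.log p / p * 2 ^ i) := by ring
        _ ≤ (18 * Real.log 2) * (Real.log p / p * 2 ^ i) := by gcongr; linarith
        _ = _ := by field_simp

lemma sum_Q1_le (p N : ℕ) (hp : p.Prime) (h5 : 5 ≤ p) (hN : 3 ≤ N) :
    ∑ q ∈ Q1 p N, 1 / (q:ℝ) ≤ 18 * (Real.log p / p) * (Real.log (Real.log N) + 2) := by
  have hlp : 0 ≤ Real.log p := Real.log_nonneg (by exact_mod_cast hp.one_le)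
  have h1 : ∑ q ∈ Q1 p N, 1 / (q:ℝ) = ∑ i ∈ Finset.Icc 1 (Nat.log 2 N),
      ∑ q ∈ (Q1 p N).filter (fun q => Nat.log 2 q = i), 1 / (q:ℝ) := by
    symm
    apply Finset.sum_fiberwise_of_maps_to
    intro q hq
    have := mem_Q1.1 hq
    rw [Finset.mem_Icc]
    refine ⟨?_, Nat.log_mono_right this.1⟩
    exact Nat.log_pos (by norm_num) this.2.1.two_le
  have hK : 1 ≤ Nat.log 2 N := Nat.log_pos (by norm_num) (by omega)
  rw [h1]
  calc _ ≤ ∑ i ∈ Finset.Icc 1 (Nat.log 2 N), 18 * (Real.log p / p) * (1 / (i:ℝ)) := by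
        apply Finset.sum_le_sum
        intro i hi
        exact block_le p N i hp h5 (Finset.mem_Icc.1 hi).1
    _ = 18 * (Real.log p / p) * ∑ i ∈ Finset.Icc 1 (Nat.log 2 N), (1 / (i:ℝ)) := by
        rw [Finset.mul_sum]
    _ ≤ _ := by
        gcongr
        have hh := harmonic_le_one_add_log (Nat.log 2 N)
        rw [harmonic_eq_sum_Icc] at hh
        push_cast at hh
        simp only [one_div]
        refine hh.trans ?_
        have hl2 : 0.69 < Real.log 2 := by have := Real.log_two_gt_d9; linarith
        have hNr : (3:ℝ) ≤ N := by exact_mod_cast hN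
        have hpow : (Nat.log 2 N : ℝ) * Real.log 2 ≤ Real.log N := by
          rw [← Real.log_pow]
          apply Real.log_le_log (by positivity)
          exact_mod_cast Nat.pow_log_le_self 2 (by omega)
        have hK' : (1:ℝ) ≤ Nat.log 2 N := by exact_mod_cast hK
        have hlN : 0 < Real.log N := Real.log_pos (by linarith)
        have : (Nat.log 2 N : ℝ) ≤ Real.exp 1 * Real.log N := by
          have := Real.exp_one_gt_d9
          nlinarith
        have := Real.log_le_log (by linarith) this
        rw [Real.log_mul (Real.exp_pos _).ne' hlN.ne', Real.log_exp] at this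
        linarith

end CycAux

open Filter Asymptotics Real
namespace CycAux

lemma not_cyclic {n : ℕ} (hn : 0 < n) (h : ¬ IsCyclicNum n) :
    ∃ p, p.Prime ∧ p ∣ n ∧ (p * p ∣ n ∨ ∃ q, q.Prime ∧ q % p = 1 ∧ q ∣ n ∧ p * q ∣ n) := by
  have h1 : Nat.gcd n n.totient ≠ 1 := fun h2 => h ⟨hn, h2⟩
  obtain ⟨p, hp, hpd⟩ := Nat.exists_prime_and_dvd h1
  have hpn := hpd.trans (Nat.gcd_dvd_left _ _)
  have hpt := hpd.trans (Nat.gcd_dvd_right _ _)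
  refine ⟨p, hp, hpn, ?_⟩
  rw [Nat.totient_eq_prod_factorization hn.ne', Finsupp.prod, Prime.dvd_finsetProd_iff hp.prime] at hpt
  obtain ⟨q, hq, hd⟩ := hpt
  have hqp : q.Prime := Nat.prime_of_mem_primeFactors hq
  have hqn : q ∣ n := Nat.dvd_of_mem_primeFactors hq
  rcases (Nat.Prime.dvd_mul hp).1 hd with h2 | h2
  · left
    have hne : n.factorization q - 1 ≠ 0 := by
      intro h0; rw [h0, pow_zero] at h2; exact hp.one_lt.ne' (Nat.dvd_one.1 h2)
    have h3 : p = q := (Nat.prime_dvd_prime_iff_eq hp hqp).1 (hp.dvd_of_dvd_pow h2)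
    subst h3
    rw [← sq]
    exact (hp.pow_dvd_iff_le_factorization hn.ne').2 (by omega)
  · right
    have hmod : q % p = 1 := by
      obtain ⟨c, hc⟩ := h2
      have : q = p * c + 1 := by have := hqp.pos; omega
      rw [this, Nat.mul_add_mod, Nat.mod_eq_of_lt hp.one_lt]
    refine ⟨q, hqp, hmod, hqn, ?_⟩
    refine Nat.Coprime.mul_dvd_of_dvd_of_dvd ((Nat.coprime_primes hp hqp).2 ?_) hpn hqn
    intro he
    rw [he, Nat.mod_self] at hmod
    omega

lemma cyclic_not_dvd {n p q : ℕ} (h : IsCyclicNum n) (hp : p.Prime) (hq : q.Prime) (hpn : p ∣ n)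
    (hqp : q % p = 1) : ¬ q ∣ n := by
  intro hqn
  have h1 : q.totient ∣ n.totient := Nat.totient_dvd_of_dvd hqn
  rw [Nat.totient_prime hq] at h1
  have h2 : p ∣ q - 1 := by
    refine ⟨q / p, ?_⟩
    have := Nat.div_add_mod q p
    omega
  have h3 := Nat.dvd_gcd hpn (h2.trans h1)
  rw [h.2] at h3
  exact hp.one_lt.ne' (Nat.dvd_one.1 h3)

/-- counting function -/
def CC (N : ℕ) : ℕ := ((Finset.Ioc 0 N).filter IsCyclicNum).card

lemma tail_sum (y N : ℕ) (hy : 1 ≤ y) (hN : y ≤ N) :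
    ∑ n ∈ Finset.Ioc y N, Real.log n / (n:ℝ) ^ 2 ≤ (Real.log y + 2) / y - (Real.log N + 2) / N := by
  induction N, hN using Nat.le_induction with
  | base => simp
  | succ N hN ih =>
    rw [Finset.sum_Ioc_succ_top hN]
    have hN0 : (1:ℝ) ≤ N := by exact_mod_cast hy.trans hN
    have hlog : Real.log (N+1) ≤ Real.log N + 1 / N := by
      have := Real.log_le_sub_one_of_pos (x := ((N:ℝ)+1)/N) (by positivity)
      rw [Real.log_div (by positivity) (by positivity)] at this
      have e : ((N:ℝ)+1)/N - 1 = 1 / N := by field_simp; ring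
      linarith
    have hinv : 1 / (N:ℝ) ≤ 1 := by rw [div_le_one (by linarith)]; exact hN0
    have hl0 : 0 ≤ Real.log N := Real.log_nonneg hN0
    push_cast
    have key : Real.log ((N:ℝ)+1) / ((N:ℝ)+1)^2 ≤ (Real.log N + 2) / N - (Real.log ((N:ℝ)+1) + 2) / ((N:ℝ)+1) := by
      calc Real.log ((N:ℝ)+1) / ((N:ℝ)+1)^2 ≤ (Real.log N + 1) / (N * (N+1)) := by
            apply div_le_div₀
            · linarith
            · linarith
            · positivity
            · nlinarith
        _ = (Real.log N + 2) / N - (Real.log N + 1 / N + 2) / ((N:ℝ)+1) := by field_simp; ring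
        _ ≤ _ := by gcongr
    linarith

lemma card_dvd (N d : ℕ) : (((Finset.Ioc 0 N).filter (fun n => d ∣ n)).card : ℝ) ≤ N * (1 / d) := by
  rw [Nat.Ioc_filter_dvd_card_eq_div]
  have : ((N / d : ℕ) : ℝ) ≤ N / d := Nat.cast_div_le
  rw [mul_one_div]; exact this

lemma CC_lower (N y : ℕ) (hy : 5 ≤ y) (hyN : y ≤ N) (hL : 0 ≤ Real.log (Real.log N)) :
    (Ph N y : ℝ) - N * (19 * (Real.log (Real.log N) + 2) * ((Real.log y + 2) / y)) ≤ CC N := by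
  set T := (Finset.Ioc y N).filter Nat.Prime with hT
  set D : ℕ → Finset ℕ := fun d => (Finset.Ioc 0 N).filter (fun n => d ∣ n) with hD
  have hsub : (Finset.Ioc 0 N).filter (fun n => (primorial y).Coprime n) ⊆
      (Finset.Ioc 0 N).filter IsCyclicNum ∪ (T.biUnion (fun p => D (p*p)) ∪
        T.biUnion (fun p => (Q1 p N).biUnion (fun q => D (p * q)))) := by
    intro n hn
    obtain ⟨hn1, hn2⟩ := Finset.mem_filter.1 hn
    have hn0 := Finset.mem_Ioc.1 hn1
    by_cases hc : IsCyclicNum n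
    · exact Finset.mem_union_left _ (Finset.mem_filter.2 ⟨hn1, hc⟩)
    apply Finset.mem_union_right
    obtain ⟨p, hp, hpn, h⟩ := not_cyclic hn0.1 hc
    have hpT : p ∈ T := by
      rw [hT, Finset.mem_filter, Finset.mem_Ioc]
      refine ⟨⟨?_, (Nat.le_of_dvd hn0.1 hpn).trans hn0.2⟩, hp⟩
      by_contra hcon
      exact coprime_primorial.1 hn2 p hp (not_lt.1 hcon) hpn
    rcases h with h | ⟨q, hq, hqm, hqn, hpq⟩
    · apply Finset.mem_union_left
      exact Finset.mem_biUnion.2 ⟨p, hpT, Finset.mem_filter.2 ⟨hn1, h⟩⟩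
    · apply Finset.mem_union_right
      refine Finset.mem_biUnion.2 ⟨p, hpT, Finset.mem_biUnion.2 ⟨q, ?_, Finset.mem_filter.2 ⟨hn1, hpq⟩⟩⟩
      exact mem_Q1.2 ⟨(Nat.le_of_dvd hn0.1 hqn).trans hn0.2, hq, hqm⟩
  have h1 : Ph N y ≤ CC N + (∑ p ∈ T, (D (p*p)).card + ∑ p ∈ T, ∑ q ∈ Q1 p N, (D (p*q)).card) := by
    refine (Finset.card_le_card hsub).trans ((Finset.card_union_le _ _).trans ?_)
    refine Nat.add_le_add le_rfl ((Finset.card_union_le _ _).trans (Nat.add_le_add Finset.card_biUnion_le ?_))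
    refine Finset.card_biUnion_le.trans (Finset.sum_le_sum fun p _ => Finset.card_biUnion_le)
  have h2 : (Ph N y : ℝ) ≤ CC N + (∑ p ∈ T, ((D (p*p)).card : ℝ) + ∑ p ∈ T, ∑ q ∈ Q1 p N, ((D (p*q)).card : ℝ)) := by
    exact_mod_cast h1
  set L := Real.log (Real.log N) with hLdef
  have h3 : ∑ p ∈ T, ((D (p*p)).card : ℝ) + ∑ p ∈ T, ∑ q ∈ Q1 p N, ((D (p*q)).card : ℝ) ≤
      ∑ p ∈ T, N * (19 * (L + 2) * (Real.log p / (p:ℝ) ^ 2)) := by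
    rw [← Finset.sum_add_distrib]
    apply Finset.sum_le_sum
    intro p hp
    rw [hT, Finset.mem_filter, Finset.mem_Ioc] at hp
    have hp5 : 5 ≤ p := by omega
    have hp5' : (5:ℝ) ≤ p := by exact_mod_cast hp5
    have hlp : 1 ≤ Real.log p := by
      rw [Real.le_log_iff_exp_le (by linarith)]
      have := Real.exp_one_lt_d9
      linarith
    have a1 : ((D (p*p)).card : ℝ) ≤ N * (1 / (p:ℝ)^2) := by
      have := card_dvd N (p*p)
      push_cast at this
      rw [sq]; exact this
    have a2 : ∑ q ∈ Q1 p N, ((D (p*q)).card : ℝ) ≤ N * (1/p) * (18 * (Real.log p / p) * (L + 2)) := by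
      calc ∑ q ∈ Q1 p N, ((D (p*q)).card : ℝ) ≤ ∑ q ∈ Q1 p N, N * (1 / (p:ℝ)) * (1 / q) := by
            apply Finset.sum_le_sum
            intro q _
            have := card_dvd N (p*q)
            push_cast at this
            refine this.trans (le_of_eq ?_)
            rw [mul_assoc, one_div_mul_one_div]
        _ = N * (1 / (p:ℝ)) * ∑ q ∈ Q1 p N, 1 / (q:ℝ) := by rw [Finset.mul_sum]
        _ ≤ _ := by
            gcongr
            exact sum_Q1_le p N hp.2 hp5 (by omega)
    have a3 : 1 / (p:ℝ)^2 ≤ (L + 2) * (Real.log p / (p:ℝ) ^ 2) := by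
      rw [← mul_div_assoc]
      gcongr
      nlinarith
    calc _ ≤ N * (1 / (p:ℝ)^2) + N * (1/p) * (18 * (Real.log p / p) * (L + 2)) := add_le_add a1 a2
      _ = N * (1 / (p:ℝ)^2 + 18 * (L + 2) * (Real.log p / (p:ℝ) ^ 2)) := by field_simp
      _ ≤ _ := by
        gcongr
        linarith
  have h4 : ∑ p ∈ T, N * (19 * (L + 2) * (Real.log p / (p:ℝ) ^ 2)) ≤ N * (19 * (L + 2) * ((Real.log y + 2) / y)) := by
    rw [← Finset.mul_sum, ← Finset.mul_sum]
    gcongr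
    calc ∑ p ∈ T, Real.log p / (p:ℝ) ^ 2 ≤ ∑ n ∈ Finset.Ioc y N, Real.log n / (n:ℝ) ^ 2 := by
          apply Finset.sum_le_sum_of_subset_of_nonneg (Finset.filter_subset _ _)
          intro n hn _
          have : 1 ≤ n := by have := Finset.mem_Ioc.1 hn; omega
          have : 0 ≤ Real.log n := Real.log_nonneg (by exact_mod_cast this)
          positivity
      _ ≤ _ := tail_sum y N (by omega) hyN
      _ ≤ _ := by
          have : 0 ≤ Real.log N := Real.log_nonneg (by exact_mod_cast (by omega : 1 ≤ N))
          have : 0 ≤ (Real.log N + 2) / N := by positivity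
          linarith
  linarith

end CycAux

open Filter Asymptotics Real
namespace CycAux

lemma turan (M : ℕ) (Q : Finset ℕ) (hQ : ∀ q ∈ Q, q.Prime ∧ q ≤ M) (S : ℝ) (hS : S = ∑ q ∈ Q, 1 / (q:ℝ))
    (hS0 : 0 < S) :
    (((Finset.Ioc 0 M).filter (fun m => ∀ q ∈ Q, ¬ q ∣ m)).card : ℝ) ≤ 3 * M / S := by
  classical
  set I := Finset.Ioc 0 M with hI
  set w : ℕ → ℝ := fun m => ∑ q ∈ Q, if q ∣ m then (1:ℝ) else 0 with hw
  have hcount : ∀ d : ℕ, ∑ m ∈ I, (if d ∣ m then (1:ℝ) else 0) = (M / d : ℕ) := by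
    intro d
    rw [Finset.sum_boole, Nat.Ioc_filter_dvd_card_eq_div]
  have h1 : M * S - Q.card ≤ ∑ m ∈ I, w m := by
    rw [hw, Finset.sum_comm]
    simp_rw [hcount]
    rw [hS, Finset.mul_sum, Finset.card_eq_sum_ones, Nat.cast_sum, ← Finset.sum_sub_distrib]
    apply Finset.sum_le_sum
    intro q hq
    rw [← Nat.floor_div_eq_div (K := ℝ)]
    have := Nat.lt_floor_add_one ((M:ℝ) / q)
    rw [mul_one_div]; push_cast; linarith
  have h2 : ∑ m ∈ I, w m ^ 2 ≤ M * S ^ 2 + M * S := by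
    have e : ∀ m, w m ^ 2 = ∑ q ∈ Q, ∑ r ∈ Q, if q ∣ m ∧ r ∣ m then (1:ℝ) else 0 := by
      intro m
      rw [sq, hw, Finset.sum_mul_sum]
      refine Finset.sum_congr rfl fun q _ => Finset.sum_congr rfl fun r _ => ?_
      by_cases hq : q ∣ m <;> by_cases hr : r ∣ m <;> simp [hq, hr]
    simp_rw [e]
    rw [Finset.sum_comm]
    have e2 : ∀ q ∈ Q, ∑ m ∈ I, ∑ r ∈ Q, (if q ∣ m ∧ r ∣ m then (1:ℝ) else 0) ≤ M * (1/q) * S + M * (1 / q) := by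
      intro q hq
      rw [Finset.sum_comm, ← Finset.add_sum_erase _ _ hq, add_comm]
      apply add_le_add
      · calc _ ≤ ∑ r ∈ Q.erase q, M * (1 / (q:ℝ)) * (1 / r) := by
              apply Finset.sum_le_sum
              intro r hr
              obtain ⟨hne, hrQ⟩ := Finset.mem_erase.1 hr
              have hc : Nat.Coprime q r := (Nat.coprime_primes (hQ q hq).1 (hQ r hrQ).1).2 (Ne.symm hne)
              have : ∀ m, (q ∣ m ∧ r ∣ m) ↔ q * r ∣ m := fun m =>
                ⟨fun h => hc.mul_dvd_of_dvd_of_dvd h.1 h.2, fun h => ⟨dvd_of_mul_right_dvd h, dvd_of_mul_left_dvd h⟩⟩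
              simp_rw [this]
              rw [hcount]
              have h3 : ((M / (q * r) : ℕ) : ℝ) ≤ M / (q * r : ℕ) := Nat.cast_div_le
              refine h3.trans (le_of_eq ?_)
              push_cast
              rw [mul_assoc, one_div_mul_one_div, mul_one_div]
          _ ≤ ∑ r ∈ Q, M * (1 / (q:ℝ)) * (1 / r) := by
              apply Finset.sum_le_sum_of_subset_of_nonneg (Finset.erase_subset _ _)
              intros; positivity
          _ = _ := by rw [← Finset.mul_sum, hS]
      · simp only [and_self]
        rw [hcount, mul_one_div]
        exact Nat.cast_div_le
    refine (Finset.sum_le_sum e2).trans (le_of_eq ?_)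
    rw [Finset.sum_add_distrib, ← Finset.sum_mul, ← Finset.mul_sum, ← hS]
    ring
  have hcard : (Q.card : ℝ) ≤ M := by
    have : Q ⊆ Finset.Ioc 0 M := fun q hq => Finset.mem_Ioc.2 ⟨(hQ q hq).1.pos, (hQ q hq).2⟩
    have := Finset.card_le_card this
    rw [Nat.card_Ioc, Nat.sub_zero] at this
    exact_mod_cast this
  have h3 : ∑ m ∈ I, (w m - S) ^ 2 ≤ 3 * M * S := by
    have : ∑ m ∈ I, (w m - S) ^ 2 = ∑ m ∈ I, w m ^ 2 - 2 * S * ∑ m ∈ I, w m + M * S ^ 2 := by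
      simp_rw [sub_sq]
      rw [Finset.sum_add_distrib, Finset.sum_sub_distrib, Finset.mul_sum]
      simp only [Finset.sum_const, hI, Nat.card_Ioc, Nat.sub_zero, nsmul_eq_mul]
      congr 2
      exact Finset.sum_congr rfl fun m _ => by ring
    rw [this]
    nlinarith [mul_le_mul_of_nonneg_left h1 hS0.le, mul_le_mul_of_nonneg_left hcard hS0.le]
  have h4 : ((I.filter (fun m => ∀ q ∈ Q, ¬ q ∣ m)).card : ℝ) * S ^ 2 ≤ ∑ m ∈ I, (w m - S) ^ 2 := by
    rw [← nsmul_eq_mul, ← Finset.sum_const]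
    calc _ ≤ ∑ m ∈ I.filter (fun m => ∀ q ∈ Q, ¬ q ∣ m), (w m - S) ^ 2 := by
          apply Finset.sum_le_sum
          intro m hm
          have hm2 := (Finset.mem_filter.1 hm).2
          have : w m = 0 := Finset.sum_eq_zero fun q hq => if_neg (hm2 q hq)
          rw [this]; ring_nf; exact le_rfl
      _ ≤ _ := by
          apply Finset.sum_le_sum_of_subset_of_nonneg (Finset.filter_subset _ _)
          intros; positivity
  rw [le_div_iff₀ hS0]
  have := h4.trans h3
  nlinarith

end CycAux

open Filter Asymptotics Real
namespace CycAux

lemma abel_bound (a : ℕ → ℂ) (P : ℝ) (hA : ∀ n, ‖∑ m ∈ Finset.range n, a m‖ ≤ P) (f : ℕ → ℝ) (V : ℝ)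
    (hV : ∀ N, ∑ n ∈ Finset.range N, |f (n+1) - f n| ≤ V) (N : ℕ) :
    ‖∑ n ∈ Finset.range N, (f n : ℂ) * a n‖ ≤ P * (|f 0| + 2 * V) := by
  have hP : 0 ≤ P := (norm_nonneg _).trans (hA 0)
  have hV0 : 0 ≤ V := by simpa using hV 0
  have h := Finset.sum_range_by_parts (fun n => (f n : ℂ)) a N
  simp only [smul_eq_mul] at h
  rw [h]
  have hf : |f (N-1)| ≤ |f 0| + V := by
    have h1 := Finset.sum_range_sub f (N-1)
    have h2 := Finset.abs_sum_le_sum_abs (fun n => f (n+1) - f n) (Finset.range (N-1))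
    rw [h1] at h2
    have h3 := hV (N-1)
    have h4 := abs_sub_abs_le_abs_sub (f (N-1)) (f 0)
    linarith
  have t1 : ‖(f (N-1) : ℂ) * ∑ i ∈ Finset.range N, a i‖ ≤ (|f 0| + V) * P := by
    rw [norm_mul, Complex.norm_real, Real.norm_eq_abs]
    exact mul_le_mul hf (hA N) (norm_nonneg _) (by positivity)
  have t2 : ‖∑ i ∈ Finset.range (N-1), ((f (i+1) : ℂ) - f i) * ∑ j ∈ Finset.range (i+1), a j‖ ≤ V * P := by
    calc _ ≤ ∑ i ∈ Finset.range (N-1), |f (i+1) - f i| * P := by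
          refine norm_sum_le_of_le _ fun i _ => ?_
          rw [norm_mul, ← Complex.ofReal_sub, Complex.norm_real, Real.norm_eq_abs]
          exact mul_le_mul_of_nonneg_left (hA _) (abs_nonneg _)
      _ = (∑ i ∈ Finset.range (N-1), |f (i+1) - f i|) * P := by rw [Finset.sum_mul]
      _ ≤ _ := mul_le_mul_of_nonneg_right (hV _) hP
  refine (norm_sub_le _ _).trans ?_
  linarith

noncomputable def ZZ : ℝ := ∑' n : ℕ, ((n:ℝ)+1) ^ (-(3/2) : ℝ)

lemma summable_ZZ : Summable (fun n : ℕ => ((n:ℝ)+1) ^ (-(3/2) : ℝ)) := by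
  have := (summable_nat_add_iff 1).2 (Real.summable_nat_rpow (p := -(3/2)) |>.2 (by norm_num))
  simpa using this

lemma ZZ_nonneg : 0 ≤ ZZ := tsum_nonneg fun n => by positivity

lemma abel_deriv (a : ℕ → ℂ) (P : ℝ) (hA : ∀ n, ‖∑ m ∈ Finset.range n, a m‖ ≤ P) (f f' : ℝ → ℝ) (c : ℝ)
    (hc : 0 ≤ c)
    (hf : ∀ x, 1 ≤ x → HasDerivAt f (f' x) x) (hf' : ∀ x, 1 ≤ x → |f' x| ≤ c * x ^ (-(3/2) : ℝ)) (N : ℕ) :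
    ‖∑ n ∈ Finset.range N, (f ((n:ℝ)+1) : ℂ) * a n‖ ≤ P * (|f 1| + 2 * (c * ZZ)) := by
  have := abel_bound a P hA (fun n => f ((n:ℝ)+1)) (c * ZZ) ?_ N
  · simpa using this
  · intro N
    calc _ ≤ ∑ n ∈ Finset.range N, c * ((n:ℝ)+1) ^ (-(3/2) : ℝ) := by
          apply Finset.sum_le_sum
          intro n _
          have hn : (0:ℝ) ≤ n := n.cast_nonneg
          have := (convex_Icc ((n:ℝ)+1) (n+1+1)).norm_image_sub_le_of_norm_hasDerivWithin_le
            (f := f) (f' := f') (C := c * ((n:ℝ)+1) ^ (-(3/2) : ℝ)) (x := (n:ℝ)+1) (y := n+1+1)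
            (fun x hx => (hf x (by linarith [hx.1])).hasDerivWithinAt)
            (fun x hx => by
              rw [Real.norm_eq_abs]
              refine (hf' x (by linarith [hx.1])).trans ?_
              apply mul_le_mul_of_nonneg_left _ hc
              apply Real.rpow_le_rpow_of_nonpos (by linarith) hx.1 (by norm_num))
            ⟨le_rfl, by linarith⟩ ⟨by linarith, le_rfl⟩
          rw [Real.norm_eq_abs, Real.norm_eq_abs, add_sub_cancel_left, abs_one, mul_one] at this
          push_cast
          exact this
      _ = c * ∑ n ∈ Finset.range N, ((n:ℝ)+1) ^ (-(3/2) : ℝ) := by rw [Finset.mul_sum]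
      _ ≤ _ := by
          gcongr
          exact summable_ZZ.sum_le_tsum _ (fun n _ => by positivity)

noncomputable def CZ : ℝ := 10 * ZZ + 1
lemma CZ_ge : 1 ≤ CZ := by have := ZZ_nonneg; unfold CZ; linarith

lemma hasDeriv_pow {η x : ℝ} (hx : 1 ≤ x) :
    HasDerivAt (fun x : ℝ => x ^ (-1-η)) (-(1+η) * x ^ (-2-η)) x := by
  have := Real.hasDerivAt_rpow_const (x := x) (p := -1-η) (Or.inl (by linarith))
  convert this using 1
  rw [show -1 - η - 1 = -2-η by ring, show -1-η = -(1+η) by ring]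

lemma abel_size (a : ℕ → ℂ) (P : ℝ) (hA : ∀ n, ‖∑ m ∈ Finset.range n, a m‖ ≤ P) {η : ℝ} (h0 : 0 ≤ η)
    (h1 : η ≤ 1) (N : ℕ) :
    ‖∑ n ∈ Finset.range N, ((((n:ℝ)+1) ^ (-1-η) : ℝ) : ℂ) * a n‖ ≤ CZ * P := by
  have hP : 0 ≤ P := (norm_nonneg _).trans (hA 0)
  have := abel_deriv a P hA (fun x => x ^ (-1-η)) (fun x => -(1+η) * x ^ (-2-η)) 2 (by norm_num)
    (fun x hx => hasDeriv_pow hx) (fun x hx => by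
      rw [abs_mul, abs_neg, abs_of_nonneg (by linarith : 0 ≤ 1 + η), abs_of_nonneg (by positivity)]
      have : x ^ (-2-η) ≤ x ^ (-(3/2):ℝ) := Real.rpow_le_rpow_of_exponent_le hx (by linarith)
      gcongr
      linarith) N
  refine this.trans ?_
  rw [Real.one_rpow, abs_one, mul_comm]
  gcongr
  have := ZZ_nonneg
  unfold CZ; linarith

lemma abel_diff (a : ℕ → ℂ) (P : ℝ) (hA : ∀ n, ‖∑ m ∈ Finset.range n, a m‖ ≤ P) {η η' : ℝ} (h0 : 0 ≤ η)
    (h1 : η ≤ η') (h2 : η' ≤ 1) (N : ℕ) :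
    ‖∑ n ∈ Finset.range N, ((((n:ℝ)+1) ^ (-1-η) - ((n:ℝ)+1) ^ (-1-η') : ℝ) : ℂ) * a n‖ ≤ CZ * P * (η' - η) := by
  have hP : 0 ≤ P := (norm_nonneg _).trans (hA 0)
  have hδ : 0 ≤ η' - η := by linarith
  have := abel_deriv a P hA (fun x => x ^ (-1-η) - x ^ (-1-η'))
    (fun x => -(1+η) * x ^ (-2-η) - -(1+η') * x ^ (-2-η')) (5 * (η' - η)) (by positivity)
    (fun x hx => (hasDeriv_pow hx).sub (hasDeriv_pow hx)) (fun x hx => ?_) N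
  · refine this.trans ?_
    rw [Real.one_rpow, Real.one_rpow, sub_self, abs_zero]
    have : P * (0 + 2 * (5 * (η' - η) * ZZ)) = (10 * ZZ) * P * (η' - η) := by ring
    rw [this]
    gcongr
    unfold CZ; linarith
  · have hx0 : 0 < x := by linarith
    set δ := η' - η with hδd
    have e1 : x ^ (-2-η') = x ^ (-2-η) * x ^ (-δ) := by
      rw [← Real.rpow_add hx0]; congr 1; rw [hδd]; ring
    have e2 : x ^ (-2-η) ≤ x ^ (-2:ℝ) := Real.rpow_le_rpow_of_exponent_le hx (by linarith)
    have e3 : 1 - x ^ (-δ) ≤ δ * Real.log x := by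
      rw [Real.rpow_def_of_pos hx0]
      have := Real.add_one_le_exp (Real.log x * -δ)
      linarith
    have e4 : x ^ (-δ) ≤ 1 := Real.rpow_le_one_of_one_le_of_nonpos hx (by linarith)
    have e5 : Real.log x ≤ 2 * x ^ (1/2:ℝ) := by
      have := Real.log_le_rpow_div hx0.le (by norm_num : (0:ℝ) < 1/2)
      linarith
    have e6 : x ^ (-2:ℝ) * x ^ (1/2:ℝ) = x ^ (-(3/2):ℝ) := by rw [← Real.rpow_add hx0]; norm_num
    have e7 : x ^ (-2:ℝ) ≤ x ^ (-(3/2):ℝ) := Real.rpow_le_rpow_of_exponent_le hx (by norm_num)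
    have hr : -(1+η) * x ^ (-2-η) - -(1+η') * x ^ (-2-η') =
        δ * (x ^ (-2-η) * x ^ (-δ)) - (1+η) * (x ^ (-2-η) * (1 - x ^ (-δ))) := by
      rw [e1, hδd]; ring
    have hlog : 0 ≤ Real.log x := Real.log_nonneg hx
    have hpos : 0 ≤ x ^ (-2-η) := by positivity
    have hpos2 : 0 ≤ x ^ (-δ) := by positivity
    have A : x ^ (-2-η) * x ^ (-δ) ≤ x ^ (-(3/2):ℝ) := by
      calc x ^ (-2-η) * x ^ (-δ) ≤ x ^ (-2-η) * 1 := by gcongr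
        _ ≤ _ := by linarith
    have B : x ^ (-2-η) * (1 - x ^ (-δ)) ≤ δ * (2 * x ^ (-(3/2):ℝ)) := by
      calc x ^ (-2-η) * (1 - x ^ (-δ)) ≤ x ^ (-2:ℝ) * (δ * (2 * x ^ (1/2:ℝ))) := by
            apply mul_le_mul e2 _ (by linarith) (by positivity)
            exact e3.trans (by gcongr)
        _ = δ * (2 * (x ^ (-2:ℝ) * x ^ (1/2:ℝ))) := by ring
        _ = _ := by rw [e6]
    have B0 : 0 ≤ x ^ (-2-η) * (1 - x ^ (-δ)) := mul_nonneg hpos (by linarith)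
    have C1 : (1+η) * (x ^ (-2-η) * (1 - x ^ (-δ))) ≤ 2 * (δ * (2 * x ^ (-(3/2):ℝ))) := by
      apply mul_le_mul (by linarith) B B0 (by norm_num)
    have D1 : δ * (x ^ (-2-η) * x ^ (-δ)) ≤ δ * x ^ (-(3/2):ℝ) := by gcongr
    have D0 : 0 ≤ δ * (x ^ (-2-η) * x ^ (-δ)) := by positivity
    have C0 : 0 ≤ (1+η) * (x ^ (-2-η) * (1 - x ^ (-δ))) := mul_nonneg (by linarith) B0
    rw [hr, abs_le]
    constructor <;> nlinarith

lemma char_sum_period {p : ℕ} [NeZero p] (χ : DirichletCharacter ℂ p) (hχ : χ ≠ 1) :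
    ∑ m ∈ Finset.range p, χ (m : ZMod p) = 0 := by
  have h := MulChar.sum_eq_zero_of_ne_one hχ
  rw [← h]
  refine Finset.sum_nbij' (fun m : ℕ => (m : ZMod p)) (fun a => a.val) ?_ ?_ ?_ ?_ ?_
  · simp
  · intro a _; exact Finset.mem_range.2 (ZMod.val_lt a)
  · intro m hm; exact ZMod.val_cast_of_lt (Finset.mem_range.1 hm)
  · intro a _; simp
  · simp

lemma char_sum_le {p : ℕ} [NeZero p] (χ : DirichletCharacter ℂ p) (hχ : χ ≠ 1) (n : ℕ) :
    ‖∑ m ∈ Finset.range n, χ (m : ZMod p)‖ ≤ p := by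
  induction n using Nat.strong_induction_on with
  | _ n ih =>
    rcases lt_or_ge n p with h | h
    · calc _ ≤ ∑ m ∈ Finset.range n, (1:ℝ) := norm_sum_le_of_le _ fun m _ => DirichletCharacter.norm_le_one χ _
        _ = n := by simp
        _ ≤ p := by exact_mod_cast h.le
    · obtain ⟨k, rfl⟩ := Nat.exists_eq_add_of_le h
      rw [Finset.sum_range_add, char_sum_period χ hχ, zero_add]
      have := ih k (by have := NeZero.pos p; omega)
      simpa using this

lemma char_sum_le' {p : ℕ} [NeZero p] (hp : p ≠ 1) (χ : DirichletCharacter ℂ p) (hχ : χ ≠ 1) (n : ℕ) :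
    ‖∑ m ∈ Finset.range n, χ ((m+1 : ℕ) : ZMod p)‖ ≤ p := by
  have := char_sum_le χ hχ (n+1)
  rw [Finset.sum_range_succ'] at this
  have h0 : χ ((0:ℕ) : ZMod p) = 0 := by
    have : Fact (1 < p) := ⟨by have := NeZero.pos p; omega⟩
    rw [Nat.cast_zero]
    exact MulChar.map_zero χ
  rwa [h0, add_zero] at this

end CycAux

open Filter Asymptotics Real
namespace CycAux

/-- L-value at `1+η` -/
noncomputable def LV {p : ℕ} (χ : DirichletCharacter ℂ p) (η : ℝ) : ℂ :=
  LSeries (fun n => χ (n : ZMod p)) (1 + (η:ℂ))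

lemma hasSum_LV {p : ℕ} (χ : DirichletCharacter ℂ p) {η : ℝ} (hη : 0 < η) :
    HasSum (fun n : ℕ => ((((n:ℝ)+1) ^ (-1-η) : ℝ) : ℂ) * χ ((n+1 : ℕ) : ZMod p)) (LV χ η) := by
  have h := (DirichletCharacter.LSeriesSummable_of_one_lt_re χ (s := 1 + (η:ℂ)) (by simpa using hη)).hasSum
  rw [← hasSum_nat_add_iff' 1] at h
  simp only [Finset.range_one, Finset.sum_singleton, LSeries.term_zero, sub_zero] at h
  suffices hh : (fun n : ℕ => ((((n:ℝ)+1) ^ (-1-η) : ℝ) : ℂ) * χ ((n+1 : ℕ) : ZMod p)) =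
      fun n => LSeries.term (fun n => χ (n : ZMod p)) (1 + (η:ℂ)) (n + 1) by
    rw [hh]; exact h
  funext n
  have hn : (0:ℝ) ≤ (n:ℝ) + 1 := by positivity
  rw [LSeries.term_of_ne_zero (by omega), Complex.ofReal_cpow hn, div_eq_mul_inv, ← Complex.cpow_neg, mul_comm]
  congr 2
  · push_cast; rfl
  · push_cast; ring

lemma pow_tele {η x : ℝ} (hη : 0 < η) (hx : 1 ≤ x) :
    η * (x+1) ^ (-1-η) ≤ x ^ (-η) - (x+1) ^ (-η) ∧ x ^ (-η) - (x+1) ^ (-η) ≤ η * x ^ (-1-η) := by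
  have hx0 : 0 < x := by linarith
  have hx1 : 0 < x + 1 := by linarith
  have e1 : x ^ (-1-η) = x ^ (-η) * x⁻¹ := by
    rw [← Real.rpow_neg_one, ← Real.rpow_add hx0]; congr 1; ring
  have e2 : (x+1) ^ (-1-η) = (x+1) ^ (-η) * (x+1)⁻¹ := by
    rw [← Real.rpow_neg_one, ← Real.rpow_add hx1]; congr 1; ring
  have hl : Real.log (x+1) - Real.log x = Real.log (1 + x⁻¹) := by
    rw [← Real.log_div hx1.ne' hx0.ne']; congr 1; field_simp
  have hl1 : Real.log (1 + x⁻¹) ≤ x⁻¹ := by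
    have := Real.log_le_sub_one_of_pos (x := 1 + x⁻¹) (by positivity)
    linarith
  have hl2 : (x+1)⁻¹ ≤ Real.log (1 + x⁻¹) := by
    have := Real.one_sub_inv_le_log_of_pos (x := 1 + x⁻¹) (by positivity)
    have e : 1 - (1 + x⁻¹)⁻¹ = (x+1)⁻¹ := by field_simp; ring
    linarith
  have hpx : 0 < x ^ (-η) := by positivity
  have hpx1 : 0 < (x+1) ^ (-η) := by positivity
  constructor
  · have e3 : x ^ (-η) = (x+1) ^ (-η) * Real.exp (η * Real.log (1 + x⁻¹)) := by
      rw [Real.rpow_def_of_pos hx0, Real.rpow_def_of_pos hx1, ← Real.exp_add, ← hl]; congr 1; ring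
    have := Real.add_one_le_exp (η * Real.log (1 + x⁻¹))
    rw [e2]
    have h4 : η * (x+1)⁻¹ ≤ Real.exp (η * Real.log (1 + x⁻¹)) - 1 := by nlinarith
    calc η * ((x+1) ^ (-η) * (x+1)⁻¹) = (x+1) ^ (-η) * (η * (x+1)⁻¹) := by ring
      _ ≤ (x+1) ^ (-η) * (Real.exp (η * Real.log (1 + x⁻¹)) - 1) := by gcongr
      _ = _ := by rw [e3]; ring
  · have e3 : (x+1) ^ (-η) = x ^ (-η) * Real.exp (-(η * Real.log (1 + x⁻¹))) := by
      rw [Real.rpow_def_of_pos hx0, Real.rpow_def_of_pos hx1, ← Real.exp_add, ← hl]; congr 1; ring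
    have := Real.add_one_le_exp (-(η * Real.log (1 + x⁻¹)))
    rw [e1]
    have h4 : 1 - Real.exp (-(η * Real.log (1 + x⁻¹))) ≤ η * x⁻¹ := by nlinarith
    calc x ^ (-η) - (x+1) ^ (-η) = x ^ (-η) * (1 - Real.exp (-(η * Real.log (1 + x⁻¹)))) := by
          rw [e3]; ring
      _ ≤ x ^ (-η) * (η * x⁻¹) := by gcongr
      _ = _ := by ring

lemma hasSum_tele {η x : ℝ} (hη : 0 < η) (hx : 1 ≤ x) :
    HasSum (fun n : ℕ => (x + n) ^ (-η) - (x + n + 1) ^ (-η)) (x ^ (-η)) := by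
  rw [hasSum_iff_tendsto_nat_of_nonneg]
  · have : ∀ n : ℕ, ∑ i ∈ Finset.range n, ((x + i) ^ (-η) - (x + i + 1) ^ (-η)) = x ^ (-η) - (x + n) ^ (-η) := by
      intro n
      have := Finset.sum_range_sub' (fun i : ℕ => (x + i) ^ (-η)) n
      simp only [Nat.cast_add, Nat.cast_one, Nat.cast_zero, add_zero, ← add_assoc] at this
      exact this
    simp_rw [this]
    have h2 : Tendsto (fun n : ℕ => (x + n) ^ (-η)) atTop (nhds 0) :=
      (tendsto_rpow_neg_atTop hη).comp (tendsto_atTop_add_const_left _ _ tendsto_natCast_atTop_atTop)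
    simpa using h2.const_sub (x ^ (-η))
  · intro n
    have hn : (0:ℝ) ≤ n := n.cast_nonneg
    have := (pow_tele hη (x := x + n) (by linarith)).1
    have : 0 ≤ η * (x + n + 1) ^ (-1-η) := by
      have : 0 ≤ x + n + 1 := by linarith
      positivity
    linarith

lemma summable_pow {η : ℝ} (hη : 0 < η) : Summable (fun n : ℕ => ((n:ℝ)+1) ^ (-1-η)) := by
  have := (summable_nat_add_iff 1).2 (Real.summable_nat_rpow (p := -1-η) |>.2 (by linarith))
  simpa using this

/-- tail bound -/
lemma tail_pow {η x : ℝ} (hη : 0 < η) (hx : 1 ≤ x) :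
    Summable (fun n : ℕ => (x + n + 1) ^ (-1-η)) ∧ ∑' n : ℕ, (x + n + 1) ^ (-1-η) ≤ x ^ (-η) / η := by
  have h1 := (hasSum_tele hη hx).div_const η
  have hle : ∀ n : ℕ, (x + n + 1) ^ (-1-η) ≤ ((x + n) ^ (-η) - (x + n + 1) ^ (-η)) / η := by
    intro n
    have hn : (0:ℝ) ≤ n := n.cast_nonneg
    rw [le_div_iff₀ hη, mul_comm]
    exact (pow_tele hη (x := x + n) (by linarith)).1
  have hs : Summable (fun n : ℕ => (x + n + 1) ^ (-1-η)) :=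
    Summable.of_nonneg_of_le (fun n => by
      have : (0:ℝ) ≤ x + n + 1 := by positivity
      positivity) hle h1.summable
  refine ⟨hs, ?_⟩
  rw [← h1.tsum_eq]
  exact hs.tsum_le_tsum hle h1.summable

lemma zeta_lower {η : ℝ} (hη : 0 < η) : 1 / η ≤ ∑' n : ℕ, ((n:ℝ)+1) ^ (-1-η) := by
  have h1 := (hasSum_tele hη le_rfl).div_const η
  rw [Real.one_rpow] at h1
  rw [← h1.tsum_eq]
  refine h1.summable.tsum_le_tsum (fun n => ?_) (summable_pow hη)
  have hn : (0:ℝ) ≤ n := n.cast_nonneg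
  rw [div_le_iff₀ hη, mul_comm, add_comm (1:ℝ)]
  exact (pow_tele hη (x := n + 1) (by linarith)).2

lemma zeta_upper {η : ℝ} (hη : 0 < η) (h1 : η ≤ 1) : ∑' n : ℕ, ((n:ℝ)+1) ^ (-1-η) ≤ 2 / η := by
  rw [(summable_pow hη).tsum_eq_zero_add]
  have := (tail_pow hη le_rfl).2
  rw [Real.one_rpow] at this
  have e : ∑' n : ℕ, (((n+1:ℕ):ℝ)+1) ^ (-1-η) = ∑' n : ℕ, (1 + (n:ℝ) + 1) ^ (-1-η) := by
    refine tsum_congr fun n => ?_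
    push_cast; rw [add_comm (1:ℝ)]
  rw [e]
  have h2 : 1 ≤ 1 / η := by rw [le_div_iff₀ hη]; linarith
  have e3 : 2 / η = 1 / η + 1 / η := by ring
  have e4 : (((0:ℕ):ℝ)+1) ^ (-1-η) = 1 := by simp
  rw [e4]
  linarith

lemma LV_le_zeta {p : ℕ} (χ : DirichletCharacter ℂ p) {η : ℝ} (hη : 0 < η) (h1 : η ≤ 1) :
    ‖LV χ η‖ ≤ 2 / η := by
  refine le_trans ?_ (zeta_upper hη h1)
  rw [← (hasSum_LV χ hη).tsum_eq]
  refine tsum_of_norm_bounded (summable_pow hη).hasSum fun n => ?_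
  rw [norm_mul, Complex.norm_real, Real.norm_eq_abs, abs_of_nonneg (by positivity)]
  exact mul_le_of_le_one_right (by positivity) (DirichletCharacter.norm_le_one χ _)

lemma LV_le {p : ℕ} [NeZero p] (hp : p ≠ 1) (χ : DirichletCharacter ℂ p) (hχ : χ ≠ 1) {η : ℝ} (hη : 0 < η)
    (h1 : η ≤ 1) : ‖LV χ η‖ ≤ CZ * p := by
  refine le_of_tendsto' (hasSum_LV χ hη).tendsto_sum_nat.norm fun N => ?_
  exact abel_size _ p (char_sum_le' hp χ hχ) hη.le h1 N

lemma LV_diff {p : ℕ} [NeZero p] (hp : p ≠ 1) (χ : DirichletCharacter ℂ p) (hχ : χ ≠ 1) {η η' : ℝ} (hη : 0 < η)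
    (h1 : η ≤ η') (h2 : η' ≤ 1) : ‖LV χ η - LV χ η'‖ ≤ CZ * p * (η' - η) := by
  have := ((hasSum_LV χ hη).sub (hasSum_LV χ (hη.trans_le h1))).tendsto_sum_nat.norm
  refine le_of_tendsto' this fun N => ?_
  have := abel_diff _ p (char_sum_le' hp χ hχ) hη.le h1 h2 N
  refine le_trans (le_of_eq ?_) this
  congr 1
  refine Finset.sum_congr rfl fun n _ => ?_
  push_cast; ring

lemma LV_one_lower {p : ℕ} [NeZero p] (hp : p ≠ 1) {η : ℝ} (hη : 0 < η) (h1 : η ≤ 1) :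
    1 / ((p:ℝ) ^ 2 * η) ≤ ‖LV (1 : DirichletCharacter ℂ p) η‖ := by
  have hp1 : 1 < p := by have := NeZero.pos p; omega
  have hp0 : (1:ℝ) < p := by exact_mod_cast hp1
  have hre := Complex.hasSum_re (hasSum_LV (1 : DirichletCharacter ℂ p) hη)
  refine le_trans ?_ ((le_abs_self _).trans (Complex.abs_re_le_norm _))
  have hz := ((summable_pow hη).hasSum.mul_left ((p:ℝ) ^ (-1-η)))
  have hlow : 1 / ((p:ℝ) ^ 2 * η) ≤ (p:ℝ) ^ (-1-η) * ∑' n : ℕ, ((n:ℝ)+1) ^ (-1-η) := by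
    have a1 : (p:ℝ) ^ (-2:ℝ) ≤ (p:ℝ) ^ (-1-η) := Real.rpow_le_rpow_of_exponent_le hp0.le (by linarith)
    have a2 : (p:ℝ) ^ (-2:ℝ) = 1 / (p:ℝ)^2 := by
      rw [Real.rpow_neg (by linarith), one_div]; norm_cast
    calc 1 / ((p:ℝ) ^ 2 * η) = (p:ℝ) ^ (-2:ℝ) * (1 / η) := by rw [a2]; field_simp
      _ ≤ _ := by
        gcongr
        exact zeta_lower hη
  refine hlow.trans ?_
  have hval : ∀ n : ℕ, (((((n:ℝ)+1) ^ (-1-η) : ℝ) : ℂ) * (1 : DirichletCharacter ℂ p) ((n+1 : ℕ) : ZMod p)).re =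
      ((n:ℝ)+1) ^ (-1-η) * ((1 : DirichletCharacter ℂ p) ((n+1 : ℕ) : ZMod p)).re := fun n => by
    rw [Complex.re_ofReal_mul]
  refine hasSum_le_inj (fun k : ℕ => p * k) ?_ ?_ ?_ hz hre
  · intro a b hab
    exact Nat.eq_of_mul_eq_mul_left (NeZero.pos p) hab
  · intro n _
    rw [hval]
    have : 0 ≤ ((1 : DirichletCharacter ℂ p) ((n+1 : ℕ) : ZMod p)).re := by
      by_cases hu : IsUnit ((n+1 : ℕ) : ZMod p)
      · rw [MulChar.one_apply hu]; simp
      · rw [MulChar.map_nonunit _ hu]; simp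
    positivity
  · intro k
    rw [hval]
    have : ((1 : DirichletCharacter ℂ p) ((p * k + 1 : ℕ) : ZMod p)) = 1 := by
      simp
    rw [this, Complex.one_re, mul_one, ← Real.mul_rpow (by positivity) (by positivity)]
    apply Real.rpow_le_rpow_of_nonpos (by positivity) _ (by linarith)
    push_cast
    nlinarith

end CycAux

open Filter Asymptotics Real
namespace CycAux

lemma LV_lower_nonreal {p : ℕ} [NeZero p] (hp : p ≠ 1) (χ : DirichletCharacter ℂ p) (hχ : χ ≠ 1)
    (hχ2 : χ ^ 2 ≠ 1) {η : ℝ} (hη : 0 < η) (h1 : η ≤ 1 / (128 * (CZ * p) ^ 5)) :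
    1 / (128 * (CZ * p) ^ 4) ≤ ‖LV χ η‖ := by
  have hp1 : (1:ℝ) ≤ p := by exact_mod_cast Nat.one_le_iff_ne_zero.mpr (NeZero.ne p)
  have hB : 1 ≤ CZ * p := by nlinarith [CZ_ge]
  set B : ℝ := CZ * p with hBdef
  set x : ℝ := 1 / (128 * B ^ 5) with hx
  have hB0 : 0 < B := by linarith
  have hx0 : 0 < x := by positivity
  have hB5 : 1 ≤ B ^ 5 := one_le_pow₀ hB
  have hx1 : x ≤ 1 := by
    rw [hx, div_le_one (by positivity)]; linarith
  have key := DirichletCharacter.norm_LSeries_product_ge_one χ hx0 0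
  have key2 : 1 ≤ ‖LV (1 : DirichletCharacter ℂ p) x‖ ^ 3 * ‖LV χ x‖ ^ 4 * ‖LV (χ^2) x‖ := by
    simpa [LV, norm_mul, norm_pow] using key
  have e1 := LV_le_zeta (1 : DirichletCharacter ℂ p) hx0 hx1
  have e2 := LV_le hp (χ^2) hχ2 hx0 hx1
  have e3 := LV_diff hp χ hχ hη h1 hx1
  rw [← hBdef] at e2 e3
  have hL : 2 * B * x ≤ ‖LV χ x‖ := by
    by_contra hcon
    push Not at hcon
    have : ‖LV χ x‖ ^ 4 < (2 * B * x) ^ 4 := by gcongr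
    have h5 : ‖LV (1 : DirichletCharacter ℂ p) x‖ ^ 3 * ‖LV χ x‖ ^ 4 * ‖LV (χ^2) x‖ ≤ (2/x)^3 * ‖LV χ x‖ ^ 4 * B := by
      gcongr
    have h6 : (2/x)^3 * ‖LV χ x‖ ^ 4 * B < (2/x)^3 * (2 * B * x) ^ 4 * B := by
      gcongr
    have h7 : (2/x)^3 * (2 * B * x) ^ 4 * B = 1 := by
      have : x * (128 * B^5) = 1 := by rw [hx]; field_simp
      calc (2/x)^3 * (2 * B * x) ^ 4 * B = x * (128 * B^5) := by field_simp; ring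
        _ = 1 := this
    linarith
  have h8 : ‖LV χ x‖ ≤ ‖LV χ η‖ + ‖LV χ η - LV χ x‖ := by
    rw [norm_sub_rev]
    simpa using norm_add_le (LV χ η) (LV χ x - LV χ η)
  have h9 : 1 / (128 * B ^ 4) = B * x := by rw [hx]; field_simp
  rw [h9]
  nlinarith [mul_pos hB0 hη]

lemma geom_lower {s : ℝ} (hs : 0 ≤ s) (n : ℕ) :
    n * s ^ n ≤ s * ∑ i ∈ Finset.range n, (s^2) ^ i := by
  induction n using Nat.twoStepInduction with
  | zero => simp
  | one => simp
  | more n h1 _ =>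
    have e : ∑ i ∈ Finset.range (n+2), (s^2)^i = 1 + s^2 * ∑ i ∈ Finset.range n, (s^2) ^ i + (s^2)^(n+1) := by
      rw [Finset.sum_range_succ, Finset.sum_range_succ', Finset.mul_sum]
      simp only [pow_zero]
      rw [add_comm 1]
      congr 2
      exact Finset.sum_congr rfl fun i _ => by ring
    rw [e]
    have h2 : s^2 * (n * s^n) ≤ s^2 * (s * ∑ i ∈ Finset.range n, (s^2) ^ i) := by gcongr
    have h3 : 0 ≤ s * (1 - s^(n+1))^2 := by positivity
    push_cast
    calc ((n:ℝ)+2) * s^(n+2) = s^2 * (n * s^n) + 2 * s * s^(n+1) := by ring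
      _ ≤ s^2 * (s * ∑ i ∈ Finset.range n, (s^2) ^ i) + s * (1 + (s^2)^(n+1)) := by
          have : s * (1 + (s^2)^(n+1)) - 2 * s * s^(n+1) = s * (1 - s^(n+1))^2 := by ring
          linarith
      _ = _ := by ring

/-- Monsky's sequence -/
noncomputable def mb (t : ℝ) (n : ℕ) : ℝ := 1 / (((n:ℝ)+1) * (1-t)) - t^(n+1) / (1 - t^(n+1))

lemma mb_eq {t : ℝ} (h0 : 0 < t) (h1 : t < 1) (n : ℕ) :
    mb t n = (1/(1-t)) * (1/((n:ℝ)+1) - t^(n+1) / ∑ i ∈ Finset.range (n+1), t^i) := by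
  have hG : 0 < ∑ i ∈ Finset.range (n+1), t^i := Finset.sum_pos (fun i _ => by positivity) (by simp)
  have h2 : 1 - t^(n+1) = (1-t) * ∑ i ∈ Finset.range (n+1), t^i := by
    have := mul_neg_geom_sum t (n+1); linarith
  have h3 : 0 < 1 - t := by linarith
  rw [mb, h2]; field_simp

lemma mb_nonneg {t : ℝ} (h0 : 0 < t) (h1 : t < 1) (n : ℕ) : 0 ≤ mb t n := by
  have hG : 0 < ∑ i ∈ Finset.range (n+1), t^i := Finset.sum_pos (fun i _ => by positivity) (by simp)
  have h3 : 0 < 1 - t := by linarith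
  rw [mb_eq h0 h1]
  refine mul_nonneg (by positivity) ?_
  rw [sub_nonneg, div_le_div_iff₀ hG (by positivity), one_mul]
  have : ∑ i ∈ Finset.range (n+1), t^(n+1) ≤ ∑ i ∈ Finset.range (n+1), t^i := by
    refine Finset.sum_le_sum fun i hi => ?_
    exact pow_le_pow_of_le_one h0.le h1.le (Finset.mem_range.mp hi).le
  simp at this
  linarith

lemma mb_anti {t : ℝ} (h0 : 0 < t) (h1 : t < 1) (n : ℕ) : mb t (n+1) ≤ mb t n := by
  have hG : 0 < ∑ i ∈ Finset.range (n+1), t^i := Finset.sum_pos (fun i _ => by positivity) (by simp)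
  have hG2 : 0 < ∑ i ∈ Finset.range (n+1+1), t^i := Finset.sum_pos (fun i _ => by positivity) (by simp)
  have h3 : 0 < 1 - t := by linarith
  rw [mb_eq h0 h1, mb_eq h0 h1]
  refine mul_le_mul_of_nonneg_left ?_ (by positivity)
  have e : ∑ i ∈ Finset.range (n+1+1), t^i = 1 + t * ∑ i ∈ Finset.range (n+1), t^i := by
    rw [Finset.sum_range_succ', Finset.mul_sum, pow_zero, add_comm]
    congr 1
    exact Finset.sum_congr rfl fun i _ => by ring
  obtain ⟨s, hs, rfl⟩ : ∃ s : ℝ, 0 < s ∧ s^2 = t := ⟨√t, by positivity, Real.sq_sqrt h0.le⟩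
  have hs1 : s ≤ 1 := by nlinarith
  have g1 := geom_lower hs.le (n+1)
  have g2 := geom_lower hs.le (n+1+1)
  set G := ∑ i ∈ Finset.range (n+1), (s^2)^i
  set H := ∑ i ∈ Finset.range (n+1+1), (s^2)^i
  have g3 : ((n:ℝ)+1) * ((n:ℝ)+2) * (s^2)^(n+1) ≤ G * H := by
    have : (((n+1:ℕ):ℝ) * s^(n+1)) * (((n+1+1:ℕ):ℝ) * s^(n+1+1)) ≤ (s * G) * (s * H) := by gcongr
    have h5 : s^2 * (((n:ℝ)+1) * ((n:ℝ)+2) * (s^2)^(n+1)) ≤ s^2 * (G * H) := by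
      push_cast at this
      calc s^2 * (((n:ℝ)+1) * ((n:ℝ)+2) * (s^2)^(n+1)) = s * ((((n:ℝ)+1) * s^(n+1)) * (((n:ℝ)+1+1) * s^(n+1+1))) := by ring
        _ ≤ 1 * ((((n:ℝ)+1) * s^(n+1)) * (((n:ℝ)+1+1) * s^(n+1+1))) := by gcongr
        _ ≤ (s * G) * (s * H) := by rw [one_mul]; exact this
        _ = _ := by ring
    exact le_of_mul_le_mul_left h5 (by positivity)
  have h6 : (s^2)^(n+1)/G - (s^2)^(n+1+1)/H = (s^2)^(n+1) / (G*H) := by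
    rw [div_sub_div _ _ hG.ne' hG2.ne']
    congr 1
    rw [e]; ring
  have h7 : (s^2)^(n+1) / (G*H) ≤ 1 / (((n:ℝ)+1) * ((n:ℝ)+2)) := by
    rw [div_le_div_iff₀ (by positivity) (by positivity)]; linarith
  have h8 : 1/((n:ℝ)+1) - 1/((n:ℝ)+2) = 1 / (((n:ℝ)+1) * ((n:ℝ)+2)) := by field_simp; ring
  push_cast
  have h9 : (n:ℝ)+1+1 = n + 2 := by ring
  rw [h9]
  linarith

lemma mb_sum_le {p : ℕ} [NeZero p] (hp : p ≠ 1) (χ : DirichletCharacter ℂ p) (hχ : χ ≠ 1) {t : ℝ}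
    (h0 : 0 < t) (h1 : t < 1) (N : ℕ) :
    ‖∑ n ∈ Finset.range N, (mb t n : ℂ) * χ ((n+1 : ℕ) : ZMod p)‖ ≤ 3 * p := by
  have hb0 : mb t 0 = 1 := by
    have h3 : 1 - t ≠ 0 := by linarith
    simp [mb]; field_simp
  have := abel_bound (fun m => χ ((m+1 : ℕ) : ZMod p)) p (char_sum_le' hp χ hχ) (mb t) 1 (fun N => by
    have : ∀ n ∈ Finset.range N, |mb t (n+1) - mb t n| = mb t n - mb t (n+1) := fun n _ => by
      rw [abs_sub_comm, abs_of_nonneg]; linarith [mb_anti h0 h1 n]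
    rw [Finset.sum_congr rfl this, Finset.sum_range_sub', hb0]
    linarith [mb_nonneg h0 h1 N]) N
  rw [hb0] at this
  refine this.trans (by norm_num; linarith)

lemma sum_div_swap (N : ℕ) (g : ℕ → ℕ → ℂ) :
    ∑ n ∈ Finset.Ioc 0 N, ∑ d ∈ n.divisors, g d n = ∑ d ∈ Finset.Ioc 0 N, ∑ e ∈ Finset.Ioc 0 (N/d), g d (d*e) := by
  have h1 : ∀ n ∈ Finset.Ioc 0 N, ∑ d ∈ n.divisors, g d n = ∑ d ∈ Finset.Ioc 0 N, if d ∣ n then g d n else 0 := by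
    intro n hn
    rw [← Finset.sum_filter]
    refine Finset.sum_congr ?_ fun _ _ => rfl
    ext d
    simp only [Nat.mem_divisors, Finset.mem_filter, Finset.mem_Ioc] at hn ⊢
    constructor
    · rintro ⟨h, h2⟩
      exact ⟨⟨Nat.pos_of_dvd_of_pos h hn.1, (Nat.le_of_dvd hn.1 h).trans hn.2⟩, h⟩
    · rintro ⟨h, h2⟩; exact ⟨h2, by omega⟩
  rw [Finset.sum_congr rfl h1, Finset.sum_comm]
  refine Finset.sum_congr rfl fun d hd => ?_
  rw [← Finset.sum_filter]
  simp only [Finset.mem_Ioc] at hd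
  refine (Finset.sum_bij (fun e _ => d * e) ?_ ?_ ?_ fun _ _ => rfl).symm
  · intro e he
    simp only [Finset.mem_Ioc, Finset.mem_filter] at he ⊢
    refine ⟨⟨Nat.mul_pos hd.1 he.1, ?_⟩, dvd_mul_right _ _⟩
    rw [mul_comm]; exact (Nat.le_div_iff_mul_le hd.1).mp he.2
  · intro a _ b _ h; exact Nat.eq_of_mul_eq_mul_left hd.1 h
  · intro n hn
    simp only [Finset.mem_Ioc, Finset.mem_filter] at hn ⊢
    obtain ⟨⟨h1, h2⟩, e, rfl⟩ := hn
    refine ⟨e, ⟨Nat.pos_of_ne_zero (by rintro rfl; simp at h1), ?_⟩, rfl⟩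
    rw [Nat.le_div_iff_mul_le hd.1, mul_comm]; exact h2

lemma zetaMul_eq {p : ℕ} [NeZero p] (χ : DirichletCharacter ℂ p) (n : ℕ) :
    DirichletCharacter.zetaMul χ n = ∑ d ∈ n.divisors, χ (d : ZMod p) := by
  simp only [DirichletCharacter.zetaMul, ArithmeticFunction.coe_zeta_mul_apply]
  refine Finset.sum_congr rfl fun d hd => ?_
  simp [toArithmeticFunction, (Nat.pos_of_mem_divisors hd).ne']

open scoped ComplexOrder in
lemma zetaMul_sq {p : ℕ} [NeZero p] (χ : DirichletCharacter ℂ p) (hχ : χ ^ 2 = 1) {m : ℕ} (hm : m ≠ 0) :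
    1 ≤ DirichletCharacter.zetaMul χ (m^2) := by
  rw [χ.isMultiplicative_zetaMul.multiplicative_factorization _ (pow_ne_zero 2 hm)]
  have key : ∀ q ∈ (m^2).factorization.support, 1 ≤ DirichletCharacter.zetaMul χ (q ^ (m^2).factorization q) := by
    intro q hq
    have hq' : q.Prime := Nat.prime_of_mem_primeFactors hq
    rw [Nat.factorization_pow, zetaMul_eq, Nat.sum_divisors_prime_pow hq']
    simp only [Finsupp.coe_smul, Pi.smul_apply, smul_eq_mul, Nat.cast_pow, map_pow]
    rcases MulChar.isQuadratic_iff_sq_eq_one.mpr hχ q with h | h | h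
    · rw [h, Finset.sum_range_succ']; simp
    · rw [h]; simp
      positivity
    · rw [h, neg_one_geom_sum, if_neg]
      rw [Nat.not_even_iff_odd]
      exact ⟨m.factorization q, rfl⟩
  rw [Finsupp.prod]
  generalize (m^2).factorization.support = S at key
  classical
  induction S using Finset.induction_on with
  | empty => simp
  | insert a S ha ih =>
    rw [Finset.prod_insert ha]
    have h1 := key a (Finset.mem_insert_self _ _)
    have h2 := ih fun q hq => key q (Finset.mem_insert_of_mem hq)
    exact one_le_mul_of_one_le_of_one_le h1 h2

end CycAux

open Filter Asymptotics Real
namespace CycAux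

lemma lambert_trunc {t : ℝ} (h0 : 0 < t) (h1 : t < 1) {N d : ℕ} (hd : 0 < d) :
    |t^d/(1-t^d) - ∑ e ∈ Finset.Ioc 0 (N/d), t^(d*e)| ≤ t^(N+1)/(1-t) := by
  set u := t^d with hu
  have hu0 : 0 < u := by positivity
  have hut : u ≤ t := by
    calc t^d ≤ t^1 := pow_le_pow_of_le_one h0.le h1.le hd
      _ = t := pow_one t
  have hu1 : u < 1 := by linarith
  have e1 : ∑ e ∈ Finset.Ioc 0 (N/d), t^(d*e) = (u - u^(N/d+1))/(1-u) := by
    have : ∀ K : ℕ, ∑ e ∈ Finset.Ioc 0 K, t^(d*e) = (u - u^(K+1))/(1-u) := by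
      intro K
      have h3 : 1 - u ≠ 0 := by linarith
      induction K with
      | zero => simp
      | succ K ih =>
        rw [Finset.sum_Ioc_succ_top (by omega), ih, pow_mul, ← hu]
        field_simp; ring
    exact this _
  rw [e1, ← sub_div]
  have e2 : u - (u - u^(N/d+1)) = u^(N/d+1) := by ring
  have h3 : 0 < 1 - u := by linarith
  have h4 : 0 < 1 - t := by linarith
  rw [e2, abs_of_nonneg (by positivity), hu, ← pow_mul]
  have h5 : t^(d*(N/d+1)) ≤ t^(N+1) := by
    refine pow_le_pow_of_le_one h0.le h1.le ?_
    have := Nat.lt_mul_div_succ N hd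
    omega
  rw [← hu]
  exact div_le_div₀ (by positivity) h5 h4 (by linarith)

lemma lambert_re {p : ℕ} [NeZero p] (χ : DirichletCharacter ℂ p) (hχ2 : χ ^ 2 = 1) {t : ℝ}
    (h0 : 0 < t) (h1 : t < 1) {N M : ℕ} (hMN : M^2 ≤ N) :
    (∑ m ∈ Finset.Ioc 0 M, t^(m^2)) - N * (t^(N+1)/(1-t)) ≤
    ‖∑ d ∈ Finset.Ioc 0 N, ((t^d/(1-t^d) : ℝ) : ℂ) * χ (d : ZMod p)‖ := by
  have hA : ∑ m ∈ Finset.Ioc 0 M, t^(m^2) ≤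
      (∑ n ∈ Finset.Ioc 0 N, ((t^n:ℝ):ℂ) * DirichletCharacter.zetaMul χ n).re := by
    rw [Complex.re_sum]
    have hinj : Set.InjOn (fun m : ℕ => m^2) (Finset.Ioc 0 M : Finset ℕ) := fun a _ b _ h => by
      exact Nat.pow_left_injective (n := 2) (by norm_num) h
    have hnn : ∀ n, 0 ≤ (DirichletCharacter.zetaMul χ n).re := fun n => by
      have := DirichletCharacter.zetaMul_nonneg hχ2 n
      exact (Complex.le_def.mp this).1
    calc ∑ m ∈ Finset.Ioc 0 M, t^(m^2) ≤ ∑ m ∈ Finset.Ioc 0 M, (((t^(m^2):ℝ):ℂ) * DirichletCharacter.zetaMul χ (m^2)).re := by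
          refine Finset.sum_le_sum fun m hm => ?_
          have h2 : 1 ≤ (DirichletCharacter.zetaMul χ (m^2)).re := by
            have := zetaMul_sq χ hχ2 (m := m) (by simp at hm; omega)
            simpa using (Complex.le_def.mp this).1
          rw [Complex.re_ofReal_mul]
          nlinarith [pow_pos h0 (m^2)]
      _ = ∑ n ∈ (Finset.Ioc 0 M).image (fun m => m^2), (((t^n:ℝ):ℂ) * DirichletCharacter.zetaMul χ n).re := by
          rw [Finset.sum_image hinj]
      _ ≤ _ := by
          refine Finset.sum_le_sum_of_subset_of_nonneg ?_ ?_
          · intro n hn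
            simp only [Finset.mem_image, Finset.mem_Ioc] at hn ⊢
            obtain ⟨m, hm, rfl⟩ := hn
            exact ⟨by have := hm.1; positivity, (Nat.pow_le_pow_left hm.2 2).trans hMN⟩
          · intro n _ _
            rw [Complex.re_ofReal_mul]
            exact mul_nonneg (by positivity) (hnn n)
  have hB : ∑ n ∈ Finset.Ioc 0 N, ((t^n:ℝ):ℂ) * DirichletCharacter.zetaMul χ n =
      ∑ d ∈ Finset.Ioc 0 N, ((∑ e ∈ Finset.Ioc 0 (N/d), t^(d*e) : ℝ):ℂ) * χ (d : ZMod p) := by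
    have := sum_div_swap N (fun d n => ((t^n:ℝ):ℂ) * χ (d : ZMod p))
    simp only [← Finset.mul_sum, ← zetaMul_eq] at this
    rw [this]
    refine Finset.sum_congr rfl fun d _ => ?_
    rw [← Finset.sum_mul]; push_cast; rfl
  have hC : ‖(∑ d ∈ Finset.Ioc 0 N, ((t^d/(1-t^d) : ℝ) : ℂ) * χ (d : ZMod p)) -
      ∑ d ∈ Finset.Ioc 0 N, ((∑ e ∈ Finset.Ioc 0 (N/d), t^(d*e) : ℝ):ℂ) * χ (d : ZMod p)‖ ≤ N * (t^(N+1)/(1-t)) := by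
    rw [← Finset.sum_sub_distrib]
    refine (norm_sum_le_of_le _ (f := fun d => _) (n := fun _ => t^(N+1)/(1-t)) ?_).trans (by simp)
    intro d hd
    rw [← sub_mul, norm_mul, ← Complex.ofReal_sub, Complex.norm_real, Real.norm_eq_abs]
    have h2 := lambert_trunc h0 h1 (N := N) (d := d) (by simp at hd; omega)
    have h3 := DirichletCharacter.norm_le_one χ (d : ZMod p)
    calc _ ≤ (t^(N+1)/(1-t)) * 1 := by gcongr
      _ = _ := mul_one _
  have hD := (Complex.re_le_norm (∑ n ∈ Finset.Ioc 0 N, ((t^n:ℝ):ℂ) * DirichletCharacter.zetaMul χ n))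
  rw [hB] at hD hA
  have hE := norm_sub_norm_le (∑ d ∈ Finset.Ioc 0 N, ((∑ e ∈ Finset.Ioc 0 (N/d), t^(d*e) : ℝ):ℂ) * χ (d : ZMod p))
    (∑ d ∈ Finset.Ioc 0 N, ((t^d/(1-t^d) : ℝ) : ℂ) * χ (d : ZMod p))
  rw [norm_sub_rev] at hE
  linarith

lemma LV_lower_real {p : ℕ} [NeZero p] (hp : p ≠ 1) (χ : DirichletCharacter ℂ p) (hχ : χ ≠ 1)
    (hχ2 : χ ^ 2 = 1) {η : ℝ} (hη : 0 < η) (hη1 : η ≤ 1) :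
    1 / (128 * (p:ℝ)) - CZ * p * η ≤ ‖LV χ η‖ := by
  have hp0 : (1:ℝ) ≤ p := by exact_mod_cast Nat.one_le_iff_ne_zero.mpr (NeZero.ne p)
  set M := 8 * p with hM
  set K : ℝ := 2 * (M:ℝ)^2 with hK
  have hMp : (M:ℝ) = 8 * p := by rw [hM]; push_cast; ring
  have hK2 : K = 128 * (p:ℝ)^2 := by rw [hK, hMp]; ring
  have hK1 : 1 < K := by rw [hK2]; nlinarith
  set t : ℝ := 1 - 1/K with ht
  have hKi : 1/K < 1 := by rw [div_lt_one (by linarith)]; exact hK1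
  have h0 : 0 < t := by rw [ht]; linarith
  have h1 : t < 1 := by rw [ht]; have : 0 < 1/K := by positivity
                        linarith
  have h1t : 1 - t = 1/K := by rw [ht]; ring
  have hsq : (M:ℝ)/2 ≤ ∑ m ∈ Finset.Ioc 0 M, t^(m^2) := by
    calc (M:ℝ)/2 = ∑ m ∈ Finset.Ioc 0 M, (1/2:ℝ) := by simp; ring
      _ ≤ _ := by
        refine Finset.sum_le_sum fun m hm => ?_
        have := one_add_mul_le_pow (a := -(1/K)) (by linarith) (m^2)
        have e : 1 + -(1/K) = t := by rw [ht]; ring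
        rw [e] at this
        refine le_trans ?_ this
        have hm2 : ((m^2:ℕ):ℝ) ≤ (M:ℝ)^2 := by
          push_cast
          have : (m:ℝ) ≤ M := by simp at hm; exact_mod_cast hm.2
          gcongr
        have : ((m^2:ℕ):ℝ) * (1/K) ≤ 1/2 := by
          rw [mul_one_div, div_le_iff₀ (by linarith)]; rw [hK]; linarith
        linarith
  have main : ∀ N : ℕ, M^2 ≤ N → (M:ℝ)/2 - N * (t^(N+1)/(1-t)) ≤
      K * ‖∑ n ∈ Finset.range N, ((((n:ℝ)+1) ^ (-1-η) : ℝ) : ℂ) * χ ((n+1 : ℕ) : ZMod p)‖ + 3 * p + K * (CZ * p * η) := by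
    intro N hN
    have a1 := lambert_re χ hχ2 h0 h1 hN
    have a2 := mb_sum_le hp χ hχ h0 h1 N
    have a3 := abel_diff (fun m => χ ((m+1 : ℕ) : ZMod p)) p (char_sum_le' hp χ hχ) le_rfl hη.le hη1 N
    have e : ∑ d ∈ Finset.Ioc 0 N, ((t^d/(1-t^d) : ℝ) : ℂ) * χ (d : ZMod p) =
        (K:ℂ) * (∑ n ∈ Finset.range N, ((((n:ℝ)+1) ^ (-1-η) : ℝ) : ℂ) * χ ((n+1 : ℕ) : ZMod p))
        - ∑ n ∈ Finset.range N, (mb t n : ℂ) * χ ((n+1 : ℕ) : ZMod p)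
        + (K:ℂ) * ∑ n ∈ Finset.range N, ((((n:ℝ)+1)^(-1-(0:ℝ)) - ((n:ℝ)+1)^(-1-η) : ℝ):ℂ) * χ ((n+1 : ℕ) : ZMod p) := by
      have e0 : Finset.Ioc 0 N = (Finset.range N).image (fun n => n+1) := by
        ext a; simp only [Finset.mem_Ioc, Finset.mem_image, Finset.mem_range]
        constructor
        · intro h; exact ⟨a-1, by omega, by omega⟩
        · rintro ⟨b, hb, rfl⟩; omega
      rw [e0, Finset.sum_image (by intro a _ b _ h; simpa using h), Finset.mul_sum, Finset.mul_sum,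
        ← Finset.sum_sub_distrib, ← Finset.sum_add_distrib]
      refine Finset.sum_congr rfl fun n _ => ?_
      rw [← mul_assoc, ← mul_assoc, ← sub_mul, ← add_mul]
      congr 1
      rw [mb, h1t]
      have : ((n:ℝ)+1)^(-1-(0:ℝ)) = 1/((n:ℝ)+1) := by rw [sub_zero, Real.rpow_neg_one, one_div]
      rw [this]
      have : 1 / (((n:ℝ)+1) * (1/K)) = K * (1/((n:ℝ)+1)) := by field_simp
      rw [this]
      push_cast; ring
    rw [e] at a1
    have b1 := norm_add_le ((K:ℂ) * (∑ n ∈ Finset.range N, ((((n:ℝ)+1) ^ (-1-η) : ℝ) : ℂ) * χ ((n+1 : ℕ) : ZMod p))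
        - ∑ n ∈ Finset.range N, (mb t n : ℂ) * χ ((n+1 : ℕ) : ZMod p))
        ((K:ℂ) * ∑ n ∈ Finset.range N, ((((n:ℝ)+1)^(-1-(0:ℝ)) - ((n:ℝ)+1)^(-1-η) : ℝ):ℂ) * χ ((n+1 : ℕ) : ZMod p))
    have b2 := norm_sub_le ((K:ℂ) * (∑ n ∈ Finset.range N, ((((n:ℝ)+1) ^ (-1-η) : ℝ) : ℂ) * χ ((n+1 : ℕ) : ZMod p)))
        (∑ n ∈ Finset.range N, (mb t n : ℂ) * χ ((n+1 : ℕ) : ZMod p))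
    have hKn : ‖(K:ℂ)‖ = K := by rw [Complex.norm_real, Real.norm_eq_abs, abs_of_pos (by linarith)]
    rw [norm_mul, hKn] at b1 b2
    have b3 : K * ‖∑ n ∈ Finset.range N, ((((n:ℝ)+1)^(-1-(0:ℝ)) - ((n:ℝ)+1)^(-1-η) : ℝ):ℂ) * χ ((n+1 : ℕ) : ZMod p)‖ ≤ K * (CZ * p * η) := by
      gcongr
      simpa using a3
    exact le_trans (sub_le_sub_right hsq _) (a1.trans (b1.trans (add_le_add (b2.trans (by gcongr)) b3)))
  have lim1 : Tendsto (fun N : ℕ => (M:ℝ)/2 - N * (t^(N+1)/(1-t))) atTop (nhds ((M:ℝ)/2 - 0)) := by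
    refine tendsto_const_nhds.sub ?_
    have := (tendsto_self_mul_const_pow_of_lt_one h0.le h1).mul_const (t/(1-t))
    rw [zero_mul] at this
    refine this.congr fun n => ?_
    rw [pow_succ]; ring
  have lim2 : Tendsto (fun N : ℕ => K * ‖∑ n ∈ Finset.range N, ((((n:ℝ)+1) ^ (-1-η) : ℝ) : ℂ) * χ ((n+1 : ℕ) : ZMod p)‖ + 3 * p + K * (CZ * p * η)) atTop
      (nhds (K * ‖LV χ η‖ + 3 * p + K * (CZ * p * η))) :=
    (((hasSum_LV χ hη).tendsto_sum_nat.norm.const_mul K).add_const _).add_const _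
  have := le_of_tendsto_of_tendsto lim1 lim2 (eventually_atTop.mpr ⟨M^2, main⟩)
  rw [hMp] at this
  have h5 : (p:ℝ) ≤ K * (‖LV χ η‖ + CZ * p * η) := by linarith
  have h6 : K * (1/(128*(p:ℝ))) = p := by rw [hK2]; field_simp
  have := le_of_mul_le_mul_left (h6.le.trans h5) (by linarith)
  linarith

lemma LV_lower {p : ℕ} [NeZero p] (hp : p ≠ 1) (χ : DirichletCharacter ℂ p) (hχ : χ ≠ 1)
    {η : ℝ} (hη : 0 < η) (h1 : η ≤ 1 / (128 * (CZ * p) ^ 5)) :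
    1 / (128 * (CZ * p) ^ 4) ≤ ‖LV χ η‖ := by
  by_cases hχ2 : χ ^ 2 = 1
  · have hp2 : (2:ℝ) ≤ p := by
      have := NeZero.ne p
      exact_mod_cast (by omega : 2 ≤ p)
    have hBp : (p:ℝ) ≤ CZ * p := by nlinarith [CZ_ge]
    have hη1 : η ≤ 1 := by
      refine h1.trans ?_
      rw [div_le_one (by have := CZ_ge; positivity)]
      have : 1 ≤ (CZ * p)^5 := one_le_pow₀ (by linarith)
      linarith
    have := LV_lower_real hp χ hχ hχ2 hη hη1
    refine le_trans ?_ this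
    set B := CZ * p
    have hB0 : 0 < B := by linarith
    have h2 : B * η ≤ 1 / (128 * B^4) := by
      calc B * η ≤ B * (1 / (128 * B^5)) := by gcongr
        _ = _ := by field_simp
    have h3 : 2 * (1 / (128 * B^4)) ≤ 1/(128 * (p:ℝ)) := by
      rw [mul_one_div, div_le_div_iff₀ (by positivity) (by positivity)]
      have : (8:ℝ) ≤ B^3 := by
        calc (8:ℝ) = 2^3 := by norm_num
          _ ≤ B^3 := by gcongr; linarith
      have : 8 * B ≤ B^4 := by nlinarith
      nlinarith
    linarith
  · exact LV_lower_nonreal hp χ hχ hχ2 hη h1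

end CycAux

open Filter Asymptotics Real
namespace CycAux

/-- constant for squares of primes -/
noncomputable def C2 : ℝ := ∑' q : Nat.Primes, (q:ℝ)^(-2:ℝ)

lemma C2_summable : Summable (fun q : Nat.Primes => (q:ℝ)^(-2:ℝ)) :=
  Nat.Primes.summable_rpow.mpr (by norm_num)

lemma C2_nonneg : 0 ≤ C2 := tsum_nonneg fun q => by positivity

lemma term_bound {p : ℕ} (χ : DirichletCharacter ℂ p) {η : ℝ} (hη : 0 < η) (q : Nat.Primes) :
    (-Complex.log (1 - χ q * (q:ℂ) ^ (-(1 + (η:ℂ))))).re ≤ (χ q).re * (q:ℝ)^(-1-η) + (q:ℝ)^(-2:ℝ) := by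
  have hq0 : (0:ℝ) < q := by exact_mod_cast q.2.pos
  have hq2 : (2:ℝ) ≤ q := by exact_mod_cast q.2.two_le
  have e : (q:ℂ) ^ (-(1 + (η:ℂ))) = (((q:ℝ)^(-1-η) : ℝ) : ℂ) := by
    rw [Complex.ofReal_cpow hq0.le]; push_cast; congr 1; ring
  rw [e]
  set w := (q:ℝ)^(-1-η) with hw
  have hw0 : 0 < w := by positivity
  have hw1 : w ≤ (q:ℝ)⁻¹ := by
    rw [← Real.rpow_neg_one, hw]
    exact Real.rpow_le_rpow_of_exponent_le (by linarith) (by linarith)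
  have hqi : (q:ℝ)⁻¹ ≤ 1/2 := by rw [one_div]; gcongr
  have hz : ‖-(χ q * (w:ℂ))‖ ≤ w := by
    rw [norm_neg, norm_mul, Complex.norm_real, Real.norm_eq_abs, abs_of_pos hw0]
    have := DirichletCharacter.norm_le_one χ (q : ZMod p)
    nlinarith
  have h1 := Complex.norm_log_one_add_sub_self_le (z := -(χ q * (w:ℂ))) (by linarith)
  set z := -(χ q * (w:ℂ)) with hzdef
  have h2 : ‖z‖^2 * (1 - ‖z‖)⁻¹ / 2 ≤ (q:ℝ)^(-2:ℝ) := by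
    have h3 : (1 - ‖z‖)⁻¹ ≤ 2 := by
      rw [inv_le_comm₀ (by linarith) (by norm_num)]; linarith
    have h4 : ‖z‖^2 ≤ ((q:ℝ)⁻¹)^2 := by gcongr; linarith
    have h5 : (q:ℝ)^(-2:ℝ) = ((q:ℝ)⁻¹)^2 := by
      rw [Real.rpow_neg hq0.le, inv_pow]; norm_cast
    rw [h5]
    have h6 : 0 ≤ (1 - ‖z‖)⁻¹ := inv_nonneg.mpr (by linarith)
    nlinarith [sq_nonneg ‖z‖]
  have h3 := (Complex.abs_re_le_norm (Complex.log (1 + z) - z)).trans (h1.trans h2)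
  have h4 := (abs_le.mp h3).1
  have e2 : 1 - χ q * (w:ℂ) = 1 + z := by rw [hzdef]; ring
  rw [e2, Complex.neg_re]
  have e3 : z.re = -((χ q).re * w) := by rw [hzdef, Complex.neg_re, Complex.re_mul_ofReal]
  rw [Complex.sub_re, e3] at h4
  linarith

lemma sum_log_LV {p : ℕ} [NeZero p] {η : ℝ} (hη : 0 < η) :
    ∑ χ : DirichletCharacter ℂ p, Real.log ‖LV χ η‖ ≤
      p.totient * ((∑' q : Nat.Primes, if ((q:ℕ) : ZMod p) = 1 then (q:ℝ)^(-1-η) else 0) + C2) := by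
  have hs : 1 < (1 + (η:ℂ)).re := by simpa using hη
  have hsm : ∀ χ : DirichletCharacter ℂ p, Summable fun q : Nat.Primes => (-Complex.log (1 - χ q * (q:ℂ) ^ (-(1 + (η:ℂ))))).re :=
    fun χ => (Complex.hasSum_re (DirichletCharacter.summable_neg_log_one_sub_mul_prime_cpow χ hs).hasSum).summable
  have h1 : ∀ χ : DirichletCharacter ℂ p, Real.log ‖LV χ η‖ =
      ∑' q : Nat.Primes, (-Complex.log (1 - χ q * (q:ℂ) ^ (-(1 + (η:ℂ))))).re := by
    intro χ
    rw [LV, ← DirichletCharacter.LSeries_eulerProduct_exp_log χ hs, Complex.norm_exp, Real.log_exp,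
      Complex.re_tsum (DirichletCharacter.summable_neg_log_one_sub_mul_prime_cpow χ hs)]
  have hw : Summable fun q : Nat.Primes => (q:ℝ)^(-1-η) := Nat.Primes.summable_rpow.mpr (by linarith)
  have hw2 : Summable fun q : Nat.Primes => if ((q:ℕ) : ZMod p) = 1 then (q:ℝ)^(-1-η) else 0 := by
    refine hw.of_nonneg_of_le (fun q => ?_) (fun q => ?_)
    · split_ifs <;> positivity
    · split_ifs
      · exact le_rfl
      · positivity
  rw [Finset.sum_congr rfl fun χ _ => h1 χ, ← Summable.tsum_finsetSum fun χ _ => hsm χ, C2,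
    ← hw2.tsum_add C2_summable, ← tsum_mul_left]
  refine Summable.tsum_le_tsum (fun q => ?_) (summable_sum fun χ _ => hsm χ) ((hw2.add C2_summable).mul_left _)
  have hcard : (Finset.univ : Finset (DirichletCharacter ℂ p)).card = p.totient := by
    rw [Finset.card_univ, ← Nat.card_eq_fintype_card]
    exact DirichletCharacter.card_eq_totient_of_hasEnoughRootsOfUnity ℂ p
  calc ∑ χ : DirichletCharacter ℂ p, (-Complex.log (1 - χ q * (q:ℂ) ^ (-(1 + (η:ℂ))))).re
      ≤ ∑ χ : DirichletCharacter ℂ p, ((χ q).re * (q:ℝ)^(-1-η) + (q:ℝ)^(-2:ℝ)) :=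
        Finset.sum_le_sum fun χ _ => term_bound χ hη q
    _ = _ := by
      rw [Finset.sum_add_distrib, Finset.sum_const, hcard, ← Finset.sum_mul, ← Complex.re_sum,
        DirichletCharacter.sum_characters_eq ℂ, nsmul_eq_mul, mul_add]
      congr 1
      split_ifs <;> simp

lemma tsum_Q1_le {p : ℕ} (hp : 2 ≤ p) {η : ℝ} (hη : 0 < η) {N : ℕ} (hN : 1 ≤ N) :
    (∑' q : Nat.Primes, if ((q:ℕ) : ZMod p) = 1 then (q:ℝ)^(-1-η) else 0) ≤
      (∑ q ∈ Q1 p N, 1/(q:ℝ)) + (N:ℝ)^(-η)/η := by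
  set g : ℕ → ℝ := fun n => if n.Prime ∧ n % p = 1 then (n:ℝ)^(-1-η) else 0 with hg
  have hg0 : ∀ n, 0 ≤ g n := fun n => by rw [hg]; dsimp only; split_ifs <;> positivity
  have hgle : ∀ n, g n ≤ (n:ℝ)^(-1-η) := fun n => by
    rw [hg]; dsimp only; split_ifs
    · exact le_rfl
    · positivity
  have hs : Summable (fun n : ℕ => (n:ℝ)^(-1-η)) := Real.summable_nat_rpow.mpr (by linarith)
  have hgs : Summable g := hs.of_nonneg_of_le hg0 hgle
  have h1 : (∑' q : Nat.Primes, if ((q:ℕ) : ZMod p) = 1 then (q:ℝ)^(-1-η) else 0) ≤ ∑' n, g n := by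
    have e : ∀ q : Nat.Primes, (if ((q:ℕ) : ZMod p) = 1 then (q:ℝ)^(-1-η) else 0) = g q := by
      intro q
      rw [hg]; dsimp only
      congr 1
      have := ZMod.natCast_eq_natCast_iff' (q:ℕ) 1 p
      rw [Nat.cast_one, Nat.mod_eq_of_lt (by omega : 1 < p)] at this
      rw [this]
      simp [q.2]
    simp_rw [e]
    exact tsum_comp_le_tsum_of_inj hgs hg0 Subtype.val_injective
  refine h1.trans ?_
  rw [← hgs.sum_add_tsum_nat_add (N+1)]
  refine add_le_add ?_ ?_
  · rw [hg]
    dsimp only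
    rw [← Finset.sum_filter]
    calc ∑ a ∈ Finset.range (N+1) with (a.Prime ∧ a % p = 1), (a:ℝ)^(-1-η)
        ≤ ∑ a ∈ Finset.range (N+1) with (a.Prime ∧ a % p = 1), 1/(a:ℝ) := by
          refine Finset.sum_le_sum fun a ha => ?_
          rw [one_div, ← Real.rpow_neg_one]
          have : 1 ≤ a := (Finset.mem_filter.mp ha).2.1.one_lt.le
          exact Real.rpow_le_rpow_of_exponent_le (by exact_mod_cast this) (by linarith)
      _ = _ := by
          refine Finset.sum_congr ?_ fun _ _ => rfl
          ext a
          rw [mem_Q1, Finset.mem_filter, Finset.mem_range]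
          constructor
          · rintro ⟨h, h2⟩; exact ⟨by omega, h2⟩
          · rintro ⟨h, h2⟩; exact ⟨by omega, h2⟩
  · have ht := tail_pow hη (x := (N:ℝ)) (by exact_mod_cast hN)
    refine le_trans ?_ ht.2
    refine Summable.tsum_le_tsum (fun n => ?_) ((summable_nat_add_iff (N+1)).mpr hgs) ht.1
    refine (hgle _).trans (le_of_eq ?_)
    congr 1
    push_cast; ring

/-- Lemma B -/
lemma sum_Q1_lower {p : ℕ} (hp : p.Prime) {η : ℝ} (hη : 0 < η) (h1 : η ≤ 1 / (128 * (CZ * p) ^ 5))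
    {N : ℕ} (hN : 1 / η ^ 2 ≤ Real.log N) :
    Real.log (1/η) / p - Real.log (128 * (CZ * p)^4) - 1 - C2 ≤ ∑ q ∈ Q1 p N, 1/(q:ℝ) := by
  haveI : NeZero p := ⟨hp.ne_zero⟩
  have hp2 : (2:ℝ) ≤ p := by exact_mod_cast hp.two_le
  have hBp : (p:ℝ) ≤ CZ * p := by nlinarith [CZ_ge]
  have hη1 : η ≤ 1 := by
    refine h1.trans ?_
    rw [div_le_one (by have := CZ_ge; positivity)]
    have : 1 ≤ (CZ * p)^5 := one_le_pow₀ (by linarith)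
    linarith
  have hN1 : 1 ≤ N := by
    rcases Nat.eq_zero_or_pos N with h | h
    · rw [h] at hN; simp at hN; exact absurd hN (by positivity)
    · exact h
  have hNp : (0:ℝ) < N := by exact_mod_cast hN1
  have a1 := sum_log_LV (p := p) hη
  have a2 := tsum_Q1_le hp.two_le hη hN1
  have a3 : (N:ℝ)^(-η)/η ≤ 1 := by
    rw [div_le_one hη, Real.rpow_def_of_pos hNp]
    have h2 : 1/η ≤ Real.exp (1/η) := by linarith [Real.add_one_le_exp (1/η)]
    have h3 : Real.exp (-(1/η)) ≤ η := by
      rw [Real.exp_neg, inv_le_comm₀ (Real.exp_pos _) hη, ← one_div]; exact h2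
    refine le_trans (Real.exp_le_exp.mpr ?_) h3
    have : 1/η = η * (1/η^2) := by field_simp
    rw [this]; nlinarith
  set B := CZ * p with hB
  have hB0 : 0 < B := by linarith
  set Λ := Real.log (128 * B^4) with hΛ
  have hΛ2 : 2 * Real.log p ≤ Λ := by
    have : 2 * Real.log p = Real.log ((p:ℝ)^2) := by rw [Real.log_pow]; norm_num
    rw [this, hΛ]
    refine Real.log_le_log (by positivity) ?_
    have h4 : (p:ℝ)^2 ≤ B^2 := by gcongr
    have h5 : B^2 ≤ B^4 := pow_le_pow_right₀ (by linarith) (by norm_num)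
    nlinarith
  have hΛ0 : 0 ≤ Λ := by
    have := Real.log_nonneg (by linarith : (1:ℝ) ≤ p); linarith
  have a4 : ∀ χ : DirichletCharacter ℂ p, χ ≠ 1 → -Λ ≤ Real.log ‖LV χ η‖ := by
    intro χ hχ
    have := LV_lower hp.ne_one χ hχ hη h1
    have h6 := Real.log_le_log (by positivity) this
    rwa [one_div, Real.log_inv] at h6
  have a5 : Real.log (1/η) - Λ ≤ Real.log ‖LV (1 : DirichletCharacter ℂ p) η‖ := by
    have h6 := Real.log_le_log (by positivity) (LV_one_lower hp.ne_one hη hη1)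
    have : Real.log (1 / ((p:ℝ)^2 * η)) = Real.log (1/η) - 2 * Real.log p := by
      rw [one_div, Real.log_inv, Real.log_mul (by positivity) hη.ne', one_div, Real.log_inv, Real.log_pow]
      push_cast; ring
    linarith
  classical
  have hcard : (Finset.univ : Finset (DirichletCharacter ℂ p)).card = p - 1 := by
    rw [Finset.card_univ, ← Nat.card_eq_fintype_card,
      DirichletCharacter.card_eq_totient_of_hasEnoughRootsOfUnity ℂ p, Nat.totient_prime hp]
  have a6 : Real.log (1/η) - p * Λ ≤ ∑ χ : DirichletCharacter ℂ p, Real.log ‖LV χ η‖ := by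
    have : ∑ χ : DirichletCharacter ℂ p, ((if χ = 1 then Real.log (1/η) else 0) - Λ) ≤ ∑ χ : DirichletCharacter ℂ p, Real.log ‖LV χ η‖ := by
      refine Finset.sum_le_sum fun χ _ => ?_
      split_ifs with h
      · rw [h]; exact a5
      · have := a4 χ h; linarith
    refine le_trans ?_ this
    rw [Finset.sum_sub_distrib, Finset.sum_ite_eq' Finset.univ, if_pos (Finset.mem_univ _), Finset.sum_const, hcard, nsmul_eq_mul]
    have : ((p-1:ℕ):ℝ) ≤ p := by exact_mod_cast Nat.sub_le p 1
    nlinarith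
  have hS0 : 0 ≤ ∑ q ∈ Q1 p N, 1/(q:ℝ) := Finset.sum_nonneg fun q _ => by positivity
  have hφ : (p.totient:ℝ) ≤ p := by exact_mod_cast Nat.totient_le p
  have a7 : Real.log (1/η) - p * Λ ≤ p * ((∑ q ∈ Q1 p N, 1/(q:ℝ)) + 1 + C2) := by
    refine (a6.trans a1).trans ?_
    refine mul_le_mul hφ (by linarith) ?_ (by positivity)
    refine add_nonneg (tsum_nonneg fun q => ?_) C2_nonneg
    split_ifs <;> positivity
  have a8 : Real.log (1/η) / p ≤ Λ + ((∑ q ∈ Q1 p N, 1/(q:ℝ)) + 1 + C2) := by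
    rw [div_le_iff₀ (by linarith)]; linarith
  linarith

end CycAux

open Filter Asymptotics Real
namespace CycAux

lemma CC_upper0 (N y : ℕ) : CC N ≤ Ph N y + ∑ p ∈ PL y,
    ((Finset.Ioc 0 (N/p)).filter (fun m => ∀ q ∈ Q1 p (N/p), ¬ q ∣ m)).card := by
  classical
  have hsub : (Finset.Ioc 0 N).filter IsCyclicNum ⊆
      (Finset.Ioc 0 N).filter (fun n => (primorial y).Coprime n) ∪
      (PL y).biUnion (fun p => ((Finset.Ioc 0 (N/p)).filter (fun m => ∀ q ∈ Q1 p (N/p), ¬ q ∣ m)).image (fun m => p * m)) := by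
    intro n hn
    simp only [Finset.mem_filter, Finset.mem_Ioc] at hn
    obtain ⟨⟨hn0, hnN⟩, hc⟩ := hn
    rw [Finset.mem_union]
    by_cases h : (primorial y).Coprime n
    · left; simp only [Finset.mem_filter, Finset.mem_Ioc]; exact ⟨⟨hn0, hnN⟩, h⟩
    · right
      rw [coprime_primorial] at h
      push Not at h
      obtain ⟨p, hp, hpy, m, rfl⟩ := h
      simp only [Finset.mem_biUnion, Finset.mem_image, Finset.mem_filter, Finset.mem_Ioc, mem_PL]
      refine ⟨p, ⟨hpy, hp⟩, m, ⟨⟨Nat.pos_of_ne_zero (by rintro rfl; simp at hn0), ?_⟩, ?_⟩, rfl⟩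
      · rw [Nat.le_div_iff_mul_le hp.pos, mul_comm]; exact hnN
      · intro q hq hqm
        rw [mem_Q1] at hq
        exact cyclic_not_dvd hc hp hq.2.1 (dvd_mul_right _ _) hq.2.2 (hqm.mul_left p)
  calc CC N ≤ _ := Finset.card_le_card hsub
    _ ≤ _ := Finset.card_union_le _ _
    _ ≤ _ := by
      refine Nat.add_le_add le_rfl ?_
      refine Finset.card_biUnion_le.trans ?_
      exact Finset.sum_le_sum fun p _ => Finset.card_image_le

lemma CC_upper1 (N y : ℕ) {σ : ℝ} (hσ : 0 < σ) (h : ∀ p ∈ PL y, σ / p ≤ ∑ q ∈ Q1 p (N/p), 1/(q:ℝ)) :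
    (CC N : ℝ) ≤ Ph N y + 3 * N * (y + 1) / σ := by
  have h0 : (CC N : ℝ) ≤ ((Ph N y + ∑ p ∈ PL y,
    ((Finset.Ioc 0 (N/p)).filter (fun m => ∀ q ∈ Q1 p (N/p), ¬ q ∣ m)).card : ℕ) : ℝ) := by
    exact_mod_cast CC_upper0 N y
  refine h0.trans ?_
  push_cast
  refine add_le_add le_rfl ?_
  have hb : ∀ p ∈ PL y, (((Finset.Ioc 0 (N/p)).filter (fun m => ∀ q ∈ Q1 p (N/p), ¬ q ∣ m)).card : ℝ) ≤ 3 * N / σ := by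
    intro p hp
    have hpp := (mem_PL.mp hp).2
    have hp0 : (0:ℝ) < p := by exact_mod_cast hpp.pos
    have hS := h p hp
    have hS0 : 0 < ∑ q ∈ Q1 p (N/p), 1/(q:ℝ) := lt_of_lt_of_le (by positivity) hS
    refine (turan (N/p) (Q1 p (N/p)) (fun q hq => ?_) _ rfl hS0).trans ?_
    · rw [mem_Q1] at hq; exact ⟨hq.2.1, hq.1⟩
    · have hd : ((N/p : ℕ):ℝ) ≤ N / p := Nat.cast_div_le
      calc 3 * ((N/p : ℕ):ℝ) / (∑ q ∈ Q1 p (N/p), 1/(q:ℝ)) ≤ 3 * (N / p) / (σ / p) := by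
            gcongr
        _ = 3 * N / σ := by field_simp
  refine (Finset.sum_le_sum hb).trans ?_
  rw [Finset.sum_const, nsmul_eq_mul]
  have hc : ((PL y).card : ℝ) ≤ y + 1 := by
    have : (PL y).card ≤ y + 1 := by
      refine (Finset.card_filter_le _ _).trans (by simp)
    exact_mod_cast this
  calc ((PL y).card : ℝ) * (3 * N / σ) ≤ (y+1) * (3 * N / σ) := by gcongr
    _ = _ := by ring

/-- Uniform lower bound in the range needed. -/
lemma S_lower {ε : ℝ} (hε : 0 < ε) : ∀ᶠ N : ℕ in atTop, ∀ p : ℕ, p.Prime → (p:ℝ) ≤ (Real.log (Real.log N)) ^ (1-ε) →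
    (Real.log (Real.log N) / 8) / p ≤ ∑ q ∈ Q1 p (N/p), 1/(q:ℝ) := by
  have hC := CZ_ge
  have hLN : Tendsto (fun N : ℕ => Real.log N) atTop atTop := Real.tendsto_log_atTop.comp tendsto_natCast_atTop_atTop
  have hL2 : Tendsto (fun N : ℕ => Real.log (Real.log N)) atTop atTop := Real.tendsto_log_atTop.comp hLN
  -- conditions in terms of L2 = x
  have c1 : ∀ᶠ x : ℝ in atTop, (128 * (CZ * x)^5)^2 * 4 ≤ Real.exp x := by
    have := (isLittleO_pow_exp_atTop (n := 10)).bound (c := 1/((128 * CZ^5)^2*4)) (by positivity)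
    filter_upwards [this, eventually_ge_atTop 0] with x hx hx0
    rw [Real.norm_eq_abs, Real.norm_eq_abs, abs_of_nonneg (by positivity), abs_of_pos (Real.exp_pos x), one_div,
      ← div_eq_inv_mul, le_div_iff₀ (by positivity)] at hx
    calc (128 * (CZ * x)^5)^2 * 4 = x^10 * ((128 * CZ^5)^2*4) := by ring
      _ ≤ _ := hx
  have c2 : ∀ᶠ x : ℝ in atTop, Real.log (128 * (CZ * x)^4) + 1 + C2 ≤ x^ε / 8 := by
    have h1 := (isLittleO_log_rpow_atTop hε).bound (c := 1/64) (by norm_num)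
    have h2 := (tendsto_rpow_atTop hε).eventually_ge_atTop (16 * (Real.log (128 * CZ^4) + 1 + C2))
    filter_upwards [h1, h2, eventually_ge_atTop 1] with x hx hx2 hx1
    have hx0 : 0 < x := by linarith
    have hp : 0 < x^ε := by positivity
    rw [Real.norm_eq_abs, Real.norm_eq_abs, abs_of_pos hp] at hx
    have hx' := (le_abs_self _).trans hx
    have : Real.log (128 * (CZ * x)^4) = Real.log (128 * CZ^4) + 4 * Real.log x := by
      rw [mul_pow, ← mul_assoc, Real.log_mul (by positivity) (by positivity), Real.log_pow]; norm_num
    rw [this]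
    linarith
  have c3 : ∀ᶠ x : ℝ in atTop, 2 * Real.log x ≤ Real.exp x := by
    filter_upwards [eventually_ge_atTop 1] with x hx
    have := Real.log_le_sub_one_of_pos (by linarith : 0 < x)
    have h2 := Real.quadratic_le_exp_of_nonneg (by linarith : 0 ≤ x)
    nlinarith
  filter_upwards [hL2.eventually c1, hL2.eventually c2, hL2.eventually_ge_atTop 10, hLN.eventually_ge_atTop 10,
    hL2.eventually c3] with N h1 h2 h3 h4 h5 p hp hpy
  set L := Real.log N with hL
  set x := Real.log L with hx
  have hx0 : 0 < x := by linarith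
  have hLpos : 0 < L := by linarith
  have hexp : Real.exp x = L := Real.exp_log hLpos
  rw [hexp] at h1 h5
  have hp0 : (0:ℝ) < p := by exact_mod_cast hp.pos
  have hpx : (p:ℝ) ≤ x := hpy.trans (by
    calc x^(1-ε) ≤ x^(1:ℝ) := Real.rpow_le_rpow_of_exponent_le (by linarith) (by linarith)
      _ = x := Real.rpow_one x)
  have hNpos : (0:ℝ) < N := by
    rcases Nat.eq_zero_or_pos N with h | h
    · rw [hL, h] at h4; simp at h4; norm_num at h4
    · exact_mod_cast h
  -- log (N/p) ≥ L/4
  have hM : L / 4 ≤ Real.log ((N/p : ℕ):ℝ) := by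
    have hNp : (N:ℝ)/p - 1 ≤ ((N/p : ℕ):ℝ) := by
      rw [← Nat.floor_div_eq_div (K := ℝ)]
      have := Nat.lt_floor_add_one ((N:ℝ)/p); linarith
    have hNe : (N:ℝ) = Real.exp L := (Real.exp_log hNpos).symm
    have hpe : (p:ℝ) ≤ Real.exp (L/2) := by
      calc (p:ℝ) ≤ x := hpx
        _ = Real.exp (Real.log x) := (Real.exp_log hx0).symm
        _ ≤ _ := Real.exp_le_exp.mpr (by linarith)
    have h6 : Real.exp (L/2) ≤ (N:ℝ)/p := by
      rw [le_div_iff₀ hp0, hNe]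
      calc Real.exp (L/2) * p ≤ Real.exp (L/2) * Real.exp (L/2) := by gcongr
        _ = Real.exp L := by rw [← Real.exp_add]; congr 1; ring
    have h7 : Real.exp (L/4) ≤ Real.exp (L/2) - 1 := by
      have : Real.exp (L/2) = Real.exp (L/4) * Real.exp (L/4) := by rw [← Real.exp_add]; congr 1; ring
      have h8 := Real.add_one_le_exp (L/4)
      nlinarith
    rw [Real.le_log_iff_exp_le (lt_of_lt_of_le (Real.exp_pos (L/4)) (by linarith))]
    linarith
  set ℓ := Real.log ((N/p : ℕ):ℝ) with hℓ
  have hℓ0 : 0 < ℓ := by linarith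
  set η : ℝ := 1/√(L/4) with hη
  have hs0 : 0 < √(L/4) := Real.sqrt_pos.mpr (by linarith)
  have hη0 : 0 < η := by positivity
  have hη2 : 1/η^2 = L/4 := by
    rw [hη, div_pow, one_pow, one_div_one_div, Real.sq_sqrt (by linarith)]
  have hη1 : η ≤ 1 / (128 * (CZ * p)^5) := by
    rw [hη]
    refine one_div_le_one_div_of_le (by positivity) ?_
    refine Real.le_sqrt_of_sq_le ?_
    calc (128 * (CZ * p)^5)^2 ≤ (128 * (CZ * x)^5)^2 := by gcongr
      _ ≤ L/4 := by linarith
  have key := sum_Q1_lower hp hη0 hη1 (N := N/p) (by rw [hη2]; exact hM)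
  have hlog : Real.log (1/η) = (x - Real.log 4)/2 := by
    rw [hη, one_div_one_div, Real.log_sqrt (by linarith), Real.log_div hLpos.ne' (by norm_num)]
  have hl4 : Real.log 4 ≤ 2 := by
    have := Real.log_two_lt_d9
    have e : Real.log 4 = 2 * Real.log 2 := by
      rw [show (4:ℝ) = 2^2 by norm_num, Real.log_pow]; norm_num
    linarith
  have hmono : Real.log (128 * (CZ * p)^4) ≤ Real.log (128 * (CZ * x)^4) := by
    refine Real.log_le_log (by positivity) ?_
    gcongr
  have hxe : x^ε ≤ x / p := by
    rw [le_div_iff₀ hp0]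
    calc x^ε * p ≤ x^ε * x^(1-ε) := by gcongr
      _ = x := by rw [← Real.rpow_add hx0]; simp
  have h9 : 3/8 * (x / p) ≤ Real.log (1/η) / p := by
    rw [hlog, ← mul_div_assoc]
    gcongr
    linarith
  have : x / 8 / p = (x/p)/8 := by ring
  rw [this]
  have : 0 < x / p := by positivity
  linarith

end CycAux

open Filter Asymptotics Real
namespace CycAux

lemma err1 (a : ℝ) : Tendsto (fun x : ℝ => Real.log x * Real.exp (2 * x^a - Real.exp x)) atTop (nhds 0) := by
  have h1 : ∀ᶠ x : ℝ in atTop, 2 * x^a ≤ Real.exp x / 2 := by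
    have := (isLittleO_rpow_exp_pos_mul_atTop a (b := 1) one_pos).bound (c := 1/4) (by norm_num)
    filter_upwards [this, eventually_ge_atTop 0] with x hx hx0
    rw [one_mul, Real.norm_eq_abs, Real.norm_eq_abs, abs_of_nonneg (by positivity), abs_of_pos (Real.exp_pos x)] at hx
    linarith
  have h2 : Tendsto (fun x : ℝ => x^1 * Real.exp (-x)) atTop (nhds 0) := Real.tendsto_pow_mul_exp_neg_atTop_nhds_zero 1
  refine squeeze_zero' ?_ ?_ h2
  · filter_upwards [eventually_ge_atTop 1] with x hx
    have := Real.log_nonneg hx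
    positivity
  · filter_upwards [h1, eventually_ge_atTop 1] with x hx hx1
    have h3 := Real.log_le_sub_one_of_pos (by linarith : 0 < x)
    have h4 := Real.log_nonneg hx1
    have h5 := Real.quadratic_le_exp_of_nonneg (by linarith : 0 ≤ x)
    rw [pow_one]
    gcongr
    · linarith
    · nlinarith [sq_nonneg (x-1)]

lemma err2 {ε : ℝ} (hε : 0 < ε) (k : ℕ) : Tendsto (fun x : ℝ => Real.log x ^ k / x ^ ε) atTop (nhds 0) :=
  (isLittleO_log_rpow_rpow_atTop (k:ℝ) hε).tendsto_div_nhds_zero.congr fun x => by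
    rw [Real.rpow_natCast]

lemma mertens_x {a : ℝ} (ha : 0 < a) : Tendsto (fun x : ℝ => (∏ p ∈ PL ⌊x^a⌋₊, (1 - 1 / (p:ℝ))) * Real.log x) atTop
    (nhds (Real.exp (-Real.eulerMascheroniConstant) / a)) := by
  have h := (mertens_third.comp (tendsto_rpow_atTop ha)).div_const a
  refine h.congr' ?_
  filter_upwards [eventually_gt_atTop 0] with x hx
  simp only [Function.comp]
  rw [Real.log_rpow hx]; field_simp

lemma four_pow_le {x a : ℝ} (hx : 0 ≤ x) : (4:ℝ)^⌊x^a⌋₊ ≤ Real.exp (2 * x^a) := by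
  have h1 : (4:ℝ) ≤ Real.exp 2 := by
    have := Real.quadratic_le_exp_of_nonneg (by norm_num : (0:ℝ) ≤ 2); linarith
  calc (4:ℝ)^⌊x^a⌋₊ ≤ Real.exp 2 ^ ⌊x^a⌋₊ := by gcongr
    _ = Real.exp (2 * (⌊x^a⌋₊:ℝ)) := by rw [← Real.exp_nat_mul]; congr 1; ring
    _ ≤ _ := by
      have := Nat.floor_le (Real.rpow_nonneg hx a)
      gcongr

lemma tend_LN : Tendsto (fun N : ℕ => Real.log N) atTop atTop :=
  Real.tendsto_log_atTop.comp tendsto_natCast_atTop_atTop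
lemma tend_L2 : Tendsto (fun N : ℕ => Real.log (Real.log N)) atTop atTop :=
  Real.tendsto_log_atTop.comp tend_LN
lemma tend_L3 : Tendsto (fun N : ℕ => Real.log (Real.log (Real.log N))) atTop atTop :=
  Real.tendsto_log_atTop.comp tend_L2

lemma CC_le_asymp {ε : ℝ} (hε : 0 < ε) (hε1 : ε < 1) : ∃ f : ℝ → ℝ,
    Tendsto f atTop (nhds (Real.exp (-Real.eulerMascheroniConstant) / (1-ε))) ∧
    ∀ᶠ N : ℕ in atTop, (CC N : ℝ) * Real.log (Real.log (Real.log N)) / N ≤ f (Real.log (Real.log N)) := by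
  refine ⟨fun x => (∏ p ∈ PL ⌊x^(1-ε)⌋₊, (1 - 1 / (p:ℝ))) * Real.log x + Real.log x * Real.exp (2 * x^(1-ε) - Real.exp x)
    + 48 * (Real.log x^1 / x^ε), ?_, ?_⟩
  · have := ((mertens_x (a := 1-ε) (by linarith)).add (err1 (1-ε))).add ((err2 hε 1).const_mul 48)
    simpa using this
  · filter_upwards [S_lower hε, tend_L2.eventually_ge_atTop 1, tend_LN.eventually_ge_atTop 1, eventually_ge_atTop 1] with N hS hx1 hL1 hN
    set L := Real.log N
    set x := Real.log L with hx
    have hx0 : 0 < x := by linarith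
    have hNp : (0:ℝ) < N := by exact_mod_cast hN
    have hlx : 0 ≤ Real.log x := Real.log_nonneg hx1
    have hexp : Real.exp x = L := Real.exp_log (by linarith)
    have hNe : Real.exp (Real.exp x) = N := by rw [hexp]; exact Real.exp_log hNp
    set Y := ⌊x^(1-ε)⌋₊ with hY
    have hYle : (Y:ℝ) ≤ x^(1-ε) := Nat.floor_le (by positivity)
    have a1 := CC_upper1 N Y (σ := x/8) (by positivity) (fun p hp => by
      have hp' := mem_PL.mp hp
      refine hS p hp'.2 (le_trans ?_ hYle)
      exact_mod_cast hp'.1)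
    have a2 := Ph_upper N Y
    have a3 : (4:ℝ)^Y ≤ _ := four_pow_le hx0.le
    rw [Real.exp_sub, hNe]
    have hY1 : (Y:ℝ) + 1 ≤ 2 * x^(1-ε) := by
      have : (1:ℝ) ≤ x^(1-ε) := Real.one_le_rpow hx1 (by linarith)
      linarith
    have hxx : x^(1-ε) = x / x^ε := by rw [Real.rpow_sub hx0, Real.rpow_one]
    have hxe : 0 < x^ε := by positivity
    set V := ∏ p ∈ PL Y, (1 - 1 / (p:ℝ))
    have a4 : 3 * (N:ℝ) * (Y + 1) / (x/8) ≤ N * (48 / x^ε) := by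
      calc 3 * (N:ℝ) * (Y + 1) / (x/8) ≤ 3 * (N:ℝ) * (2 * x^(1-ε)) / (x/8) := by gcongr
        _ = N * (48 / x^ε) := by rw [hxx]; field_simp; norm_num
    have a5 : (CC N:ℝ) ≤ N * V + Real.exp (2 * x^(1-ε)) + N * (48 / x^ε) := by linarith
    rw [div_le_iff₀ hNp]
    calc (CC N:ℝ) * Real.log x ≤ (N * V + Real.exp (2 * x^(1-ε)) + N * (48 / x^ε)) * Real.log x := by gcongr
      _ = _ := by field_simp

lemma CC_ge_asymp {ε : ℝ} (hε : 0 < ε) : ∃ f : ℝ → ℝ,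
    Tendsto f atTop (nhds (Real.exp (-Real.eulerMascheroniConstant) / (1+ε))) ∧
    ∀ᶠ N : ℕ in atTop, f (Real.log (Real.log N)) ≤ (CC N : ℝ) * Real.log (Real.log (Real.log N)) / N := by
  refine ⟨fun x => (∏ p ∈ PL ⌊x^(1+ε)⌋₊, (1 - 1 / (p:ℝ))) * Real.log x - Real.log x * Real.exp (2 * x^(1+ε) - Real.exp x)
    - (114 * (3 + ε)) * (Real.log x^2 / x^ε), ?_, ?_⟩
  · have := ((mertens_x (a := 1+ε) (by linarith)).sub (err1 (1+ε))).sub ((err2 hε 2).const_mul (114 * (3 + ε)))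
    simpa using this
  · have c1 : ∀ᶠ x : ℝ in atTop, x^(1+ε) ≤ Real.exp x := by
      have := (isLittleO_rpow_exp_pos_mul_atTop (1+ε) (b := 1) one_pos).bound (c := 1) (by norm_num)
      filter_upwards [this, eventually_ge_atTop 0] with x hx hx0
      rw [one_mul, one_mul, Real.norm_eq_abs, Real.norm_eq_abs, abs_of_nonneg (by positivity), abs_of_pos (Real.exp_pos x)] at hx
      linarith
    filter_upwards [tend_L2.eventually c1, tend_L2.eventually_ge_atTop 10, tend_LN.eventually_ge_atTop 1, 
      tend_L3.eventually_ge_atTop 1, eventually_ge_atTop 1] with N hc1 hx1 hL1 hlx1 hN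
    set L := Real.log N
    set x := Real.log L with hx
    have hx0 : 0 < x := by linarith
    have hNp : (0:ℝ) < N := by exact_mod_cast hN
    have hexp : Real.exp x = L := Real.exp_log (by linarith)
    have hNe : Real.exp (Real.exp x) = N := by rw [hexp]; exact Real.exp_log hNp
    have hxx : x^(1+ε) = x * x^ε := by rw [Real.rpow_add hx0, Real.rpow_one]
    have hxe1 : (1:ℝ) ≤ x^ε := Real.one_le_rpow (by linarith) hε.le
    have hxe : 0 < x^ε := by positivity
    have hyx : x ≤ x^(1+ε) := by rw [hxx]; nlinarith
    set Y := ⌊x^(1+ε)⌋₊ with hY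
    have hYle : (Y:ℝ) ≤ x^(1+ε) := Nat.floor_le (by positivity)
    have hYge : x^(1+ε) / 2 ≤ Y := by
      have := Nat.lt_floor_add_one (x^(1+ε)); rw [← hY] at this; linarith
    have hY5 : 5 ≤ Y := by
      refine Nat.le_floor ?_
      push_cast; linarith
    have hYN : Y ≤ N := by
      have : (Y:ℝ) ≤ N := by
        have h2 : Real.log N ≤ N := (Real.log_le_sub_one_of_pos hNp).trans (by linarith)
        rw [hexp] at hc1
        linarith
      exact_mod_cast this
    have a1 := CC_lower N Y hY5 hYN hx0.le
    have a2 := Ph_lower N Y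
    have a3 : (4:ℝ)^Y ≤ _ := four_pow_le hx0.le
    rw [Real.exp_sub, hNe]
    have hY0 : (0:ℝ) < Y := by positivity
    have hlY : Real.log Y + 2 ≤ (3 + ε) * Real.log x := by
      have h2 : Real.log Y ≤ Real.log (x^(1+ε)) := Real.log_le_log hY0 hYle
      rw [Real.log_rpow hx0] at h2
      nlinarith
    have hlY0 : 0 ≤ Real.log Y := Real.log_nonneg (by exact_mod_cast (by omega : 1 ≤ Y))
    set V := ∏ p ∈ PL Y, (1 - 1 / (p:ℝ))
    have a4 : 19 * (x + 2) * ((Real.log Y + 2) / Y) ≤ 114 * (3 + ε) * (Real.log x / x^ε) := by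
      calc 19 * (x + 2) * ((Real.log Y + 2) / Y) ≤ 19 * (3 * x) * (((3 + ε) * Real.log x) / (x^(1+ε)/2)) := by
            gcongr
            linarith
        _ = 114 * (3 + ε) * (Real.log x / x^ε) := by rw [hxx]; field_simp; ring
    have a5 : N * V - Real.exp (2 * x^(1+ε)) - N * (114 * (3 + ε) * (Real.log x / x^ε)) ≤ (CC N:ℝ) := by
      have : N * (19 * (x + 2) * ((Real.log Y + 2) / Y)) ≤ N * (114 * (3 + ε) * (Real.log x / x^ε)) := by gcongr
      linarith
    rw [le_div_iff₀ hNp]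
    calc _ = (N * V - Real.exp (2 * x^(1+ε)) - N * (114 * (3 + ε) * (Real.log x / x^ε))) * Real.log x := by field_simp
      _ ≤ _ := by gcongr

theorem CC_asymp : Tendsto (fun N : ℕ => (CC N : ℝ) * Real.log (Real.log (Real.log N)) / N) atTop
    (nhds (Real.exp (-Real.eulerMascheroniConstant))) := by
  set l := Real.exp (-Real.eulerMascheroniConstant) with hl
  have hl0 : 0 < l := Real.exp_pos _
  rw [tendsto_order]
  constructor
  · intro c hc
    set ε := (l - c) / (2 * (|c| + 1)) with hε
    have hε0 : 0 < ε := div_pos (by linarith) (by positivity)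
    obtain ⟨f, hf, hN⟩ := CC_ge_asymp hε0
    have h1 : c < l / (1+ε) := by
      rw [lt_div_iff₀ (by linarith)]
      have h2 : (|c| + 1) * ε = (l - c)/2 := by rw [hε]; field_simp
      have h3 : c * ε ≤ |c| * ε := by gcongr; exact le_abs_self c
      nlinarith
    filter_upwards [hN, tend_L2.eventually (hf.eventually (lt_mem_nhds h1))] with N h3 h4
    linarith
  · intro b hb
    have hb0 : 0 < b := by linarith
    have hlb : l / b < 1 := by rw [div_lt_one hb0]; exact hb
    set ε := (1 - l/b)/2 with hε
    have hp : 0 < l / b := by positivity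
    obtain ⟨f, hf, hN⟩ := CC_le_asymp (ε := ε) (by linarith) (by linarith)
    have h1 : l / (1-ε) < b := by
      rw [div_lt_iff₀ (by linarith)]
      have : l = b * (l/b) := by field_simp
      rw [hε]; nlinarith
    filter_upwards [hN, tend_L2.eventually (hf.eventually (gt_mem_nhds h1))] with N h3 h4
    linarith

end CycAux

open Filter Asymptotics Real
namespace CycAux

lemma cyc_inf : (setOf IsCyclicNum).Infinite := by
  refine Nat.infinite_setOf_prime.mono fun p hp => ?_
  refine ⟨hp.pos, ?_⟩
  rw [Nat.totient_prime hp]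
  have := hp.one_lt
  obtain ⟨m, rfl⟩ : ∃ m, p = m + 1 := ⟨p - 1, by omega⟩
  simp

lemma CC_eq_count (N : ℕ) : CC N = Nat.count IsCyclicNum (N+1) := by
  rw [CC, Nat.count_eq_card_filter_range]
  congr 1
  ext n
  simp only [Finset.mem_filter, Finset.mem_Ioc, Finset.mem_range]
  constructor
  · rintro ⟨h, h2⟩; exact ⟨by omega, h2⟩
  · rintro ⟨h, h2⟩; exact ⟨⟨h2.1, by omega⟩, h2⟩

lemma CC_cyc {n : ℕ} (hn : 1 ≤ n) : CC (cyclicNum n) = n := by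
  rw [CC_eq_count, cyclicNum, Nat.count_nth_succ_of_infinite cyc_inf]; omega

lemma cyc_ge (n : ℕ) (hn : 1 ≤ n) : n ≤ cyclicNum n := by
  have h := CC_cyc hn
  have : CC (cyclicNum n) ≤ cyclicNum n := by
    rw [CC]; exact (Finset.card_filter_le _ _).trans (by simp)
  omega

lemma tend_cyc : Tendsto cyclicNum atTop atTop :=
  tendsto_atTop_mono' atTop (by filter_upwards [eventually_ge_atTop 1] with n hn using cyc_ge n hn) tendsto_id

/-- `c_n / (n L3(c_n)) → e^γ` -/
lemma cyc_asymp0 : Tendsto (fun n : ℕ => (cyclicNum n : ℝ) / (n * Real.log (Real.log (Real.log (cyclicNum n))))) atTop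
    (nhds (Real.exp Real.eulerMascheroniConstant)) := by
  have h := (CC_asymp.comp tend_cyc).inv₀ (Real.exp_pos _).ne'
  rw [Real.exp_neg, inv_inv] at h
  refine h.congr' ?_
  filter_upwards [eventually_ge_atTop 1] with n hn
  simp only [Function.comp]
  rw [CC_cyc hn, inv_div]

lemma cyc_le_sq : ∀ᶠ n : ℕ in atTop, (cyclicNum n : ℝ) ≤ (n:ℝ)^2 := by
  set E := Real.exp Real.eulerMascheroniConstant with hE
  have hE0 : 0 < E := Real.exp_pos _
  have h1 := cyc_asymp0.eventually (gt_mem_nhds (show E < 2 * E by linarith))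
  have h2 : ∀ᶠ m : ℕ in atTop, 2 * E * Real.log (Real.log (Real.log m)) ≤ √(m:ℝ) := by
    have := ((isLittleO_log_rpow_atTop (r := 1/2) (by norm_num)).comp_tendsto tendsto_natCast_atTop_atTop).bound
      (c := 1/(2*E)) (by positivity)
    filter_upwards [this, tend_LN.eventually_ge_atTop 1, tend_L2.eventually_ge_atTop 1] with m hm ha hb
    simp only [Function.comp] at hm
    rw [← Real.sqrt_eq_rpow, Real.norm_eq_abs, Real.norm_eq_abs, abs_of_nonneg (Real.sqrt_nonneg _), one_div,
      ← div_eq_inv_mul, le_div_iff₀ (by positivity)] at hm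
    have hm' := (mul_le_mul_of_nonneg_right (le_abs_self _) (by positivity : 0 ≤ 2*E)).trans hm
    have e1 := Real.log_le_sub_one_of_pos (by linarith : 0 < Real.log (Real.log m))
    have e2 := Real.log_le_sub_one_of_pos (by linarith : 0 < Real.log (m:ℝ))
    have : Real.log (Real.log (Real.log m)) ≤ Real.log m := by linarith
    nlinarith
  filter_upwards [h1, tend_cyc.eventually h2, eventually_ge_atTop 1, (tend_L3.comp tend_cyc).eventually_gt_atTop 0] with n ha hb hn hpos
  simp only [Function.comp] at hpos
  have hn0 : (0:ℝ) < n := by exact_mod_cast hn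
  rw [div_lt_iff₀ (by positivity)] at ha
  have hc0 : (0:ℝ) < cyclicNum n := by exact_mod_cast lt_of_lt_of_le hn (cyc_ge n hn)
  have hs : 0 < √(cyclicNum n : ℝ) := Real.sqrt_pos.mpr hc0
  have h5 : √(cyclicNum n : ℝ) * √(cyclicNum n : ℝ) ≤ n * √(cyclicNum n : ℝ) := by
    rw [Real.mul_self_sqrt hc0.le]
    nlinarith
  have h6 := le_of_mul_le_mul_right h5 hs
  rw [← Real.sq_sqrt hc0.le]
  gcongr

/-- L3 comparison -/
lemma L3_sq : ∀ᶠ n : ℕ in atTop, ∀ m : ℝ, (n:ℝ) ≤ m → m ≤ (n:ℝ)^2 →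
    Real.log (Real.log (Real.log n)) ≤ Real.log (Real.log (Real.log m)) ∧
    Real.log (Real.log (Real.log m)) ≤ Real.log (Real.log (Real.log n)) + 1 := by
  filter_upwards [eventually_ge_atTop 1, tend_LN.eventually_ge_atTop 1, tend_L2.eventually_ge_atTop 1] with n hn h1 h2 m hm1 hm2
  have hn0 : (0:ℝ) < n := by exact_mod_cast hn
  have hm0 : 0 < m := by linarith
  have a1 : Real.log n ≤ Real.log m := Real.log_le_log hn0 hm1
  have a2 : Real.log m ≤ 2 * Real.log n := by
    have := Real.log_le_log hm0 hm2
    rwa [Real.log_pow] at this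
  have b1 : Real.log (Real.log n) ≤ Real.log (Real.log m) := Real.log_le_log (by linarith) a1
  have l2 := Real.log_two_lt_d9
  have b2 : Real.log (Real.log m) ≤ 2 * Real.log (Real.log n) := by
    have := Real.log_le_log (by linarith) a2
    rw [Real.log_mul (by norm_num) (by linarith)] at this
    linarith
  refine ⟨Real.log_le_log (by linarith) b1, ?_⟩
  have := Real.log_le_log (by linarith) b2
  rw [Real.log_mul (by norm_num) (by linarith)] at this
  linarith

/-- `c_n / (n L3(n)) → e^γ` -/
lemma cyc_asymp : Tendsto (fun n : ℕ => (cyclicNum n : ℝ) / (n * Real.log (Real.log (Real.log n)))) atTop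
    (nhds (Real.exp Real.eulerMascheroniConstant)) := by
  have hr : Tendsto (fun n : ℕ => Real.log (Real.log (Real.log (cyclicNum n))) / Real.log (Real.log (Real.log n))) atTop (nhds 1) := by
    have hup : Tendsto (fun n : ℕ => 1 + 1 / Real.log (Real.log (Real.log (n:ℝ)))) atTop (nhds 1) := by
      have := (tendsto_const_nhds (x := (1:ℝ))).add (tend_L3.inv_tendsto_atTop)
      simpa using this
    refine tendsto_of_tendsto_of_tendsto_of_le_of_le' tendsto_const_nhds hup ?_ ?_
    · filter_upwards [L3_sq, cyc_le_sq, eventually_ge_atTop 1, tend_L3.eventually_gt_atTop 0] with n h1 h2 hn hpos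
      rw [le_div_iff₀ hpos, one_mul]
      exact (h1 _ (by exact_mod_cast cyc_ge n hn) h2).1
    · filter_upwards [L3_sq, cyc_le_sq, eventually_ge_atTop 1, tend_L3.eventually_gt_atTop 0] with n h1 h2 hn hpos
      rw [div_le_iff₀ hpos, add_mul, one_mul, one_div, inv_mul_cancel₀ hpos.ne']
      exact (h1 _ (by exact_mod_cast cyc_ge n hn) h2).2
  have := cyc_asymp0.mul hr
  rw [mul_one] at this
  refine this.congr' ?_
  filter_upwards [eventually_ge_atTop 1, tend_L3.eventually_gt_atTop 0, (tend_L3.comp tend_cyc).eventually_gt_atTop 0] with n hn h1 h2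
  simp only [Function.comp] at h2
  field_simp

lemma cyc_le_K : ∃ K : ℝ, 0 < K ∧ ∀ j : ℕ, 1 ≤ j → (cyclicNum j : ℝ) ≤ K * (j:ℝ)^2 := by
  obtain ⟨J, hJ⟩ := eventually_atTop.mp cyc_le_sq
  refine ⟨1 + ∑ i ∈ Finset.range J, (cyclicNum i : ℝ), by positivity, fun j hj => ?_⟩
  have hS : 0 ≤ ∑ i ∈ Finset.range J, (cyclicNum i : ℝ) := by positivity
  have hj2 : (1:ℝ) ≤ (j:ℝ)^2 := one_le_pow₀ (by exact_mod_cast hj)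
  by_cases h : J ≤ j
  · have := hJ j h; nlinarith
  · have := Finset.single_le_sum (f := fun i => (cyclicNum i : ℝ)) (fun i _ => by positivity) (Finset.mem_range.mpr (by omega : j < J))
    nlinarith

lemma unif {δ : ℝ} (hδ : 0 < δ) : ∀ᶠ n : ℕ in atTop, ∀ j ∈ Finset.Icc 1 n,
    |(cyclicNum j : ℝ) / (n * Real.log (Real.log (Real.log n))) - Real.exp Real.eulerMascheroniConstant * (j / n)| ≤ δ := by
  set E := Real.exp Real.eulerMascheroniConstant with hE
  have hE0 : 0 < E := Real.exp_pos _
  obtain ⟨K, hK, hcK⟩ := cyc_le_K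
  have h1 := cyc_asymp.eventually (Metric.closedBall_mem_nhds E (half_pos hδ))
  have h1' : ∀ᶠ n : ℕ in atTop, |(cyclicNum n : ℝ) / (n * Real.log (Real.log (Real.log n))) - E| ≤ δ/2 := by
    filter_upwards [h1] with n hn
    simpa [Real.dist_eq] using hn
  obtain ⟨J, hJ⟩ := eventually_atTop.mp ((h1'.and L3_sq).and (tend_L3.eventually_gt_atTop 0))
  have c1 : Tendsto (fun n : ℕ => K / Real.log (Real.log (Real.log (n:ℝ)))) atTop (nhds 0) := tend_L3.const_div_atTop K
  have c2 : Tendsto (fun n : ℕ => (E + δ/2) / Real.log (Real.log (Real.log (n:ℝ)))) atTop (nhds 0) := tend_L3.const_div_atTop _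
  have c3 : Tendsto (fun n : ℕ => E / √(n:ℝ)) atTop (nhds 0) :=
    (Real.tendsto_sqrt_atTop.comp tendsto_natCast_atTop_atTop).const_div_atTop _
  filter_upwards [c1.eventually (gt_mem_nhds hδ), c2.eventually (gt_mem_nhds (half_pos hδ)), c3.eventually (gt_mem_nhds hδ),
    tend_L3.eventually_gt_atTop 0, eventually_ge_atTop (J^2), eventually_ge_atTop 1] with n d1 d2 d3 hpos hnJ hn1 j hj
  obtain ⟨hj1, hjn⟩ := Finset.mem_Icc.mp hj
  have hn0 : (0:ℝ) < n := by exact_mod_cast hn1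
  have hj0 : (0:ℝ) < j := by exact_mod_cast hj1
  have hjn' : (j:ℝ) / n ≤ 1 := by rw [div_le_one hn0]; exact_mod_cast hjn
  have hjn0 : (0:ℝ) < (j:ℝ) / n := by positivity
  set Ln := Real.log (Real.log (Real.log (n:ℝ)))
  by_cases hc : n ≤ j^2
  · have hJj : J ≤ j := by
      by_contra hcon
      push Not at hcon
      have : j^2 < J^2 := Nat.pow_lt_pow_left hcon (by norm_num)
      omega
    obtain ⟨⟨e1, e2⟩, e3⟩ := hJ j hJj
    have e4 := e2 (n:ℝ) (by exact_mod_cast hjn) (by exact_mod_cast hc)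
    set Lj := Real.log (Real.log (Real.log (j:ℝ)))
    set ρ := (cyclicNum j : ℝ) / (j * Lj) with hρ
    have hρ1 : ρ ≤ E + δ/2 := by have := (abs_le.mp e1).2; linarith
    have hρ0 : 0 ≤ ρ := by positivity
    have e5 : (cyclicNum j : ℝ) / (n * Ln) - E * (j/n) = (j/n) * ((ρ - E) - ρ * ((Ln - Lj)/Ln)) := by
      rw [hρ]; field_simp; ring
    have e6 : 0 ≤ (Ln - Lj)/Ln := div_nonneg (by linarith [e4.1]) hpos.le
    have e7 : ρ * ((Ln - Lj)/Ln) ≤ δ/2 := by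
      calc ρ * ((Ln - Lj)/Ln) ≤ (E + δ/2) * (1/Ln) := by
            gcongr
            linarith [e4.2]
        _ = (E + δ/2)/Ln := by ring
        _ ≤ δ/2 := d2.le
    have e8 : |(ρ - E) - ρ * ((Ln - Lj)/Ln)| ≤ δ := by
      have h9 : 0 ≤ ρ * ((Ln - Lj)/Ln) := by positivity
      rw [abs_le] at e1 ⊢
      constructor <;> linarith [e1.1, e1.2]
    rw [e5, abs_mul, abs_of_pos hjn0]
    calc (j:ℝ)/n * |(ρ - E) - ρ * ((Ln - Lj)/Ln)| ≤ 1 * δ := by gcongr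
      _ = δ := one_mul _
  · push Not at hc
    have hc' : (j:ℝ)^2 ≤ n := by exact_mod_cast hc.le
    have f1 : (cyclicNum j : ℝ) / (n * Ln) ≤ δ := by
      calc (cyclicNum j : ℝ) / (n * Ln) ≤ K * n / (n * Ln) := by
            gcongr
            exact (hcK j hj1).trans (by gcongr)
        _ = K / Ln := by field_simp
        _ ≤ δ := d1.le
    have f2 : E * (j/n) ≤ δ := by
      have : (j:ℝ) ≤ √(n:ℝ) := Real.le_sqrt_of_sq_le hc'
      have hs : 0 < √(n:ℝ) := Real.sqrt_pos.mpr hn0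
      calc E * (j/n) ≤ E * (√(n:ℝ)/n) := by gcongr
        _ = E / √(n:ℝ) := by
          have : √(n:ℝ) * √(n:ℝ) = n := Real.mul_self_sqrt hn0.le
          rw [mul_div_assoc', div_eq_div_iff hn0.ne' hs.ne', mul_assoc, this]
        _ ≤ δ := d3.le
    have f3 : 0 ≤ (cyclicNum j : ℝ) / (n * Ln) := by positivity
    have f4 : 0 ≤ E * (j/n) := by positivity
    rw [abs_le]; constructor <;> linarith

lemma pow_diff_bounds {a b : ℝ} (hb : 0 ≤ b) (hab : b + 1 = a) (k : ℕ) :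
    (k+1) * b^k ≤ a^(k+1) - b^(k+1) ∧ a^(k+1) - b^(k+1) ≤ (k+1) * a^k := by
  have e := geom_sum₂_mul a b (k+1)
  have : a - b = 1 := by linarith
  rw [this, mul_one] at e
  rw [← e]
  have hle : b ≤ a := by linarith
  have ha : 0 ≤ a := by linarith
  constructor
  · calc ((k:ℝ)+1) * b^k = ∑ i ∈ Finset.range (k+1), b^k := by simp
      _ ≤ _ := by
        refine Finset.sum_le_sum fun i hi => ?_
        have hi' : i ≤ k := by simp at hi; omega
        calc b^k = b^i * b^(k-i) := by rw [← pow_add]; congr 1; omega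
          _ ≤ a^i * b^(k+1-1-i) := by simp; gcongr
  · calc _ ≤ ∑ i ∈ Finset.range (k+1), a^k := by
          refine Finset.sum_le_sum fun i hi => ?_
          have hi' : i ≤ k := by simp at hi; omega
          calc a^i * b^(k+1-1-i) ≤ a^i * a^(k-i) := by simp; gcongr
            _ = a^k := by rw [← pow_add]; congr 1; omega
      _ = _ := by simp

lemma sum_pow_bounds (k n : ℕ) : (n:ℝ)^(k+1) ≤ (k+1) * ∑ j ∈ Finset.Icc 1 n, (j:ℝ)^k ∧
    (k+1) * ∑ j ∈ Finset.Icc 1 n, (j:ℝ)^k ≤ ((n:ℝ)+1)^(k+1) := by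
  induction n with
  | zero => simp
  | succ n ih =>
    rw [Finset.sum_Icc_succ_top (by omega), mul_add]
    have h1 := pow_diff_bounds (a := (n:ℝ)+1) (b := n) (by positivity) rfl k
    have h2 := pow_diff_bounds (a := (n:ℝ)+1+1) (b := n+1) (by positivity) rfl k
    push_cast
    constructor <;> linarith [ih.1, ih.2, h1.1, h1.2, h2.1, h2.2]

lemma sum_pow_lim (k : ℕ) : Tendsto (fun n : ℕ => (∑ j ∈ Finset.Icc 1 n, ((j:ℝ)/n)^k) / n) atTop (nhds (1/((k:ℝ)+1))) := by
  have hup : Tendsto (fun n : ℕ => (1 + 1/(n:ℝ))^(k+1) / ((k:ℝ)+1)) atTop (nhds (1/((k:ℝ)+1))) := by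
    have h1 : Tendsto (fun n : ℕ => 1 + 1/(n:ℝ)) atTop (nhds 1) := by
      simpa using (tendsto_const_nhds (x := (1:ℝ))).add tendsto_one_div_atTop_nhds_zero_nat
    simpa using (h1.pow (k+1)).div_const ((k:ℝ)+1)
  have e : ∀ n : ℕ, 1 ≤ n → (∑ j ∈ Finset.Icc 1 n, ((j:ℝ)/n)^k) / n = (((k:ℝ)+1) * ∑ j ∈ Finset.Icc 1 n, (j:ℝ)^k) / (n:ℝ)^(k+1) / ((k:ℝ)+1) := by
    intro n hn
    have hn0 : (0:ℝ) < n := by exact_mod_cast hn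
    simp_rw [div_pow]
    rw [← Finset.sum_div]; field_simp; ring
  refine tendsto_of_tendsto_of_tendsto_of_le_of_le' tendsto_const_nhds hup ?_ ?_
  · filter_upwards [eventually_ge_atTop 1] with n hn
    have hn0 : (0:ℝ) < n := by exact_mod_cast hn
    rw [e n hn]
    gcongr
    rw [one_le_div (by positivity)]; exact (sum_pow_bounds k n).1
  · filter_upwards [eventually_ge_atTop 1] with n hn
    have hn0 : (0:ℝ) < n := by exact_mod_cast hn
    rw [e n hn]
    gcongr
    rw [div_le_iff₀ (by positivity), ← mul_pow]
    refine (sum_pow_bounds k n).2.trans (le_of_eq ?_)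
    congr 1; field_simp

lemma sum_lim (k : ℕ) : Tendsto (fun n : ℕ => (∑ j ∈ Finset.Icc 1 n,
    ((cyclicNum j : ℝ) / (n * Real.log (Real.log (Real.log n))))^k) / n) atTop
    (nhds (Real.exp Real.eulerMascheroniConstant ^ k * (1/((k:ℝ)+1)))) := by
  set E := Real.exp Real.eulerMascheroniConstant with hE
  have hE0 : 0 < E := Real.exp_pos _
  have h1 := (sum_pow_lim k).const_mul (E^k)
  refine h1.congr_dist ?_
  rw [Metric.tendsto_nhds]
  intro δ hδ
  set C : ℝ := k * (E+1)^(k-1) + 1 with hC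
  have hC0 : 0 < C := by positivity
  have hδ' : 0 < min 1 (δ / (2*C)) := by positivity
  filter_upwards [unif hδ', eventually_ge_atTop 1] with n hu hn
  have hn0 : (0:ℝ) < n := by exact_mod_cast hn
  rw [Real.dist_eq, sub_zero, abs_of_nonneg dist_nonneg, Real.dist_eq, abs_sub_comm, mul_div_assoc', ← sub_div,
    Finset.mul_sum, ← Finset.sum_sub_distrib, abs_div, abs_of_pos hn0, div_lt_iff₀ hn0]
  have hb : ∀ j ∈ Finset.Icc 1 n, |((cyclicNum j : ℝ) / (n * Real.log (Real.log (Real.log n))))^k - E^k * ((j:ℝ)/n)^k| ≤ δ/2 := by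
    intro j hj
    have hjn' : (j:ℝ) / n ≤ 1 := by rw [div_le_one hn0]; exact_mod_cast (Finset.mem_Icc.mp hj).2
    have hjn0 : 0 ≤ (j:ℝ) / n := by positivity
    have h2 := hu j hj
    rw [← mul_pow]
    set a := (cyclicNum j : ℝ) / (n * Real.log (Real.log (Real.log n)))
    set b := E * ((j:ℝ)/n) with hbdef
    have hb0 : 0 ≤ b := by positivity
    have hbE : b ≤ E := by rw [hbdef]; nlinarith
    have h3 := abs_pow_sub_pow_le a b k
    have hm : max |a| |b| ≤ E + 1 := by
      have h4 := h2.trans (min_le_left _ _)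
      have h5 : |a| ≤ |a - b| + |b| := by simpa using abs_add_le (a-b) b
      rw [abs_of_nonneg hb0] at h5 ⊢
      exact max_le (by linarith) (by linarith)
    calc |a^k - b^k| ≤ |a-b| * k * max |a| |b| ^ (k-1) := h3
      _ ≤ (δ/(2*C)) * k * (E+1)^(k-1) := by
        gcongr
        exact h2.trans (min_le_right _ _)
      _ ≤ (δ/(2*C)) * C := by
        rw [mul_assoc]
        gcongr
        rw [hC]; linarith
      _ = δ/2 := by field_simp
  calc _ ≤ ∑ j ∈ Finset.Icc 1 n, δ/2 := (Finset.abs_sum_le_sum_abs _ _).trans (Finset.sum_le_sum hb)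
    _ = n * (δ/2) := by simp
    _ < δ * n := by nlinarith

end CycAux

theorem sum_pow_cyclicNum_isEquivalent_explicit (k : ℕ) (hk : 0 < k) :
    (fun n : ℕ => ∑ j ∈ Finset.Icc 1 n, ((cyclicNum j : ℝ)) ^ k) ~[atTop]
      (fun n : ℕ =>
        (n : ℝ) ^ (k + 1) * Real.exp (k * Real.eulerMascheroniConstant) *
          (Real.log (Real.log (Real.log n))) ^ k / (k + 1)) := by
  refine isEquivalent_of_tendsto_one ?_
  have hE0 : 0 < Real.exp Real.eulerMascheroniConstant := Real.exp_pos _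
  have h := (CycAux.sum_lim k).div_const (Real.exp Real.eulerMascheroniConstant ^ k * (1/((k:ℝ)+1)))
  rw [div_self (by positivity)] at h
  refine h.congr' ?_
  filter_upwards [eventually_ge_atTop 1, CycAux.tend_L3.eventually_gt_atTop 0] with n hn hpos
  have hn0 : (0:ℝ) < n := by exact_mod_cast hn
  simp only [Pi.div_apply]
  simp_rw [div_pow]
  rw [← Finset.sum_div, Real.exp_nat_mul]
  field_simp
  rw [mul_pow]; ring
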